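/- arXiv:2401.14001 — 3 statements merged into one kernel-verified Lean document; each statement's English description precedes it below -/
import Mathlib

section
/- Let K be a number field with [K : ℚ] = 2 and ring of integers 𝓞 K, with absolute norm N(a) = |Norm_ℤ(a)| ∈ ℕ. If the image of N is closed under division (for all nonzero a, b ∈ 𝓞 K with N(a) ∣ N(b) there exists c ∈ 𝓞 K with N(a) * N(c) = N(b)), then ClassGroup (𝓞 K) has no element of odd order greater than 1: every g ∈ ClassGroup (𝓞 K) whose order is odd equals the identity. -/
open NumberField

/-!
Let `g` be an ideal class with `g² ≠ 1`. There is a coset of characters of the class group modulo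
the quadratic ones which does not contain the trivial character; the sum of its members vanishes at
every class that is not a square.

The L-function of a nontrivial class character stays bounded as `s → 1⁺`: the number of ideals of
norm at most `x` in a given class is `κx + O(√x)` with `κ` independent of the class, by counting
lattice points in a plane region. Taking logarithms of Euler products over the coset therefore
bounds the sum of `1 / N(P)` over the primes `P` of trivial class, provided that every prime whose
class is a square has trivial class. Closure under division ensures this: such a prime satisfies
`N(α) = n² N(P)` with `n² = N(n)`, so `N(P)` is the norm of an element, which or whose conjugate
generates `P`.

On the other hand, for a suitable `D` every prime `p ≡ 1` modulo `4|D|` is, up to sign, a quotient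
of two norms from `ℤ[√D]` (a pigeonhole argument for the form `x² - D y² - p z²`), so closure under
division makes `p` itself the norm of an element. By Dirichlet's theorem the sum of `1 / N(P)` over
principal primes diverges, a contradiction.
-/

open Filter Topology Finset
open scoped nonZeroDivisors

section LatticePoints

lemma abs_card_sub_two_mul_card_halves_le {A B : Finset ℤ} (hA : (A : Set ℤ).OrdConnected)
    (hB : ∀ i, i ∈ B ↔ 2 * i ∈ A) : |(#A : ℤ) - 2 * #B| ≤ 1 := by
  rcases A.eq_empty_or_nonempty with rfl | hne
  · have hB₀ : B = ∅ := eq_empty_of_forall_notMem fun i ↦ by simp [hB]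
    simp [hB₀]
  · have hle : A.min' hne ≤ A.max' hne := A.min'_le _ (A.max'_mem hne)
    have hAI : A = Icc (A.min' hne) (A.max' hne) := by
      refine Subset.antisymm (fun z hz ↦ mem_Icc.2 ⟨A.min'_le z hz, A.le_max' z hz⟩) fun z hz ↦ ?_
      exact hA.out (A.min'_mem hne) (A.max'_mem hne) (mem_Icc.1 hz)
    generalize A.min' hne = a at hAI hle
    generalize A.max' hne = b at hAI hle
    have hBI : B = Icc ((a + 1) / 2) (b / 2) := by
      ext i
      rw [hB, hAI, mem_Icc, mem_Icc]
      lia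
    rw [hAI, hBI, Int.card_Icc, Int.card_Icc, abs_le]
    lia

lemma abs_card_sub_two_mul_card_halve_fst_le {ι : Type*} {A B : Finset (ℤ × ι)} {J : Finset ι}
    (hJ : ∀ x ∈ A, x.2 ∈ J) (hA : ∀ j, {i | (i, j) ∈ A}.OrdConnected)
    (hB : ∀ i j, (i, j) ∈ B ↔ (2 * i, j) ∈ A) : |(#A : ℤ) - 2 * #B| ≤ #J := by
  classical
  let row (D : Finset (ℤ × ι)) (j : ι) : Finset ℤ :=
    D.preimage (·, j) (Prod.mk_left_injective j).injOn
  have card_eq_sum_row (D : Finset (ℤ × ι)) (hD : ∀ x ∈ D, x.2 ∈ J) :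
      #D = ∑ j ∈ J, #(row D j) := by
    rw [card_eq_sum_card_fiberwise (f := Prod.snd) hD]
    refine sum_congr rfl fun j _ ↦ ?_
    unfold row
    rw [card_preimage]
    congr! 3 with ⟨i, k⟩
    simp [eq_comm]
  rw [card_eq_sum_row A hJ, card_eq_sum_row B fun x hx ↦ hJ (2 * x.1, x.2) ((hB _ _).1 hx)]
  push_cast
  rw [mul_sum, ← sum_sub_distrib]
  refine (abs_sum_le_sum_abs _ _).trans ((sum_le_card_nsmul _ _ 1 fun j _ ↦ ?_).trans (by simp))
  exact abs_card_sub_two_mul_card_halves_le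
    (by simpa only [row, coe_preimage, Set.preimage, mem_coe] using hA j)
    (by simpa only [row, mem_preimage] using (hB · j))

lemma abs_card_sub_four_mul_card_halves_le {A B : Finset (ℤ × ℤ)} {J : Finset ℤ}
    (hJ : ∀ x ∈ A, x.1 ∈ J ∧ x.2 ∈ J) (hrow : ∀ j, {i | (i, j) ∈ A}.OrdConnected)
    (hcol : ∀ i, {j | (i, j) ∈ A}.OrdConnected)
    (hB : ∀ i j, (i, j) ∈ B ↔ (2 * i, 2 * j) ∈ A) : |(#A : ℤ) - 4 * #B| ≤ 3 * #J := by
  let D := A.preimage (Prod.map (2 * ·) id)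
    ((mul_right_injective₀ two_ne_zero).prodMap Function.injective_id).injOn
  let σ := (Equiv.prodComm ℤ ℤ).toEmbedding
  have hD : ∀ i j, (i, j) ∈ D ↔ (2 * i, j) ∈ A := by simp [D]
  have h₁ := abs_card_sub_two_mul_card_halve_fst_le (fun x hx ↦ (hJ x hx).2) hrow hD
  have h₂ : |(#(D.map σ) : ℤ) - 2 * #(B.map σ)| ≤ #J := by
    refine abs_card_sub_two_mul_card_halve_fst_le (J := J.preimage (2 * ·)
      (mul_right_injective₀ two_ne_zero).injOn) ?_ ?_ ?_ |>.trans ?_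
    · rintro ⟨j, i⟩ hx
      simpa using (hJ _ ((hD i j).1 (by simpa [σ] using hx))).1
    · simpa [σ, hD] using fun i ↦ hcol (2 * i)
    · simp [σ, hB, hD]
    · exact_mod_cast card_le_card_of_injOn (2 * ·) (by simp [Set.MapsTo])
        (mul_right_injective₀ two_ne_zero).injOn
  rw [card_map, card_map] at h₂
  rw [abs_le] at h₁ h₂ ⊢
  constructor <;> linarith

/-- The lattice points in the dilate `T • S` of a plane region `S`. -/
def latticePoints (S : Set (ℝ × ℝ)) (T : ℝ) : Set (ℤ × ℤ) :=
  {x | T⁻¹ • ((x.1 : ℝ), (x.2 : ℝ)) ∈ S}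

lemma abs_le_floor_of_mem_latticePoints {S : Set (ℝ × ℝ)} {M T : ℝ} (hS : ∀ p ∈ S, ‖p‖ ≤ M)
    (hT : 0 < T) {x : ℤ × ℤ} (hx : x ∈ latticePoints S T) :
    |x.1| ≤ ⌊T * M⌋ ∧ |x.2| ≤ ⌊T * M⌋ := by
  have h := hS _ hx
  rw [norm_smul, norm_inv, Real.norm_of_nonneg hT.le, inv_mul_le_iff₀ hT, norm_prod_le_iff] at h
  simpa [Int.le_floor] using h

lemma ordConnected_row_latticePoints {S : Set (ℝ × ℝ)} (hS : Convex ℝ S) (T : ℝ) (j : ℤ) :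
    {i | (i, j) ∈ latticePoints S T}.OrdConnected := by
  refine Set.OrdConnected.preimage_mono (s := {t : ℝ | T⁻¹ • (t, (j : ℝ)) ∈ S})
    (Convex.ordConnected fun s hs t ht a b ha hb hab ↦ ?_) Int.cast_mono
  have h := hS hs ht ha hb hab
  rwa [smul_comm a T⁻¹ (s, (j : ℝ)), smul_comm b T⁻¹ (t, (j : ℝ)), ← smul_add, Prod.smul_mk a,
    Prod.smul_mk b, Prod.mk_add_mk, ← add_smul, hab, one_smul] at h

lemma mem_latticePoints_iff_two_mul_mem {S : Set (ℝ × ℝ)} {T : ℝ} {i j : ℤ} :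
    (i, j) ∈ latticePoints S T ↔ (2 * i, 2 * j) ∈ latticePoints S (2 * T) := by
  simp [latticePoints, mul_comm, mul_left_comm]

/-- Doubling the dilation factor multiplies the number of lattice points of `T • S` by four, up to
an error `O(T)`. Together with the existence of the leading coefficient, this gives the count with
an error term (see `abs_sub_mul_sq_le_of_doubling`) without computing any area. -/
def HasDoublingCount (S : Set (ℝ × ℝ)) : Prop :=
  ∃ C : ℝ, ∀ T : ℝ, 1 ≤ T → (latticePoints S T).Finite ∧
    |((latticePoints S (2 * T)).ncard : ℝ) - 4 * (latticePoints S T).ncard| ≤ C * T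

namespace HasDoublingCount

lemma of_convex {S : Set (ℝ × ℝ)} (hS : Convex ℝ S) (hb : Bornology.IsBounded S) :
    HasDoublingCount S := by
  obtain ⟨M, hM, hSM⟩ := hb.exists_pos_norm_le
  have hbox (T : ℝ) (hT : 1 ≤ T) (x) (hx : x ∈ latticePoints S T) :
      x.1 ∈ Icc (-⌊T * M⌋) ⌊T * M⌋ ∧ x.2 ∈ Icc (-⌊T * M⌋) ⌊T * M⌋ := by
    simpa only [mem_Icc, abs_le] using abs_le_floor_of_mem_latticePoints hSM (by linarith) hx
  have hfin (T : ℝ) (hT : 1 ≤ T) : (latticePoints S T).Finite :=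
    (Icc (-⌊T * M⌋) ⌊T * M⌋ ×ˢ Icc (-⌊T * M⌋) ⌊T * M⌋).finite_toSet.subset fun x hx ↦
      mem_coe.2 (mem_product.2 (hbox T hT x hx))
  have hcol (T : ℝ) (i : ℤ) : {j | (i, j) ∈ latticePoints S T}.OrdConnected := by
    exact ordConnected_row_latticePoints
      (hS.linear_preimage (LinearEquiv.prodComm ℝ ℝ ℝ).toLinearMap) T i
  refine ⟨12 * M + 3, fun T hT ↦ ⟨hfin T hT, ?_⟩⟩
  have h2T : 1 ≤ 2 * T := by linarith
  have hdouble := abs_card_sub_four_mul_card_halves_le (A := (hfin _ h2T).toFinset)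
    (B := (hfin T hT).toFinset) (by simpa only [Set.Finite.mem_toFinset] using hbox _ h2T)
    (by simpa using ordConnected_row_latticePoints hS (2 * T)) (by simpa using hcol (2 * T))
    (fun i j ↦ by simpa using mem_latticePoints_iff_two_mul_mem)
  rw [← Set.ncard_eq_toFinset_card _ (hfin _ h2T),
    ← Set.ncard_eq_toFinset_card _ (hfin T hT), Int.card_Icc,
    Int.toNat_of_nonneg (by have : 0 ≤ ⌊2 * T * M⌋ := Int.floor_nonneg.2 (by positivity)
                            linarith), ← Int.cast_le (R := ℝ)] at hdouble
  push_cast at hdouble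
  have hfloor : (⌊2 * T * M⌋ : ℝ) ≤ 2 * T * M := Int.floor_le _
  linarith

lemma diff {S S' : Set (ℝ × ℝ)} (h : HasDoublingCount S) (h' : HasDoublingCount S')
    (hs : S' ⊆ S) : HasDoublingCount (S \ S') := by
  obtain ⟨C, hC⟩ := h
  obtain ⟨C', hC'⟩ := h'
  have hcard (T : ℝ) (hT : 1 ≤ T) : ((latticePoints (S \ S') T).ncard : ℝ) =
      (latticePoints S T).ncard - (latticePoints S' T).ncard := by
    rw [eq_sub_iff_add_eq, ← Nat.cast_add]
    exact congrArg _ (Set.ncard_sdiff_add_ncard_of_subset (fun x hx ↦ hs hx) (hC T hT).1)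
  refine ⟨C + C', fun T hT ↦ ⟨(hC T hT).1.subset fun x hx ↦ hx.1, ?_⟩⟩
  rw [hcard T hT, hcard (2 * T) (by linarith)]
  calc _ = |((latticePoints S (2 * T)).ncard - 4 * (latticePoints S T).ncard : ℝ) -
          ((latticePoints S' (2 * T)).ncard - 4 * (latticePoints S' T).ncard)| := by ring_nf
    _ ≤ C * T + C' * T := (abs_sub _ _).trans (add_le_add (hC T hT).2 (hC' T hT).2)
    _ = _ := by ring

lemma iUnion {ι : Type*} [Finite ι] {S : ι → Set (ℝ × ℝ)} (h : ∀ i, HasDoublingCount (S i))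
    (hd : Pairwise (Function.onFun Disjoint S)) : HasDoublingCount (⋃ i, S i) := by
  cases nonempty_fintype ι
  choose C hC using h
  have hunion (T : ℝ) : latticePoints (⋃ i, S i) T = ⋃ i, latticePoints (S i) T := by
    ext x
    simp [latticePoints]
  have hcard (T : ℝ) (hT : 1 ≤ T) :
      (latticePoints (⋃ i, S i) T).ncard = ∑ i, (latticePoints (S i) T).ncard := by
    rw [hunion, Set.ncard_iUnion_of_finite (fun i ↦ (hC i T hT).1), finsum_eq_sum_of_fintype]
    exact fun i j hij ↦ (hd hij).preimage _
  refine ⟨∑ i, C i, fun T hT ↦ ⟨hunion T ▸ Set.finite_iUnion fun i ↦ (hC i T hT).1, ?_⟩⟩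
  rw [hcard T hT, hcard (2 * T) (by linarith), sum_mul]
  push_cast
  rw [mul_sum, ← sum_sub_distrib]
  exact (abs_sum_le_sum_abs _ _).trans (sum_le_sum fun i _ ↦ (hC i T hT).2)

end HasDoublingCount

lemma abs_sub_mul_sq_le_of_doubling {f : ℝ → ℝ} {c C : ℝ}
    (hf : ∀ T, 1 ≤ T → |f (2 * T) - 4 * f T| ≤ C * T)
    (hlim : Tendsto (fun T ↦ f T / T ^ 2) atTop (𝓝 c)) {T : ℝ} (hT : 1 ≤ T) :
    |f T - c * T ^ 2| ≤ C / 2 * T := by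
  have hT0 : 0 < T := by linarith
  have hstep (k : ℕ) : dist (f (2 ^ k * T) / (2 ^ k * T) ^ 2)
      (f (2 ^ (k + 1) * T) / (2 ^ (k + 1) * T) ^ 2) ≤ C / (2 * T) / 2 / 2 ^ k := by
    set x := 2 ^ k * T with hx
    have hx1 : 1 ≤ x := one_le_mul_of_one_le_of_one_le (one_le_pow₀ one_le_two) hT
    have : 0 < x := by linarith
    have hx2 : 2 ^ (k + 1) * T = 2 * x := by rw [hx]; ring
    rw [hx2, dist_comm, Real.dist_eq]
    calc |f (2 * x) / (2 * x) ^ 2 - f x / x ^ 2|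
        = |(f (2 * x) - 4 * f x) / (4 * x ^ 2)| := by congr 1; field
      _ = |f (2 * x) - 4 * f x| / (4 * x ^ 2) := by
          rw [abs_div, abs_of_pos (show 0 < 4 * x ^ 2 by positivity)]
      _ ≤ C * x / (4 * x ^ 2) := by gcongr; exact hf x hx1
      _ = C / (2 * T) / 2 / 2 ^ k := by rw [hx]; field
  have hgeom : Tendsto (fun k : ℕ ↦ (2 : ℝ) ^ k * T) atTop atTop :=
    (tendsto_pow_atTop_atTop_of_one_lt one_lt_two).atTop_mul_const hT0
  have h := dist_le_of_le_geometric_two_of_tendsto₀ hstep (hlim.comp hgeom)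
  rw [pow_zero, one_mul, Real.dist_eq] at h
  calc |f T - c * T ^ 2| = |f T / T ^ 2 - c| * T ^ 2 := by
        rw [← abs_of_pos (pow_pos hT0 2), ← abs_mul, abs_of_pos (pow_pos hT0 2)]
        congr 1
        field
    _ ≤ C / (2 * T) * T ^ 2 := by gcongr
    _ = C / 2 * T := by field

end LatticePoints

section PlaneRegions

lemma convex_setOf_div_mem {Q : Set ℝ} (hQ : Q.OrdConnected) :
    Convex ℝ {p : ℝ × ℝ | 0 < p.1 ∧ 0 < p.2 ∧ p.1 / p.2 ∈ Q} := by
  rintro ⟨p₁, p₂⟩ ⟨hp₁, hp₂, hp⟩ ⟨q₁, q₂⟩ ⟨hq₁, hq₂, hq⟩ a b ha hb hab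
  have hpos {x y : ℝ} (hx : 0 < x) (hy : 0 < y) : 0 < a * x + b * y :=
    convex_Ioi (0 : ℝ) hx hy ha hb hab
  have hw := hpos hp₂ hq₂
  refine ⟨hpos hp₁ hq₁, hw, ?_⟩
  have hsum : a * p₂ / (a * p₂ + b * q₂) + b * q₂ / (a * p₂ + b * q₂) = 1 := by
    rw [← add_div, div_self hw.ne']
  convert hQ.convex hp hq (by positivity) (by positivity) hsum using 1
  simp only [Prod.smul_mk, Prod.mk_add_mk, smul_eq_mul]
  field

lemma convex_setOf_one_lt_mul : Convex ℝ {p : ℝ × ℝ | 0 < p.1 ∧ 0 < p.2 ∧ 1 < p.1 * p.2} := by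
  suffices {p : ℝ × ℝ | 0 < p.1 ∧ 0 < p.2 ∧ 1 < p.1 * p.2} =
      {p | p.1 ∈ Set.Ioi 0 ∧ p.1 ^ (-1 : ℤ) < p.2} by
    rw [this]
    exact ConvexOn.convex_strict_epigraph (𝕜 := ℝ) (convexOn_zpow (-1))
  ext ⟨x, y⟩
  simp only [Set.mem_ofPred_eq, Set.mem_Ioi, zpow_neg_one]
  refine and_congr_right fun hx ↦ ?_
  rw [inv_lt_iff_one_lt_mul₀' hx, and_iff_right_iff_imp]
  exact fun h ↦ (pos_iff_pos_of_mul_pos (one_pos.trans h)).1 hx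

end PlaneRegions

/-- The points of the open positive quadrant with coordinate ratio in `Q`, cut off by the hyperbola
`xy = 1`. For a real quadratic field, a fundamental domain for the action of the units on the
elements of norm at most one has this shape (with `x`, `y` the absolute values of the two
coordinates). -/
def hyperbolicSector (Q : Set ℝ) : Set (ℝ × ℝ) :=
  {p | 0 < p.1 ∧ 0 < p.2 ∧ p.1 / p.2 ∈ Q ∧ p.1 * p.2 ≤ 1}

section HyperbolicSector

variable {Q : Set ℝ}

lemma hasDoublingCount_preimage_hyperbolicSector (hQ : Q.OrdConnected) (ℓ : ℝ × ℝ →ₗ[ℝ] ℝ × ℝ)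
    (hb : Bornology.IsBounded (ℓ ⁻¹' hyperbolicSector Q)) :
    HasDoublingCount (ℓ ⁻¹' hyperbolicSector Q) := by
  obtain ⟨R, hR⟩ := hb.exists_norm_le
  let D := ℓ ⁻¹' {p | 0 < p.1 ∧ 0 < p.2 ∧ p.1 / p.2 ∈ Q} ∩ Metric.closedBall 0 R
  let F := D ∩ ℓ ⁻¹' {p | 0 < p.1 ∧ 0 < p.2 ∧ 1 < p.1 * p.2}
  have hD : Convex ℝ D :=
    ((convex_setOf_div_mem hQ).linear_preimage ℓ).inter (convex_closedBall 0 R)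
  have hF : Convex ℝ F := hD.inter (convex_setOf_one_lt_mul.linear_preimage ℓ)
  have hDb : Bornology.IsBounded D := Metric.isBounded_closedBall.subset Set.inter_subset_right
  have hDF : ℓ ⁻¹' hyperbolicSector Q = D \ F := by
    ext x
    refine ⟨fun hx ↦ ⟨⟨⟨hx.1, hx.2.1, hx.2.2.1⟩, mem_closedBall_zero_iff.2 (hR x hx)⟩,
      fun h ↦ h.2.2.2.not_ge hx.2.2.2⟩, fun ⟨hxD, hxF⟩ ↦ ?_⟩
    obtain ⟨h₁, h₂, hq⟩ := hxD.1
    exact ⟨h₁, h₂, hq, not_lt.1 fun h ↦ hxF ⟨hxD, h₁, h₂, h⟩⟩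
  rw [hDF]
  exact (HasDoublingCount.of_convex hD hDb).diff
    (HasDoublingCount.of_convex hF (hDb.subset Set.inter_subset_left)) Set.inter_subset_left

lemma hasDoublingCount_abs_mem_hyperbolicSector (hQ : Q.OrdConnected) (ℓ₁ ℓ₂ : ℝ × ℝ →ₗ[ℝ] ℝ)
    (hb : Bornology.IsBounded {x | (|ℓ₁ x|, |ℓ₂ x|) ∈ hyperbolicSector Q}) :
    HasDoublingCount {x | (|ℓ₁ x|, |ℓ₂ x|) ∈ hyperbolicSector Q} := by
  let ℓ (ε : SignType × SignType) : ℝ × ℝ →ₗ[ℝ] ℝ × ℝ :=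
    ((ε.1 : ℝ) • ℓ₁).prod ((ε.2 : ℝ) • ℓ₂)
  let S (ε : SignType × SignType) := ℓ ε ⁻¹' hyperbolicSector Q
  have hsign {a : ℝ} {σ : SignType} (h : 0 < (σ : ℝ) * a) : SignType.sign a = σ ∧ σ * a = |a| := by
    cases σ <;> simp_all [abs_of_pos, abs_of_neg]
  have hS (ε) (x) (hx : x ∈ S ε) : (SignType.sign (ℓ₁ x), SignType.sign (ℓ₂ x)) = ε ∧
      (|ℓ₁ x|, |ℓ₂ x|) ∈ hyperbolicSector Q := by
    obtain ⟨h₁, h₁'⟩ := hsign hx.1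
    obtain ⟨h₂, h₂'⟩ := hsign hx.2.1
    exact ⟨Prod.ext h₁ h₂, h₁' ▸ h₂' ▸ hx⟩
  have hunion : {x | (|ℓ₁ x|, |ℓ₂ x|) ∈ hyperbolicSector Q} = ⋃ ε, S ε := by
    ext x
    refine ⟨fun hx ↦ Set.mem_iUnion.2 ⟨(SignType.sign (ℓ₁ x), SignType.sign (ℓ₂ x)), ?_⟩,
      fun hx ↦ (Set.mem_iUnion.1 hx).elim fun ε hε ↦ (hS ε x hε).2⟩
    simpa [S, ℓ] using hx
  rw [hunion] at hb ⊢
  refine HasDoublingCount.iUnion (fun ε ↦ hasDoublingCount_preimage_hyperbolicSector hQ _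
    (hb.subset (Set.subset_iUnion S ε))) fun ε ε' hne ↦ Set.disjoint_left.2 fun x hx hx' ↦ ?_
  exact hne ((hS ε x hx).1.symm.trans (hS ε' x hx').1)

end HyperbolicSector

section NormLeOne

open InfinitePlace mixedEmbedding fundamentalCone Units dirichletUnitTheorem Module

variable {K : Type*} [Field K] [NumberField K]

open scoped Classical in
lemma normLeOne_eq_closedBall_diff_zero [Subsingleton (InfinitePlace K)] :
    normLeOne K = Metric.closedBall 0 1 \ {0} := by
  let w : InfinitePlace K := Classical.arbitrary _
  have norm_eq (x : mixedSpace K) : ‖x‖ = normAtPlace w x := by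
    rw [norm_eq_sup'_normAtPlace]
    refine le_antisymm (sup'_le _ _ fun v _ ↦ by rw [Subsingleton.elim v w])
      (le_sup' (fun v ↦ normAtPlace v x) (mem_univ w))
  have mixedNorm_eq (x : mixedSpace K) : mixedEmbedding.norm x = ‖x‖ ^ mult w := by
    rw [mixedEmbedding.norm_apply, Fintype.prod_subsingleton _ w, norm_eq]
  have hrank : rank K = 0 := Nat.sub_eq_zero_of_le (Fintype.card_le_one_iff_subsingleton.2 ‹_›)
  have : IsEmpty (Fin (rank K)) := hrank ▸ Fin.isEmpty
  ext x
  simp [fundamentalCone, ZSpan.mem_fundamentalDomain, mixedNorm_eq, mult_ne_zero,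
    pow_le_one_iff_of_nonneg, and_comm]

lemma norm_eq_normAtPlace_mul [IsTotallyReal K] {w₁ w₂ : InfinitePlace K} (hne : w₁ ≠ w₂)
    (hall : ∀ w, w = w₁ ∨ w = w₂) (x : mixedSpace K) :
    mixedEmbedding.norm x = normAtPlace w₁ x * normAtPlace w₂ x := by
  classical
  rw [mixedEmbedding.norm_apply,
    show (univ : Finset (InfinitePlace K)) = {w₁, w₂} by ext w; simpa using hall w, prod_pair hne,
    IsTotallyReal.mult_eq, IsTotallyReal.mult_eq, pow_one, pow_one]

lemma exists_ordConnected_mem_normLeOne_iff [IsTotallyReal K] (hdeg : finrank ℚ K = 2)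
    {w₁ : InfinitePlace K} (hne : w₁ ≠ w₀) (hall : ∀ w, w = w₁ ∨ w = w₀) :
    ∃ Q : Set ℝ, Q.OrdConnected ∧ ∀ x : mixedSpace K, x ∈ normLeOne K ↔
      (normAtPlace w₁ x, normAtPlace w₀ x) ∈ hyperbolicSector Q := by
  classical
  let B := (basisUnitLattice K).ofZLatticeBasis ℝ (unitLattice K)
  let u : logSpace K := fun _ ↦ 2⁻¹
  let L : ℝ →ₗ[ℝ] logSpace K := LinearMap.toSpanSingleton ℝ _ u
  have hL : {t | ∀ i, B.repr (L t) i ∈ Set.Ico 0 1}.OrdConnected := by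
    have : {t | ∀ i, B.repr (L t) i ∈ Set.Ico (0 : ℝ) 1} =
        ⋂ i, (B.coord i ∘ₗ L) ⁻¹' Set.Ico 0 1 := by ext; simp
    rw [this]
    exact (convex_iInter fun i ↦ (convex_Ico 0 1).linear_preimage _).ordConnected
  refine ⟨{t | 0 < t ∧ ∀ i, B.repr (L (Real.log t)) i ∈ Set.Ico 0 1},
    ⟨fun s hs t ht u hu ↦ ⟨hs.1.trans_le hu.1, hL.out hs.2 ht.2
      ⟨Real.log_le_log hs.1 hu.1, Real.log_le_log (hs.1.trans_le hu.1) hu.2⟩⟩⟩, fun x ↦ ?_⟩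
  have hlog (h₁ : 0 < normAtPlace w₁ x) (h₀ : 0 < normAtPlace w₀ x) :
      logMap x = L (Real.log (normAtPlace w₁ x / normAtPlace w₀ x)) := by
    ext ⟨w, hw⟩
    obtain rfl := (hall w).resolve_right hw
    rw [logMap_apply, norm_eq_normAtPlace_mul hne hall, hdeg, IsTotallyReal.mult_eq,
      Real.log_mul h₁.ne' h₀.ne', Real.log_div h₁.ne' h₀.ne']
    simp [L, u]
    ring
  have hnorm := norm_eq_normAtPlace_mul hne hall x
  rw [mem_normLeOne, fundamentalCone, Set.mem_sdiff, Set.mem_preimage,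
    ZSpan.mem_fundamentalDomain, Set.mem_ofPred_eq, hnorm]
  constructor
  · rintro ⟨⟨hlogMap, hne_zero⟩, hle⟩
    have h₁ := (normAtPlace_nonneg w₁ x).lt_of_ne' (left_ne_zero_of_mul hne_zero)
    have h₀ := (normAtPlace_nonneg w₀ x).lt_of_ne' (right_ne_zero_of_mul hne_zero)
    exact ⟨h₁, h₀, ⟨div_pos h₁ h₀, hlog h₁ h₀ ▸ hlogMap⟩, hle⟩
  · rintro ⟨h₁, h₀, ⟨-, hQ⟩, hle⟩
    exact ⟨⟨hlog h₁ h₀ ▸ hQ, (mul_pos h₁ h₀).ne'⟩, hle⟩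

lemma exists_infinitePlace_ne_of_isTotallyReal [IsTotallyReal K] (hdeg : finrank ℚ K = 2)
    (w : InfinitePlace K) : ∃ w' : InfinitePlace K, w' ≠ w ∧ ∀ v, v = w' ∨ v = w := by
  classical
  have hcard : Fintype.card (InfinitePlace K) = 2 := by
    rw [card_eq_nrRealPlaces_add_nrComplexPlaces, IsTotallyReal.nrComplexPlaces_eq_zero,
      ← IsTotallyReal.finrank, hdeg]
  obtain ⟨w', hne, huniq⟩ := (Nat.card_eq_two_iff' w).1 (Nat.card_eq_fintype_card.trans hcard)
  exact ⟨w', hne, fun v ↦ (eq_or_ne v w).symm.imp_left (huniq v)⟩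

lemma subsingleton_infinitePlace_of_not_isTotallyReal (hdeg : finrank ℚ K = 2)
    (h : ¬ IsTotallyReal K) : Subsingleton (InfinitePlace K) := by
  have hpos := Nat.pos_of_ne_zero fun h₀ ↦ h (nrComplexPlaces_eq_zero_iff.1 h₀)
  have hrank := card_add_two_mul_card_eq_rank K
  have hcard := card_eq_nrRealPlaces_add_nrComplexPlaces K
  exact Fintype.card_le_one_iff_subsingleton.1 (by lia)

theorem hasDoublingCount_preimage_normLeOne (hdeg : finrank ℚ K = 2)
    (e : (ℝ × ℝ) ≃L[ℝ] mixedSpace K) : HasDoublingCount (e ⁻¹' normLeOne K) := by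
  classical
  have hb {s : Set (mixedSpace K)} (hs : Bornology.IsBounded s) : Bornology.IsBounded (e ⁻¹' s) :=
    e.antilipschitz.isBounded_preimage hs
  by_cases hreal : IsTotallyReal K
  · obtain ⟨w₁, hne, hall⟩ := exists_infinitePlace_ne_of_isTotallyReal hdeg (w₀ : InfinitePlace K)
    obtain ⟨Q, hQ, hmem⟩ := exists_ordConnected_mem_normLeOne_iff hdeg hne hall
    let ℓ (w : InfinitePlace K) : ℝ × ℝ →ₗ[ℝ] ℝ :=
      LinearMap.proj ⟨w, IsTotallyReal.isReal w⟩ ∘ₗ LinearMap.fst ℝ _ _ ∘ₗ e.toLinearMap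
    have heq : e ⁻¹' normLeOne K = {x | (|ℓ w₁ x|, |ℓ w₀ x|) ∈ hyperbolicSector Q} := by
      ext x
      rw [Set.mem_preimage, hmem, normAtPlace_apply_of_isReal (IsTotallyReal.isReal _),
        normAtPlace_apply_of_isReal (IsTotallyReal.isReal _)]
      rfl
    have hbdd := hb (isBounded_normLeOne K)
    rw [heq] at hbdd ⊢
    exact hasDoublingCount_abs_mem_hyperbolicSector hQ _ _ hbdd
  · have := subsingleton_infinitePlace_of_not_isTotallyReal hdeg hreal
    rw [normLeOne_eq_closedBall_diff_zero, Set.preimage_sdiff]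
    refine .diff (.of_convex ?_ (hb Metric.isBounded_closedBall))
      (.of_convex ?_ (hb Bornology.isBounded_singleton))
      (Set.preimage_mono (by simp))
    · exact (convex_closedBall (0 : mixedSpace K) 1).linear_preimage e.toLinearMap
    · exact (convex_singleton (0 : mixedSpace K)).linear_preimage e.toLinearMap

end NormLeOne

section IdealCount

open InfinitePlace mixedEmbedding fundamentalCone Units Module

variable {K : Type*} [Field K] [NumberField K]

lemma exists_continuousLinearEquiv_mem_image_fractionalIdeal_iff (hdeg : finrank ℚ K = 2)
    (I : (FractionalIdeal (𝓞 K)⁰ K)ˣ) :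
    ∃ e : (ℝ × ℝ) ≃L[ℝ] mixedSpace K, ∀ y, y ∈ mixedEmbedding K '' (I : FractionalIdeal (𝓞 K)⁰ K) ↔
      ∃ x : ℤ × ℤ, e (x.1, x.2) = y := by
  classical
  have hcard : Fintype.card (Free.ChooseBasisIndex ℤ I) = 2 := by
    rw [← finrank_eq_card_chooseBasisIndex, fractionalIdeal_rank, RingOfIntegers.rank, hdeg]
  let ι := Fintype.equivFinOfCardEq hcard
  let b := (fractionalIdealLatticeBasis K I).reindex ι
  let e := ((Basis.finTwoProd ℝ).equivFun.trans b.equivFun.symm).toContinuousLinearEquiv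
  have he (x : ℤ × ℤ) : e (x.1, x.2) = x.1 • b 0 + x.2 • b 1 := by
    change b.equivFun.symm ((Basis.finTwoProd ℝ).equivFun (x.1, x.2)) = _
    rw [Basis.equivFun_symm_apply, Fin.sum_univ_two, Basis.equivFun_apply,
      Basis.coe_finTwoProd_repr, ← Int.cast_smul_eq_zsmul ℝ, ← Int.cast_smul_eq_zsmul ℝ]
    rfl
  refine ⟨e, fun y ↦ ?_⟩
  rw [← mem_span_fractionalIdealLatticeBasis, ← Basis.range_reindex _ ι,
    Submodule.mem_span_range_iff_exists_fun]
  simp only [he, Fin.sum_univ_two]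
  exact ⟨fun ⟨c, hc⟩ ↦ ⟨(c 0, c 1), hc⟩, fun ⟨x, hx⟩ ↦ ⟨![x.1, x.2], hx⟩⟩

lemma exists_continuousLinearEquiv_card_idealSet (hdeg : finrank ℚ K = 2) (J : (Ideal (𝓞 K))⁰) :
    ∃ e : (ℝ × ℝ) ≃L[ℝ] mixedSpace K, ∀ T : ℝ, 0 < T →
      Nat.card {a : idealSet K J // mixedEmbedding.norm (a : mixedSpace K) ≤ T ^ 2} =
        (latticePoints (e ⁻¹' normLeOne K) T).ncard := by
  obtain ⟨e, he⟩ :=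
    exists_continuousLinearEquiv_mem_image_fractionalIdeal_iff hdeg (FractionalIdeal.mk0 K J)
  refine ⟨e, fun T hT ↦ ?_⟩
  have hinj : Function.Injective fun x : ℤ × ℤ ↦ e (x.1, x.2) := fun x y h ↦ by
    simpa [Prod.ext_iff] using e.injective h
  have smul_mem_normLeOne (y : mixedSpace K) : T⁻¹ • y ∈ normLeOne K ↔
      y ∈ fundamentalCone K ∧ mixedEmbedding.norm y ≤ T ^ 2 := by
    rw [mem_normLeOne, smul_mem_iff_mem (by positivity), mixedEmbedding.norm_smul, hdeg,
      abs_of_pos (by positivity), inv_pow, inv_mul_le_iff₀ (by positivity), mul_one]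
  have mem_idealSet_iff (y : mixedSpace K) : y ∈ idealSet K J ↔
      y ∈ fundamentalCone K ∧ ∃ x : ℤ × ℤ, e (x.1, x.2) = y := by
    rw [mem_idealSet, ← he]
    simp [FractionalIdeal.mem_coeIdeal]
  rw [← Set.ncard_image_of_injective _ hinj,
    Nat.card_congr (Equiv.subtypeSubtypeEquivSubtypeInter (· ∈ idealSet K J)
      (mixedEmbedding.norm · ≤ T ^ 2)), ← Nat.card_coe_set_eq]
  refine Nat.card_congr (Equiv.subtypeEquivProp (funext fun y ↦ propext ?_))
  simp only [mem_idealSet_iff]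
  constructor
  · rintro ⟨⟨hy, x, rfl⟩, hT'⟩
    have := (smul_mem_normLeOne _).2 ⟨hy, hT'⟩
    exact ⟨x, by rwa [← map_smul] at this, rfl⟩
  · rintro ⟨x, hx, rfl⟩
    have := (smul_mem_normLeOne (e (x.1, x.2))).1 (by rw [← map_smul]; exact hx)
    exact ⟨⟨this.1, x, rfl⟩, this.2⟩

open Ideal

lemma card_absNorm_le_and_mk0_eq {C : ClassGroup (𝓞 K)} {J : (Ideal (𝓞 K))⁰}
    (hJ : ClassGroup.mk0 J = C⁻¹) (s : ℝ) :
    Nat.card {I : (Ideal (𝓞 K))⁰ // absNorm (I : Ideal (𝓞 K)) ≤ s ∧ ClassGroup.mk0 I = C} =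
      Nat.card {I : (Ideal (𝓞 K))⁰ // (J : Ideal (𝓞 K)) ∣ I ∧
        Submodule.IsPrincipal (I : Ideal (𝓞 K)) ∧
        absNorm (I : Ideal (𝓞 K)) ≤ s * absNorm (J : Ideal (𝓞 K))} := by
  have hJpos : (0 : ℝ) < absNorm (J : Ideal (𝓞 K)) := mod_cast absNorm_pos_of_nonZeroDivisors J
  have hmul (I : (Ideal (𝓞 K))⁰) :
      absNorm (I : Ideal (𝓞 K)) ≤ s ∧ ClassGroup.mk0 I = C ↔
        Submodule.IsPrincipal ((J * I : (Ideal (𝓞 K))⁰) : Ideal (𝓞 K)) ∧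
          absNorm ((J * I : (Ideal (𝓞 K))⁰) : Ideal (𝓞 K)) ≤ s * absNorm (J : Ideal (𝓞 K)) := by
    rw [← ClassGroup.mk0_eq_one_iff (J * I).2, Subtype.coe_eta, map_mul, hJ, _root_.inv_mul_eq_one,
      Submonoid.coe_mul, map_mul, Nat.cast_mul, mul_comm s, mul_le_mul_iff_right₀ hJpos, and_comm,
      eq_comm]
  refine Nat.card_eq_of_bijective (fun I ↦ ⟨J * I.1, Dvd.intro _ rfl, (hmul I).1 I.2⟩)
    ⟨fun I I' h ↦ ?_, fun ⟨I, ⟨L, hL⟩, hI⟩ ↦ ?_⟩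
  · exact Subtype.ext (mul_left_cancel (congrArg Subtype.val h))
  · have hL0 : L ∈ (Ideal (𝓞 K))⁰ := (mul_mem_nonZeroDivisors.1 (hL ▸ I.2)).2
    obtain rfl : I = J * ⟨L, hL0⟩ := Subtype.ext hL
    exact ⟨⟨⟨L, hL0⟩, (hmul _).2 hI⟩, rfl⟩

lemma exists_abs_card_sub_mul_le_of_tendsto (hdeg : finrank ℚ K = 2) {C : ClassGroup (𝓞 K)} {κ : ℝ}
    (hlim : Tendsto (fun s : ℝ ↦ (Nat.card {I : (Ideal (𝓞 K))⁰ //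
      absNorm (I : Ideal (𝓞 K)) ≤ s ∧ ClassGroup.mk0 I = C} : ℝ) / s) atTop (𝓝 κ)) :
    ∃ B : ℝ, ∀ s : ℝ, 1 ≤ s → |(Nat.card {I : (Ideal (𝓞 K))⁰ //
      absNorm (I : Ideal (𝓞 K)) ≤ s ∧ ClassGroup.mk0 I = C} : ℝ) - κ * s| ≤ B * √s := by
  obtain ⟨J, hJ⟩ := ClassGroup.mk0_surjective C⁻¹
  obtain ⟨e, he⟩ := exists_continuousLinearEquiv_card_idealSet hdeg J
  obtain ⟨A, hA⟩ := hasDoublingCount_preimage_normLeOne hdeg e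
  set card : ℝ → ℕ := fun s ↦ Nat.card {I : (Ideal (𝓞 K))⁰ //
    absNorm (I : Ideal (𝓞 K)) ≤ s ∧ ClassGroup.mk0 I = C}
  set n : ℝ := ((absNorm (J : Ideal (𝓞 K)) : ℕ) : ℝ)
  set w : ℝ := ((torsionOrder K : ℕ) : ℝ)
  have hn : 1 ≤ n := Nat.one_le_cast.2 (absNorm_pos_of_nonZeroDivisors J)
  have hw : 0 < w := Nat.cast_pos.2 (torsionOrder_pos K)
  have hcount (T : ℝ) (hT : 0 < T) :
      ((latticePoints (e ⁻¹' normLeOne K) T).ncard : ℝ) = card (T ^ 2 / n) * w := by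
    rw [← he T hT, ← card_isPrincipal_dvd_norm_le, Nat.cast_mul]
    simp only [card, card_absNorm_le_and_mk0_eq hJ]
    rw [div_mul_cancel₀ _ (by positivity)]
  have hlimT : Tendsto (fun T ↦ ((latticePoints (e ⁻¹' normLeOne K) T).ncard : ℝ) / T ^ 2) atTop
      (𝓝 (κ * (w / n))) := by
    have hTn : Tendsto (fun T : ℝ ↦ T ^ 2 / n) atTop atTop :=
      (tendsto_pow_atTop two_ne_zero).atTop_div_const (by positivity)
    refine ((hlim.comp hTn).mul_const (w / n)).congr' ?_
    filter_upwards [eventually_gt_atTop 0] with T hT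
    change (card (T ^ 2 / n) : ℝ) / (T ^ 2 / n) * (w / n) = _
    rw [hcount T hT]
    generalize card (T ^ 2 / n) = m
    field_simp
  refine ⟨A / 2 * √n / w, fun s hs ↦ ?_⟩
  have hT : 1 ≤ √(s * n) := Real.one_le_sqrt.2 (one_le_mul_of_one_le_of_one_le hs hn)
  have hbound := abs_sub_mul_sq_le_of_doubling (fun T hT ↦ (hA T hT).2) hlimT hT
  rw [hcount _ (by linarith), Real.sq_sqrt (by positivity), mul_div_cancel_right₀ _ (by positivity),
    Real.sqrt_mul (by positivity), show κ * (w / n) * (s * n) = κ * s * w by field_simp, ← sub_mul,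
    abs_mul, abs_of_pos hw, ← le_div_iff₀ hw] at hbound
  exact hbound.trans_eq (by ring)

theorem exists_abs_card_absNorm_le_and_mk0_eq_sub_le (hdeg : finrank ℚ K = 2) :
    ∃ κ : ℝ, ∀ C : ClassGroup (𝓞 K), ∃ B : ℝ, ∀ s : ℝ, 1 ≤ s →
      |(Nat.card {I : (Ideal (𝓞 K))⁰ //
        absNorm (I : Ideal (𝓞 K)) ≤ s ∧ ClassGroup.mk0 I = C} : ℝ) - κ * s| ≤ B * √s :=
  ⟨_, fun C ↦ exists_abs_card_sub_mul_le_of_tendsto hdeg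
    (Ideal.tendsto_norm_le_and_mk_eq_div_atTop K C)⟩

end IdealCount

section AbelSummation

open MeasureTheory

variable {X E : Type*} [NormedAddCommGroup E] [NormedSpace ℝ E] [CompleteSpace E]

lemma sum_rpow_neg_smul_eq_integral {u : Finset X} {N : X → ℝ} (hN : ∀ x ∈ u, 1 ≤ N x) (a : X → E)
    {s : ℝ} (hs : 0 < s) :
    ∑ x ∈ u, N x ^ (-s) • a x =
      ∫ t in Set.Ici (1 : ℝ), (s * t ^ (-s - 1)) • ∑ x ∈ u with N x ≤ t, a x := by
  have hsum (t : ℝ) : (s * t ^ (-s - 1)) • ∑ x ∈ u with N x ≤ t, a x =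
      ∑ x ∈ u, (Set.Ici (N x)).indicator (fun t ↦ (s * t ^ (-s - 1)) • a x) t := by
    simp only [smul_sum, sum_filter, smul_ite, smul_zero, Set.indicator_apply, Set.mem_Ici]
  have hintegrable {c : ℝ} (hc : 1 ≤ c) : IntegrableOn (fun t : ℝ ↦ s * t ^ (-s - 1)) (Set.Ici c) :=
    ((integrableOn_Ici_iff_integrableOn_Ioi enorm_ne_top).2
      (integrableOn_Ioi_rpow_of_lt (by linarith) (by linarith))).const_mul s
  simp_rw [hsum]
  rw [integral_finsetSum _ fun x _ ↦
    (((hintegrable le_rfl).smul_const _).indicator measurableSet_Ici : Integrable _ _)]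
  refine sum_congr rfl fun x hx ↦ ?_
  rw [setIntegral_indicator measurableSet_Ici, Set.Ici_inter_Ici, sup_eq_right.2 (hN x hx),
    integral_smul_const, integral_Ici_eq_integral_Ioi, integral_const_mul,
    integral_Ioi_rpow_of_lt (by linarith) (by linarith [hN x hx]), sub_add_cancel]
  congr 1
  field_simp

lemma norm_sum_rpow_neg_smul_le {u : Finset X} {N : X → ℝ} (hN : ∀ x ∈ u, 1 ≤ N x) {a : X → E}
    {B r s : ℝ} (hB : ∀ t, 1 ≤ t → ‖∑ x ∈ u with N x ≤ t, a x‖ ≤ B * t ^ r) (hr : 0 ≤ r)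
    (hrs : r < s) :
    ‖∑ x ∈ u, N x ^ (-s) • a x‖ ≤ B * (s / (s - r)) := by
  have hs : 0 < s := hr.trans_lt hrs
  have hintegrable : IntegrableOn (fun t : ℝ ↦ B * s * t ^ (r - s - 1)) (Set.Ici 1) :=
    ((integrableOn_Ici_iff_integrableOn_Ioi enorm_ne_top).2
      (integrableOn_Ioi_rpow_of_lt (by linarith) one_pos)).const_mul _
  rw [sum_rpow_neg_smul_eq_integral hN a hs]
  calc _ ≤ ∫ t in Set.Ici (1 : ℝ), B * s * t ^ (r - s - 1) := by
        refine norm_integral_le_of_norm_le hintegrable ?_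
        refine (ae_restrict_mem measurableSet_Ici).mono fun t (ht : 1 ≤ t) ↦ ?_
        have ht0 : 0 < t := one_pos.trans_le ht
        rw [norm_smul, Real.norm_of_nonneg (by positivity),
          show r - s - 1 = (-s - 1) + r by ring, Real.rpow_add ht0]
        calc _ ≤ s * t ^ (-s - 1) * (B * t ^ r) := by gcongr; exact hB t ht
          _ = _ := by ring
    _ = B * (s / (s - r)) := by
        rw [integral_Ici_eq_integral_Ioi, integral_const_mul,
          integral_Ioi_rpow_of_lt (by linarith) one_pos, Real.one_rpow, sub_add_cancel,
          neg_div, ← div_neg, neg_sub]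
        ring

end AbelSummation

section ClassCharacter

open Ideal Module

variable {K : Type*} [Field K] [NumberField K]

lemma finite_setOf_absNorm_le (t : ℝ) :
    {I : (Ideal (𝓞 K))⁰ | (absNorm (I : Ideal (𝓞 K)) : ℝ) ≤ t}.Finite :=
  (finite_setOfPred_absNorm_le₀ (S := 𝓞 K) ⌊t⌋₊).subset fun _ hI ↦ Nat.le_floor hI

variable (K) in
lemma exists_card_absNorm_le_le_mul : ∃ A : ℝ, ∀ t : ℝ, 1 ≤ t →
    ({I : (Ideal (𝓞 K))⁰ | (absNorm (I : Ideal (𝓞 K)) : ℝ) ≤ t}.ncard : ℝ) ≤ A * t := by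
  obtain ⟨κ, hκ⟩ : ∃ κ : ℝ, Tendsto (fun t : ℝ ↦ ({I : (Ideal (𝓞 K))⁰ |
      (absNorm (I : Ideal (𝓞 K)) : ℝ) ≤ t}.ncard : ℝ) / t) atTop (𝓝 κ) :=
    ⟨_, Ideal.tendsto_norm_le_div_atTop₀ K⟩
  obtain ⟨t₀, ht₀⟩ := eventually_atTop.1 (hκ.eventually_le_const (lt_add_one κ))
  set M := max 1 t₀
  have hM : 1 ≤ M := le_max_left 1 t₀
  refine ⟨(κ + 1) * M, fun t ht ↦ ?_⟩
  calc _ ≤ ({I : (Ideal (𝓞 K))⁰ | (absNorm (I : Ideal (𝓞 K)) : ℝ) ≤ M * t}.ncard : ℝ) := by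
        refine Nat.cast_le.2 (Set.ncard_le_ncard (fun I (hI : _ ≤ t) ↦ ?_)
          (finite_setOf_absNorm_le _))
        exact hI.trans (le_mul_of_one_le_left (by linarith) hM)
    _ ≤ (κ + 1) * (M * t) := (div_le_iff₀ (by positivity)).1 (ht₀ _
        ((le_max_right 1 t₀).trans (le_mul_of_one_le_right (by linarith) ht)))
    _ = _ := by ring

lemma one_le_absNorm (I : (Ideal (𝓞 K))⁰) : (1 : ℝ) ≤ absNorm (I : Ideal (𝓞 K)) :=
  mod_cast absNorm_pos_of_nonZeroDivisors I

lemma summable_absNorm_rpow_neg {s : ℝ} (hs : 1 < s) :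
    Summable fun I : (Ideal (𝓞 K))⁰ ↦ (absNorm (I : Ideal (𝓞 K)) : ℝ) ^ (-s) := by
  obtain ⟨A, hA⟩ := exists_card_absNorm_le_le_mul K
  refine summable_of_sum_le (c := A * (s / (s - 1))) (fun I ↦ by positivity) fun u ↦
    (Real.le_norm_self _).trans ?_
  have hcard (t : ℝ) (ht : 1 ≤ t) :
      ‖∑ _ ∈ u.filter fun I : (Ideal (𝓞 K))⁰ ↦ (absNorm (I : Ideal (𝓞 K)) : ℝ) ≤ t, (1 : ℝ)‖ ≤
        A * t ^ (1 : ℝ) := by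
    rw [sum_const, nsmul_one, Real.norm_natCast, Real.rpow_one, ← Set.ncard_coe_finset]
    refine (Nat.cast_le.2 (Set.ncard_le_ncard (fun I hI ↦ ?_)
      (finite_setOf_absNorm_le t))).trans (hA t ht)
    exact (mem_filter.1 (mem_coe.1 hI)).2
  simpa using norm_sum_rpow_neg_smul_le (fun I _ ↦ one_le_absNorm I) hcard zero_le_one hs

lemma norm_classGroupChar_eq_one (η : ClassGroup (𝓞 K) →* ℂ) (C : ClassGroup (𝓞 K)) : ‖η C‖ = 1 :=
  (η.isOfFinOrder (isOfFinOrder_of_finite C)).norm_eq_one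

/-- The term `η I * N I ^ (-s)` of the `L`-series of a class group character `η`, as a completely
multiplicative function of the nonzero integral ideal `I`. -/
noncomputable def lSeriesTerm (η : ClassGroup (𝓞 K) →* ℂ) (s : ℝ) : (Ideal (𝓞 K))⁰ →* ℂ where
  toFun I := (absNorm (I : Ideal (𝓞 K)) : ℝ) ^ (-s) • η (ClassGroup.mk0 I)
  map_one' := by simp
  map_mul' I J := by
    simp only [map_mul, Submonoid.coe_mul, Nat.cast_mul]
    rw [Real.mul_rpow (by positivity) (by positivity), smul_mul_smul_comm]

lemma lSeriesTerm_apply (η : ClassGroup (𝓞 K) →* ℂ) (s : ℝ) (I : (Ideal (𝓞 K))⁰) :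
    lSeriesTerm η s I = (absNorm (I : Ideal (𝓞 K)) : ℝ) ^ (-s) • η (ClassGroup.mk0 I) := rfl

lemma norm_lSeriesTerm (η : ClassGroup (𝓞 K) →* ℂ) (s : ℝ) (I : (Ideal (𝓞 K))⁰) :
    ‖lSeriesTerm η s I‖ = (absNorm (I : Ideal (𝓞 K)) : ℝ) ^ (-s) := by
  rw [lSeriesTerm_apply, norm_smul, norm_classGroupChar_eq_one, mul_one,
    Real.norm_of_nonneg (by positivity)]

lemma summable_norm_lSeriesTerm (η : ClassGroup (𝓞 K) →* ℂ) {s : ℝ} (hs : 1 < s) :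
    Summable fun I ↦ ‖lSeriesTerm η s I‖ := by
  simpa only [norm_lSeriesTerm] using summable_absNorm_rpow_neg hs

lemma card_filter_mk0_eq (n : ℕ) (C : ClassGroup (𝓞 K))
    [DecidablePred fun I : (Ideal (𝓞 K))⁰ ↦ ClassGroup.mk0 I = C] :
    #{I ∈ (finite_setOfPred_absNorm_le₀ (S := 𝓞 K) n).toFinset | ClassGroup.mk0 I = C} =
      Nat.card {I : (Ideal (𝓞 K))⁰ //
        (absNorm (I : Ideal (𝓞 K)) : ℝ) ≤ n ∧ ClassGroup.mk0 I = C} :=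
  (Nat.subtype_card _ fun I ↦ by simp).symm

lemma exists_norm_sum_classGroupChar_le (hdeg : finrank ℚ K = 2) {η : ClassGroup (𝓞 K) →* ℂ}
    (hη : η ≠ 1) : ∃ B : ℝ, ∀ n : ℕ,
      ‖∑ I ∈ (finite_setOfPred_absNorm_le₀ (S := 𝓞 K) n).toFinset, η (ClassGroup.mk0 I)‖ ≤
        B * √n := by
  classical
  obtain ⟨κ, hκ⟩ := exists_abs_card_absNorm_le_and_mk0_eq_sub_le hdeg
  choose B hB using hκ
  refine ⟨∑ C, B C, fun n ↦ ?_⟩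
  rcases n.eq_zero_or_pos with rfl | hn
  · rw [sum_eq_zero fun I hI ↦ ?_]
    · simp
    · exact absurd (absNorm_pos_of_nonZeroDivisors I) (by simpa using hI)
  let r (C : ClassGroup (𝓞 K)) : ℝ :=
    #{I ∈ (finite_setOfPred_absNorm_le₀ (S := 𝓞 K) n).toFinset | ClassGroup.mk0 I = C} - κ * n
  have hsum : ∑ I ∈ (finite_setOfPred_absNorm_le₀ (S := 𝓞 K) n).toFinset, η (ClassGroup.mk0 I) =
      ∑ C, η C * r C := by
    simp only [r, Complex.ofReal_sub, Complex.ofReal_natCast, mul_sub]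
    rw [sum_sub_distrib, ← sum_mul, sum_hom_units_eq_zero η hη, zero_mul, sub_zero,
      ← sum_fiberwise_of_maps_to (g := ClassGroup.mk0) fun _ _ ↦ mem_univ _]
    refine sum_congr rfl fun C _ ↦ ?_
    rw [sum_congr rfl fun I hI ↦ by rw [(mem_filter.1 hI).2], sum_const, nsmul_eq_mul, mul_comm]
  rw [hsum, sum_mul]
  refine norm_sum_le_of_le _ fun C _ ↦ ?_
  rw [norm_mul, norm_classGroupChar_eq_one, one_mul, Complex.norm_real, Real.norm_eq_abs]
  simp only [r, card_filter_mk0_eq]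
  exact hB C n (mod_cast hn)

theorem exists_norm_tsum_lSeriesTerm_le (hdeg : finrank ℚ K = 2) {η : ClassGroup (𝓞 K) →* ℂ}
    (hη : η ≠ 1) : ∃ B : ℝ, ∀ s : ℝ, 1 < s → ‖∑' I, lSeriesTerm η s I‖ ≤ B := by
  obtain ⟨B, hB⟩ := exists_norm_sum_classGroupChar_le hdeg hη
  have hB0 : 0 ≤ B := by simpa using (norm_nonneg _).trans (hB 1)
  refine ⟨B * 2, fun s hs ↦ ?_⟩
  let u (n : ℕ) := (finite_setOfPred_absNorm_le₀ (S := 𝓞 K) n).toFinset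
  have hpartial (n : ℕ) : ‖∑ I ∈ u n, lSeriesTerm η s I‖ ≤ B * 2 := by
    have hcount (t : ℝ) (ht : 1 ≤ t) :
        ‖∑ I ∈ (u n).filter fun I : (Ideal (𝓞 K))⁰ ↦ (absNorm (I : Ideal (𝓞 K)) : ℝ) ≤ t,
          η (ClassGroup.mk0 I)‖ ≤
          B * t ^ (1 / 2 : ℝ) := by
      have hfilter :
          ((u n).filter fun I : (Ideal (𝓞 K))⁰ ↦ (absNorm (I : Ideal (𝓞 K)) : ℝ) ≤ t) =
            u (min n ⌊t⌋₊) := by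
        ext I
        simp [u, Nat.le_floor_iff (zero_le_one.trans ht)]
      rw [hfilter, ← Real.sqrt_eq_rpow]
      refine (hB _).trans ?_
      gcongr
      exact (Nat.cast_le.2 (min_le_right _ _)).trans (Nat.floor_le (zero_le_one.trans ht))
    calc _ ≤ B * (s / (s - 1 / 2)) := norm_sum_rpow_neg_smul_le (fun I _ ↦ one_le_absNorm I)
          hcount (by norm_num) (by linarith)
      _ ≤ B * 2 := by
          gcongr
          rw [div_le_iff₀] <;> linarith
  have hu : Tendsto u atTop atTop :=
    tendsto_atTop_finset_of_monotone
      (fun m n hmn I hI ↦ by simp only [u, Set.Finite.mem_toFinset] at hI ⊢; exact hI.trans hmn)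
      fun I ↦ ⟨absNorm (I : Ideal (𝓞 K)), by simp [u]⟩
  exact le_of_tendsto ((summable_norm_lSeriesTerm η hs).of_norm.hasSum.comp hu).norm
    (Eventually.of_forall hpartial)

end ClassCharacter

section EulerProduct

variable {M ι 𝕜 : Type*} [CommMonoid M] [IsCancelMul M] [NormedField 𝕜]

lemma tsum_indicator_inter_setOf_dvd (f : M →* 𝕜) {q : M} {A : Set M}
    (hA : ∀ x, q * x ∈ A ↔ x ∈ A) :
    ∑' x, (A ∩ {x | q ∣ x}).indicator f x = f q * ∑' x, A.indicator f x := by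
  rw [← tsum_mul_left, ← (mul_right_injective q).tsum_eq]
  · refine tsum_congr fun x ↦ ?_
    by_cases hx : x ∈ A <;> simp [hx, hA]
  · intro x hx
    obtain ⟨y, rfl⟩ := (Set.mem_of_indicator_ne_zero hx).2
    exact ⟨y, rfl⟩

lemma prod_one_sub_mul_tsum [CompleteSpace 𝕜] {f : M →* 𝕜} (hf : Summable fun x ↦ ‖f x‖) {p : ι → M}
    (hp : ∀ i a b, p i ∣ a * b → p i ∣ a ∨ p i ∣ b) (hpp : ∀ i j, p i ∣ p j → i = j)
    (S : Finset ι) :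
    (∏ i ∈ S, (1 - f (p i))) * ∑' x, f x = ∑' x, {x | ∀ i ∈ S, ¬ p i ∣ x}.indicator f x := by
  classical
  induction S using Finset.induction_on with
  | empty => simp
  | insert q S hq ih =>
    set A := {x | ∀ i ∈ S, ¬ p i ∣ x} with hA
    have hsieve : {x | ∀ i ∈ insert q S, ¬ p i ∣ x} = A \ (A ∩ {x | p q ∣ x}) := by
      ext x
      simp [hA, and_comm]
    have hmem (x : M) : p q * x ∈ A ↔ x ∈ A :=
      forall₂_congr fun i hi ↦ not_congr ⟨fun h ↦
        (hp i _ _ h).resolve_left fun h ↦ hq (hpp i q h ▸ hi), fun h ↦ h.mul_left _⟩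
    have hsum (B : Set M) : Summable (B.indicator f) := hf.of_norm.indicator B
    rw [prod_insert hq, mul_assoc, ih, sub_mul, one_mul, ← tsum_indicator_inter_setOf_dvd f hmem,
      ← (hsum _).tsum_sub (hsum _), hsieve, Set.indicator_sdiff Set.inter_subset_left]
    rfl

lemma tendsto_prod_one_sub_mul_tsum [CompleteSpace 𝕜] {f : M →* 𝕜} (hf : Summable fun x ↦ ‖f x‖)
    {p : ι → M} (hp : ∀ i a b, p i ∣ a * b → p i ∣ a ∨ p i ∣ b)
    (hpp : ∀ i j, p i ∣ p j → i = j) (h1 : ∀ x, (∀ i, ¬ p i ∣ x) ↔ x = 1) :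
    Tendsto (fun S : Finset ι ↦ (∏ i ∈ S, (1 - f (p i))) * ∑' x, f x) atTop (𝓝 1) := by
  simp_rw [prod_one_sub_mul_tsum hf hp hpp]
  have hone : ∑' x, ({1} : Set M).indicator f x = 1 := by
    rw [tsum_eq_single 1 (fun x hx ↦ by simp [hx])]
    simp
  rw [← hone]
  refine tendsto_tsum_of_dominated_convergence hf (fun x ↦ ?_)
    (Eventually.of_forall fun S x ↦ norm_indicator_le_norm_self _ _)
  refine tendsto_const_nhds.congr' ?_
  by_cases hx : x = 1
  · refine Eventually.of_forall fun S ↦ ?_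
    have hmem : x ∈ {x | ∀ i ∈ S, ¬ p i ∣ x} := fun i _ ↦ (h1 x).2 hx i
    beta_reduce
    rw [Set.indicator_of_mem hmem, Set.indicator_of_mem (Set.mem_singleton_iff.2 hx)]
  · obtain ⟨i, hi⟩ : ∃ i, p i ∣ x := not_forall_not.1 (mt (h1 x).1 hx)
    filter_upwards [eventually_ge_atTop {i}] with S hS
    have hmem : x ∉ {x | ∀ i ∈ S, ¬ p i ∣ x} := fun h ↦ h i (hS (mem_singleton_self i)) hi
    rw [Set.indicator_of_notMem hmem, Set.indicator_of_notMem (mt Set.mem_singleton_iff.1 hx)]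

end EulerProduct

section PrincipalPrimes

open Ideal IsDedekindDomain Module

lemma norm_one_sub_le_exp (z : ℂ) : ‖1 - z‖ ≤ Real.exp (-z.re + ‖z‖ ^ 2 / 2) := by
  refine (sq_le_sq₀ (norm_nonneg _) (Real.exp_pos _).le).mp ?_
  calc ‖1 - z‖ ^ 2 = 2 * (-z.re + ‖z‖ ^ 2 / 2) + 1 := by
        simp only [Complex.sq_norm, Complex.normSq_apply, Complex.sub_re, Complex.one_re,
          Complex.sub_im, Complex.one_im]
        ring
    _ ≤ Real.exp (2 * (-z.re + ‖z‖ ^ 2 / 2)) := Real.add_one_le_exp _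
    _ = Real.exp (-z.re + ‖z‖ ^ 2 / 2) ^ 2 := mod_cast Real.exp_nat_mul _ 2

lemma sum_re_le_log_add {ι : Type*} {S : Finset ι} {f : ι → ℂ} {B : ℝ}
    (h : 1 / 2 ≤ ‖∏ i ∈ S, (1 - f i)‖ * B) :
    ∑ i ∈ S, (f i).re ≤ Real.log (2 * B) + (∑ i ∈ S, ‖f i‖ ^ 2) / 2 := by
  set X := -(∑ i ∈ S, (f i).re) + (∑ i ∈ S, ‖f i‖ ^ 2) / 2 with hX
  have hB : 0 ≤ B := (pos_of_mul_pos_right (one_half_pos.trans_le h) (norm_nonneg _)).le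
  have hprod : ‖∏ i ∈ S, (1 - f i)‖ ≤ Real.exp X := by
    rw [hX, norm_prod, ← sum_neg_distrib, sum_div, ← sum_add_distrib, Real.exp_sum]
    exact prod_le_prod (fun _ _ ↦ norm_nonneg _) fun _ _ ↦ norm_one_sub_le_exp _
  have hexp : Real.exp (-X) ≤ 2 * B := by
    rw [Real.exp_neg, inv_le_iff_one_le_mul₀ (Real.exp_pos _)]
    linarith [mul_le_mul_of_nonneg_right hprod hB]
  have hlog : -X ≤ Real.log (2 * B) :=
    (Real.le_log_iff_exp_le ((Real.exp_pos _).trans_le hexp)).mpr hexp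
  linarith

variable {K : Type*} [Field K]

/-- A nonzero prime of a number field as an element of the monoid of nonzero ideals, on which the
ideal classes and the terms of `L`-series are defined. -/
def primeIdeal (P : HeightOneSpectrum (𝓞 K)) : (Ideal (𝓞 K))⁰ :=
  ⟨P.asIdeal, mem_nonZeroDivisors_of_ne_zero P.ne_bot⟩

lemma primeIdeal_injective : Function.Injective (primeIdeal (K := K)) :=
  fun _ _ h ↦ HeightOneSpectrum.ext (congrArg Subtype.val h)

variable [NumberField K]

lemma forall_not_primeIdeal_dvd_iff {I : (Ideal (𝓞 K))⁰} :
    (∀ P : HeightOneSpectrum (𝓞 K), ¬ primeIdeal P ∣ I) ↔ I = 1 := by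
  simp_rw [nonZeroDivisors_dvd_iff_dvd_coe]
  refine ⟨fun h ↦ ?_, ?_⟩
  · by_contra hI
    obtain ⟨P, hP, hIP⟩ := exists_le_maximal (I : Ideal (𝓞 K))
      fun htop ↦ hI (Subtype.ext (htop.trans one_eq_top.symm))
    have hP0 : P ≠ ⊥ := fun h0 ↦ nonZeroDivisors.coe_ne_zero I (le_bot_iff.mp (h0 ▸ hIP))
    exact h ⟨P, hP.isPrime, hP0⟩ (dvd_iff_le.2 hIP)
  · rintro rfl P h
    exact P.prime.not_dvd_one h

lemma tendsto_prod_one_sub_lSeriesTerm_mul_tsum (η : ClassGroup (𝓞 K) →* ℂ) {s : ℝ} (hs : 1 < s) :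
    Tendsto (fun S : Finset (HeightOneSpectrum (𝓞 K)) ↦
      (∏ P ∈ S, (1 - lSeriesTerm η s (primeIdeal P))) * ∑' I, lSeriesTerm η s I) atTop (𝓝 1) := by
  have : IsLeftCancelMul (Ideal (𝓞 K))⁰ := ⟨fun I _ _ h ↦
    Subtype.ext (mul_left_cancel₀ (nonZeroDivisors.coe_ne_zero I) (congrArg Subtype.val h))⟩
  have : IsCancelMul (Ideal (𝓞 K))⁰ := CommMagma.IsLeftCancelMul.toIsCancelMul _
  refine tendsto_prod_one_sub_mul_tsum (summable_norm_lSeriesTerm η hs) (fun P I J h ↦ ?_)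
    (fun P Q h ↦ ?_) fun _ ↦ forall_not_primeIdeal_dvd_iff
  · simp only [nonZeroDivisors_dvd_iff_dvd_coe] at h ⊢
    exact P.prime.dvd_or_dvd h
  · rw [nonZeroDivisors_dvd_iff_dvd_coe, dvd_iff_le] at h
    exact HeightOneSpectrum.ext (Q.isMaximal.eq_of_le P.isPrime.ne_top h).symm

lemma sum_norm_lSeriesTerm_sq_le (η : ClassGroup (𝓞 K) →* ℂ) {s : ℝ} (hs : 1 ≤ s)
    (S : Finset (HeightOneSpectrum (𝓞 K))) :
    ∑ P ∈ S, ‖lSeriesTerm η s (primeIdeal P)‖ ^ 2 ≤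
      ∑' I : (Ideal (𝓞 K))⁰, (absNorm (I : Ideal (𝓞 K)) : ℝ) ^ (-2 : ℝ) := by
  calc _ ≤ ∑ P ∈ S, (absNorm (primeIdeal P : Ideal (𝓞 K)) : ℝ) ^ (-2 : ℝ) := by
        refine sum_le_sum fun P _ ↦ ?_
        rw [norm_lSeriesTerm, ← Real.rpow_mul_natCast (by positivity)]
        exact Real.rpow_le_rpow_of_exponent_le (one_le_absNorm _) (by push_cast; linarith)
    _ = ∑ I ∈ S.map ⟨primeIdeal, primeIdeal_injective⟩,
          (absNorm (I : Ideal (𝓞 K)) : ℝ) ^ (-2 : ℝ) := by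
        rw [sum_map, Function.Embedding.coeFn_mk]
    _ ≤ _ := (summable_absNorm_rpow_neg one_lt_two).sum_le_tsum _ fun _ _ ↦ by positivity

lemma exists_eventually_sum_re_lSeriesTerm_le {η : ClassGroup (𝓞 K) →* ℂ} {B : ℝ}
    (hB : ∀ s : ℝ, 1 < s → ‖∑' I, lSeriesTerm η s I‖ ≤ B) :
    ∃ M : ℝ, ∀ s : ℝ, 1 < s → ∀ᶠ S : Finset (HeightOneSpectrum (𝓞 K)) in atTop,
      ∑ P ∈ S, (lSeriesTerm η s (primeIdeal P)).re ≤ M := by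
  refine ⟨Real.log (2 * B) +
    (∑' I : (Ideal (𝓞 K))⁰, (absNorm (I : Ideal (𝓞 K)) : ℝ) ^ (-2 : ℝ)) / 2, fun s hs ↦ ?_⟩
  have hlim := (tendsto_prod_one_sub_lSeriesTerm_mul_tsum η hs).norm
  rw [norm_one] at hlim
  filter_upwards [hlim.eventually_const_le one_half_lt_one] with S hS
  rw [norm_mul] at hS
  grw [sum_re_le_log_add (hS.trans (mul_le_mul_of_nonneg_left (hB s hs) (norm_nonneg _))),
    sum_norm_lSeriesTerm_sq_le η hs.le S]

lemma tendsto_sum_absNorm_rpow_neg (S : Finset (HeightOneSpectrum (𝓞 K))) :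
    Tendsto (fun s : ℝ ↦ ∑ P ∈ S, (absNorm P.asIdeal : ℝ) ^ (-s)) (𝓝[>] 1)
      (𝓝 (∑ P ∈ S, (absNorm P.asIdeal : ℝ)⁻¹)) := by
  refine tendsto_finsetSum _ fun P _ ↦ ?_
  have hP : (absNorm P.asIdeal : ℝ) ≠ 0 := (one_pos.trans_le (one_le_absNorm (primeIdeal P))).ne'
  have hcont : ContinuousAt (fun s : ℝ ↦ (absNorm P.asIdeal : ℝ) ^ (-s)) 1 :=
    (Real.continuousAt_const_rpow hP).comp continuous_neg.continuousAt
  simpa only [Real.rpow_neg_one] using hcont.tendsto.mono_left nhdsWithin_le_nhds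

theorem exists_sum_absNorm_inv_le {ι : Type*} [Fintype ι] [Nonempty ι]
    {η : ι → ClassGroup (𝓞 K) →* ℂ} {B : ι → ℝ}
    (hB : ∀ i, ∀ s : ℝ, 1 < s → ‖∑' I, lSeriesTerm (η i) s I‖ ≤ B i)
    (hη : ∀ P : HeightOneSpectrum (𝓞 K), 0 ≤ (∑ i, η i (ClassGroup.mk0 (primeIdeal P))).re) :
    ∃ M : ℝ, ∀ S : Finset (HeightOneSpectrum (𝓞 K)),
      (∀ P ∈ S, ClassGroup.mk0 (primeIdeal P) = 1) → ∑ P ∈ S, (absNorm P.asIdeal : ℝ)⁻¹ ≤ M := by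
  choose M hM using fun i ↦ exists_eventually_sum_re_lSeriesTerm_le (hB i)
  refine ⟨∑ i, M i, fun S hS ↦ le_of_tendsto (tendsto_sum_absNorm_rpow_neg S)
    (eventually_nhdsWithin_of_forall fun s (hs : 1 < s) ↦ ?_)⟩
  obtain ⟨T, hT, hST⟩ := ((eventually_all.2 fun i ↦ hM i s hs).and (eventually_ge_atTop S)).exists
  have hterm (P : HeightOneSpectrum (𝓞 K)) : ∑ i, (lSeriesTerm (η i) s (primeIdeal P)).re =
      (absNorm P.asIdeal : ℝ) ^ (-s) * (∑ i, η i (ClassGroup.mk0 (primeIdeal P))).re := by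
    simp only [lSeriesTerm_apply, Complex.smul_re, Complex.re_sum, mul_sum, smul_eq_mul,
      primeIdeal]
  calc ∑ P ∈ S, (absNorm P.asIdeal : ℝ) ^ (-s)
      ≤ ∑ P ∈ S, ∑ i, (lSeriesTerm (η i) s (primeIdeal P)).re := by
        refine sum_le_sum fun P hP ↦ ?_
        simp only [hterm, hS P hP, map_one, sum_const, card_univ, nsmul_eq_mul, mul_one,
          Complex.natCast_re]
        exact le_mul_of_one_le_right (by positivity) (mod_cast Fintype.card_pos)
    _ ≤ ∑ P ∈ T, ∑ i, (lSeriesTerm (η i) s (primeIdeal P)).re := by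
        refine sum_le_sum_of_subset_of_nonneg hST fun P _ _ ↦ ?_
        rw [hterm]
        exact mul_nonneg (by positivity) (hη P)
    _ ≤ ∑ i, M i := by
        rw [sum_comm]
        exact sum_le_sum fun i _ ↦ hT i

end PrincipalPrimes

section DirichletDivergence

open ArithmeticFunction ArithmeticFunction.vonMangoldt

variable {q : ℕ} {a : ZMod q}

lemma sub_one_mul_log_div_rpow_le {y : ℝ} (hy : 0 < y) (x : ℝ) :
    (x - 1) * (Real.log y / y ^ x) ≤ 1 / y := by
  have hlog : (x - 1) * Real.log y ≤ y ^ x / y := by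
    rw [← Real.rpow_sub_one hy.ne', Real.rpow_def_of_pos hy, mul_comm]
    linarith [Real.add_one_le_exp (Real.log y * (x - 1))]
  rw [← mul_div_assoc, div_le_div_iff₀ (by positivity) hy, one_mul]
  exact (le_div_iff₀ hy).1 hlog

lemma sub_one_mul_residueClass_div_rpow_le {x : ℝ} (hx : x ∈ Set.Ioc 1 2) (a : ZMod q) (n : ℕ) :
    (x - 1) * (residueClass a n / (n : ℝ) ^ x) ≤
      (if n.Prime then 0 else residueClass a n) / n +
        if n.Prime ∧ (n : ZMod q) = a then (1 : ℝ) / n else 0 := by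
  rcases n.eq_zero_or_pos with rfl | hn
  · simp
  by_cases hp : n.Prime
  · by_cases ha : (n : ZMod q) = a
    · have hclass : residueClass a n = Real.log n := by
        rw [residueClass, Set.indicator_of_mem (by exact ha), vonMangoldt_apply_prime hp]
      simp only [hp, ha, if_true, zero_div, zero_add, and_self, hclass]
      exact sub_one_mul_log_div_rpow_le (Nat.cast_pos.2 hn) x
    · simp [residueClass, hp, ha]
  · have hn1 : (1 : ℝ) ≤ n := mod_cast hn
    have hclass := residueClass_nonneg a n
    simp only [hp, if_false, false_and, add_zero]
    calc (x - 1) * (residueClass a n / (n : ℝ) ^ x) ≤ 1 * (residueClass a n / (n : ℝ) ^ (1 : ℝ)) :=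
          mul_le_mul (by linarith [hx.2]) (by gcongr; exact hx.1.le) (by positivity) zero_le_one
      _ = residueClass a n / n := by rw [one_mul, Real.rpow_one]

lemma tendsto_sub_one_mul_tsum_residueClass
    (h : Summable fun n : ℕ ↦ if n.Prime ∧ (n : ZMod q) = a then (1 : ℝ) / n else 0) :
    Tendsto (fun x : ℝ ↦ (x - 1) * ∑' n : ℕ, residueClass a n / (n : ℝ) ^ x) (𝓝[>] 1) (𝓝 0) := by
  simp_rw [← tsum_mul_left]
  rw [← tsum_zero (β := ℕ)]
  refine tendsto_tsum_of_dominated_convergence ((summable_residueClass_non_primes_div a).add h)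
    (fun n ↦ ?_) (mem_of_superset (Ioc_mem_nhdsGT one_lt_two) fun x hx n ↦ ?_)
  · rcases n.eq_zero_or_pos with rfl | hn
    · simp
    · have hn0 : (n : ℝ) ≠ 0 := mod_cast hn.ne'
      have hcont : ContinuousAt (fun x : ℝ ↦ (x - 1) * (residueClass a n / (n : ℝ) ^ x)) 1 :=
        (continuousAt_id.sub continuousAt_const).mul
          (continuousAt_const.div (Real.continuousAt_const_rpow hn0) (by simpa using hn.ne'))
      simpa using hcont.tendsto.mono_left nhdsWithin_le_nhds
  · have hx1 : 0 ≤ x - 1 := by linarith [hx.1]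
    have hclass := residueClass_nonneg a n
    rw [Real.norm_of_nonneg (by positivity)]
    exact sub_one_mul_residueClass_div_rpow_le hx a n

theorem not_summable_one_div_primes_in_residueClass [NeZero q] (ha : IsUnit a) :
    ¬ Summable fun n : ℕ ↦ if n.Prime ∧ (n : ZMod q) = a then (1 : ℝ) / n else 0 := by
  intro h
  obtain ⟨C, hC⟩ := LSeries_residueClass_lower_bound ha
  have hlower : Tendsto (fun x : ℝ ↦ (q.totient : ℝ)⁻¹ - C * (x - 1)) (𝓝[>] 1)
      (𝓝 ((q.totient : ℝ)⁻¹ - C * (1 - 1))) :=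
    (ContinuousAt.tendsto (by fun_prop)).mono_left nhdsWithin_le_nhds
  have hle := le_of_tendsto_of_tendsto hlower (tendsto_sub_one_mul_tsum_residueClass h) <|
    mem_of_superset (Ioc_mem_nhdsGT one_lt_two) fun x hx ↦ by
      have hx1 : 0 < x - 1 := sub_pos.2 hx.1
      calc (q.totient : ℝ)⁻¹ - C * (x - 1) = (x - 1) * ((q.totient : ℝ)⁻¹ / (x - 1) - C) := by
            field_simp
        _ ≤ _ := mul_le_mul_of_nonneg_left (hC hx) hx1.le
  have hq : 0 < (q.totient : ℝ)⁻¹ := inv_pos.2 (mod_cast q.totient.pos_of_neZero)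
  linarith

end DirichletDivergence

section QuadraticForms

lemma exists_ne_zero_abs_le_map_eq_zero {ι A : Type*} [Fintype ι] [AddCommGroup A] [Finite A]
    (f : (ι → ℤ) →+ A) {b : ι → ℕ} (hb : Nat.card A < ∏ i, (b i + 1)) :
    ∃ x : ι → ℤ, x ≠ 0 ∧ (∀ i, |x i| ≤ b i) ∧ f x = 0 := by
  classical
  have := Fintype.ofFinite A
  have hcard : (univ : Finset A).card < (Icc (0 : ι → ℤ) fun i ↦ (b i : ℤ)).card := by
    simpa only [Pi.card_Icc, Int.card_Icc, card_univ, ← Nat.card_eq_fintype_card, Pi.zero_apply,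
      sub_zero, ← Nat.cast_add_one, Int.toNat_natCast] using hb
  obtain ⟨x, hx, y, hy, hne, hxy⟩ :=
    exists_ne_map_eq_of_card_lt_of_maps_to hcard (f := f) fun _ _ ↦ mem_univ _
  rw [mem_Icc] at hx hy
  refine ⟨x - y, sub_ne_zero.2 hne, fun i ↦ ?_, by rw [map_sub, hxy, sub_self]⟩
  have hxi := And.intro (hx.1 i) (hx.2 i)
  have hyi := And.intro (hy.1 i) (hy.2 i)
  simp only [Pi.zero_apply] at hxi hyi
  exact abs_le.2 ⟨by simp only [Pi.sub_apply]; linarith, by simp only [Pi.sub_apply]; linarith⟩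

lemma exists_sq_le_and_dvd_sub (p m : ℕ) [NeZero p] [NeZero m] (ρ : ℤ) :
    ∃ x y z : ℤ, (x ≠ 0 ∨ y ≠ 0 ∨ z ≠ 0) ∧ x ^ 2 ≤ p * m ∧ y ^ 2 ≤ p ∧ z ^ 2 ≤ m ∧
      (p : ℤ) ∣ x - ρ * y ∧ (m : ℤ) ∣ x - z := by
  let b : Fin 3 → ℕ := ![p * m, p, m]
  let π : ∀ _ : Fin 3, (Fin 3 → ℤ) →+ ℤ := Pi.evalAddMonoidHom fun _ ↦ ℤ
  let f : (Fin 3 → ℤ) →+ ZMod p × ZMod m :=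
    ((Int.castAddHom _).comp (π 0 - ρ • π 1)).prod ((Int.castAddHom _).comp (π 0 - π 2))
  have hcard : Nat.card (ZMod p × ZMod m) < ∏ i, ((b i).sqrt + 1) := by
    rw [Nat.card_prod, Nat.card_zmod, Nat.card_zmod, Fin.prod_univ_three]
    refine lt_of_pow_lt_pow_left₀ 2 (by positivity) ?_
    calc (p * m) ^ 2 = (p * m) * p * m := by ring
      _ < ((p * m).sqrt + 1) ^ 2 * (p.sqrt + 1) ^ 2 * (m.sqrt + 1) ^ 2 := by
        gcongr <;> exact Nat.lt_succ_sqrt' _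
      _ = _ := by simp only [mul_pow]; rfl
  obtain ⟨x, hx0, hxb, hfx⟩ := exists_ne_zero_abs_le_map_eq_zero f hcard
  have hsq (i : Fin 3) : x i ^ 2 ≤ b i :=
    (sq_le_sq' (abs_le.1 (hxb i)).1 (abs_le.1 (hxb i)).2).trans (mod_cast Nat.sqrt_le' _)
  refine ⟨x 0, x 1, x 2, ?_, mod_cast hsq 0, hsq 1, hsq 2, ?_, ?_⟩
  · by_contra! h
    exact hx0 (funext fun i ↦ by fin_cases i; exacts [h.1, h.2.1, h.2.2])
  · exact (ZMod.intCast_zmod_eq_zero_iff_dvd _ _).1 (by simpa [f, π] using congrArg Prod.fst hfx)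
  · exact (ZMod.intCast_zmod_eq_zero_iff_dvd _ _).1 (by simpa [f, π] using congrArg Prod.snd hfx)

variable {D : ℤ} {p : ℕ}

lemma isSquare_intCast_zmod_of_mod_eq_one [Fact p.Prime] (h : p % (4 * D.natAbs) = 1) :
    IsSquare (D : ZMod p) := by
  have hodd : Odd p := Nat.odd_iff.2 <| Nat.odd_of_mod_four_eq_one <| by
    rw [← Nat.mod_mul_right_mod p 4 D.natAbs, h]
  apply ZMod.isSquare_of_jacobiSym_eq_one
  rw [jacobiSym.mod_right _ hodd, h, jacobiSym.one_right]

lemma exists_prime_mul_dvd_sq_sub_mul_sq_sub [Fact p.Prime] (hD : D ≠ 0) (hDp : D.natAbs < p)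
    (hsq : IsSquare (D : ZMod p)) (hp1 : D ∣ p - 1) :
    ∃ x y z : ℤ, (x ≠ 0 ∨ y ≠ 0 ∨ z ≠ 0) ∧ x ^ 2 < p * |D| ∧ y ^ 2 < p ∧ z ^ 2 ≤ |D| ∧
      D ∣ x - z ∧ p * D ∣ x ^ 2 - D * y ^ 2 - p * z ^ 2 := by
  have hp : p.Prime := Fact.out
  have hpZ : Prime (p : ℤ) := Nat.prime_iff_prime_int.1 hp
  have : NeZero D.natAbs := ⟨Int.natAbs_ne_zero.2 hD⟩
  have hpD : ¬ (p : ℤ) ∣ D := fun h ↦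
    (Nat.le_of_dvd (NeZero.pos _) (Int.natCast_dvd.1 h)).not_gt hDp
  obtain ⟨r, hr⟩ := hsq
  obtain ⟨ρ, rfl⟩ := ZMod.intCast_surjective r
  obtain ⟨w, hw⟩ : (p : ℤ) ∣ ρ * ρ - D :=
    (ZMod.intCast_eq_intCast_iff_dvd_sub _ _ _).1 (by push_cast; exact hr)
  obtain ⟨x, y, z, h0, hx, hy, hz, ⟨s, hs⟩, ht⟩ := exists_sq_le_and_dvd_sub p D.natAbs ρ
  rw [Int.natCast_natAbs] at hx hz ht
  rw [abs_dvd] at ht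
  refine ⟨x, y, z, h0, hx.lt_of_ne fun he ↦ ?_, hy.lt_of_ne fun he ↦ ?_, hz, ht, ?_⟩
  · obtain ⟨v, rfl⟩ := hpZ.dvd_of_dvd_pow ⟨_, he⟩
    have hv : p * v ^ 2 = |D| := mul_left_cancel₀ hpZ.ne_zero (by linear_combination he)
    exact hpD ((dvd_abs _ _).1 ⟨_, hv.symm⟩)
  · exact hpZ.irreducible.not_isSquare ⟨y, by rw [← he, sq]⟩
  · refine ((Prime.coprime_iff_not_dvd hpZ).2 hpD).mul_dvd ?_ ?_
    · exact ⟨s * (x + ρ * y) + w * y ^ 2 - z ^ 2, by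
        linear_combination (x + ρ * y) * hs + y ^ 2 * hw⟩
    · obtain ⟨t, ht⟩ := ht
      obtain ⟨k, hk⟩ := hp1
      exact ⟨t * (x + z) - y ^ 2 - k * z ^ 2, by
        linear_combination (x + z) * ht - z ^ 2 * hk⟩

lemma sq_sub_mul_sq_sub_eq_zero_or_neg {D p x y z : ℤ} (hp : 0 < p) (hD : 1 < |D|)
    (hx : x ^ 2 < p * |D|) (hy : y ^ 2 < p) (hz : z ^ 2 ≤ |D|)
    (hxz : D ∣ x - z) (hdvd : p * D ∣ x ^ 2 - D * y ^ 2 - p * z ^ 2) :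
    x ^ 2 - D * y ^ 2 - p * z ^ 2 = 0 ∨ x ^ 2 - D * y ^ 2 - p * z ^ 2 = -(p * D) := by
  obtain ⟨q, hq⟩ := hdvd
  suffices q = 0 ∨ q = -1 by
    rcases this with rfl | rfl
    · exact .inl (by simpa using hq)
    · exact .inr (by rw [hq]; ring)
  have hpz := mul_le_mul_of_nonneg_left hz hp.le
  have hpD : 0 < p * |D| := by positivity
  rcases lt_trichotomy D 0 with hneg | rfl | hpos
  · rw [abs_of_neg hneg] at hD hx hz hpz hpD
    have hlt : q < 2 := by nlinarith [sq_nonneg y, sq_nonneg z]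
    have hge : -1 ≤ q := by nlinarith [sq_nonneg x, sq_nonneg y]
    have hne : q ≠ 1 := by
      rintro rfl
      have hx0 : x = 0 := by nlinarith [sq_nonneg x, sq_nonneg y]
      have hy0 : y = 0 := by nlinarith [sq_nonneg x, sq_nonneg y]
      subst hx0 hy0
      have hz2 : z ^ 2 = -D := mul_left_cancel₀ hp.ne' (by linarith)
      obtain ⟨t, ht⟩ := hxz
      have hunit : D * (-t ^ 2) = 1 :=
        mul_left_cancel₀ hneg.ne (by linear_combination -hz2 - (z - D * t) * ht)
      rcases Int.eq_one_or_neg_one_of_mul_eq_one hunit with h | h <;> linarith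
    omega
  · simp at hD
  · rw [abs_of_pos hpos] at hx hpz hpD
    have hlt : q < 1 := by nlinarith [sq_nonneg y, sq_nonneg z]
    have hgt : -2 < q := by nlinarith [sq_nonneg x, sq_nonneg z]
    omega

theorem exists_zsqrtd_norm_eq_prime_mul_norm (hD : ¬ IsSquare D) (hD1 : 1 < D.natAbs)
    (hp : p.Prime) (h : p % (4 * D.natAbs) = 1) :
    ∃ a b : ℤ√D, a.norm = p * b.norm ∧ b.norm ≠ 0 := by
  have := Fact.mk hp
  have hnorm (a : ℤ√D) : a.norm = 0 ↔ a = 0 := Zsqrtd.norm_eq_zero (fun n hn ↦ hD ⟨n, hn⟩) a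
  have hdvd : 4 * D.natAbs ∣ p - 1 := by
    rw [← h]
    exact Nat.dvd_sub_mod p
  have hDp : D.natAbs < p := by
    have := Nat.le_of_dvd (Nat.sub_pos_of_lt hp.one_lt) hdvd
    omega
  have hD1p : D ∣ p - 1 := by
    rw [← Int.natAbs_dvd, ← Nat.cast_pred hp.pos, Int.natCast_dvd_natCast]
    exact (Nat.dvd_mul_left _ 4).trans hdvd
  obtain ⟨x, y, z, h0, hx, hy, hz, hxz, hpD⟩ := exists_prime_mul_dvd_sq_sub_mul_sq_sub
    (by rintro rfl; simp at hD1) hDp (isSquare_intCast_zmod_of_mod_eq_one h) hD1p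
  rcases sq_sub_mul_sq_sub_eq_zero_or_neg (mod_cast hp.pos)
    (by rwa [Int.abs_eq_natAbs, Nat.one_lt_cast]) hx hy hz hxz hpD with hQ | hQ
  · refine ⟨⟨x, y⟩, ⟨z, 0⟩, ?_, fun hz0 ↦ ?_⟩
    · simp only [Zsqrtd.norm_def]
      linear_combination hQ
    · obtain rfl : z = 0 := congrArg Zsqrtd.re ((hnorm _).1 hz0)
      have hxy : (⟨x, y⟩ : ℤ√D) = 0 :=
        (hnorm _).1 (by rw [Zsqrtd.norm_def]; linear_combination hQ)
      have hx0 : x = 0 := congrArg Zsqrtd.re hxy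
      have hy0 : y = 0 := congrArg Zsqrtd.im hxy
      simp [hx0, hy0] at h0
  · refine ⟨⟨x, y⟩, ⟨z, 1⟩, ?_, fun hz0 ↦ one_ne_zero (congrArg Zsqrtd.im ((hnorm _).1 hz0))⟩
    simp only [Zsqrtd.norm_def]
    linear_combination hQ

end QuadraticForms

section QuadraticCharacters

variable {G : Type*} [CommGroup G]

/-- The group of complex characters of `G` whose square is trivial, equivalently the characters of
`G / G ^ 2`. -/
abbrev quadraticCharacters (G : Type*) [CommGroup G] : Subgroup (G →* ℂˣ) :=
  (powMonoidHom 2).ker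

lemma quadraticCharacters_apply_sq (ψ : quadraticCharacters G) (g : G) : ψ.1 (g ^ 2) = 1 := by
  rw [map_pow]
  exact DFunLike.congr_fun (MonoidHom.mem_ker.1 ψ.2) g

lemma exists_quadraticCharacters_apply_ne_one [Finite G] {x : G} (hx : ¬ IsSquare x) :
    ∃ ψ : quadraticCharacters G, ψ.1 x ≠ 1 := by
  let H : Subgroup G := (powMonoidHom 2 : G →* G).range
  have hxH : (x : G ⧸ H) ≠ 1 := by
    rw [Ne, QuotientGroup.eq_one_iff]
    rintro ⟨y, hy⟩
    exact hx ⟨y, by rw [← hy, powMonoidHom_apply, sq]⟩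
  obtain ⟨φ, hφ⟩ := CommGroup.exists_apply_ne_one_of_hasEnoughRootsOfUnity (G ⧸ H) ℂ hxH
  refine ⟨⟨φ.comp (QuotientGroup.mk' H), MonoidHom.mem_ker.2 (MonoidHom.ext fun y ↦ ?_)⟩, hφ⟩
  have hy : ((y ^ 2 : G) : G ⧸ H) = 1 := (QuotientGroup.eq_one_iff _).2 ⟨y, rfl⟩
  calc φ (y : G ⧸ H) ^ 2 = φ ((y ^ 2 : G) : G ⧸ H) := by rw [← map_pow, ← QuotientGroup.mk_pow]
    _ = 1 := by rw [hy, map_one]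

lemma sum_quadraticCharacters_apply_eq_zero [Finite G] [Fintype (quadraticCharacters G)] {x : G}
    (hx : ¬ IsSquare x) : ∑ ψ : quadraticCharacters G, (ψ.1 x : ℂ) = 0 := by
  obtain ⟨ψ, hψ⟩ := exists_quadraticCharacters_apply_ne_one hx
  let eval : quadraticCharacters G →* ℂ :=
    (Units.coeHom ℂ).comp ((MonoidHom.eval x).comp (quadraticCharacters G).subtype)
  exact sum_hom_units_eq_zero eval fun h ↦ hψ (Units.ext (DFunLike.congr_fun h ψ))

/-- If `χ (g ^ 2) ≠ 1`, then the coset of `χ` modulo the quadratic characters does not contain the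
trivial character. -/
lemma exists_characters_ne_one_sum_eq_zero [Finite G] [Fintype (quadraticCharacters G)] {g : G}
    (hg : g ^ 2 ≠ 1) :
    ∃ η : quadraticCharacters G → G →* ℂ, (∀ ψ, η ψ ≠ 1) ∧
      ∀ x : G, ¬ IsSquare x → ∑ ψ, η ψ x = 0 := by
  obtain ⟨χ, hχ⟩ := CommGroup.exists_apply_ne_one_of_hasEnoughRootsOfUnity G ℂ hg
  refine ⟨fun ψ ↦ (Units.coeHom ℂ).comp (χ * ψ), fun ψ h ↦ hχ ?_, fun x hx ↦ ?_⟩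
  · have h1 : (χ * ψ.1) (g ^ 2) = 1 := Units.ext (DFunLike.congr_fun h (g ^ 2))
    rwa [MonoidHom.mul_apply, quadraticCharacters_apply_sq, mul_one] at h1
  · calc ∑ ψ : quadraticCharacters G, (Units.coeHom ℂ).comp (χ * ψ.1) x
        = χ x * ∑ ψ : quadraticCharacters G, (ψ.1 x : ℂ) := by
          rw [mul_sum]
          exact sum_congr rfl fun ψ _ ↦ Units.val_mul _ _
      _ = 0 := by rw [sum_quadraticCharacters_apply_eq_zero hx, mul_zero]

end QuadraticCharacters

section QuadraticFields

open Module

variable {K : Type*} [Field K] [NumberField K]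

lemma exists_algEquiv_ne_one_norm_eq_mul (hdeg : finrank ℚ K = 2) :
    ∃ τ : 𝓞 K ≃ₐ[ℤ] 𝓞 K, τ ≠ 1 ∧ ∀ x, (Algebra.norm ℤ x : 𝓞 K) = x * τ x := by
  classical
  have : Algebra.IsQuadraticExtension ℚ K := ⟨hdeg⟩
  have hcard : Fintype.card Gal(K/ℚ) = 2 := by
    rw [← Nat.card_eq_fintype_card, IsGalois.card_aut_eq_finrank, hdeg]
  have : Nontrivial Gal(K/ℚ) := Fintype.one_lt_card_iff_nontrivial.1 (by omega)
  obtain ⟨σ, hσ⟩ := exists_ne (1 : Gal(K/ℚ))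
  have huniv : ({1, σ} : Finset Gal(K/ℚ)) = univ := by
    rw [← card_eq_iff_eq_univ, card_pair hσ.symm, hcard]
  refine ⟨galRestrict ℤ ℚ K (𝓞 K) σ, (map_ne_one_iff _ (MulEquiv.injective _)).2 hσ, fun x ↦ ?_⟩
  apply RingOfIntegers.ext
  have hnorm := Algebra.norm_eq_prod_automorphisms ℚ (x : K)
  rw [← huniv, prod_pair hσ.symm, ← Algebra.coe_norm_int] at hnorm
  simpa [algebraMap_galRestrict_apply] using hnorm

lemma exists_ne_zero_algEquiv_apply_eq_neg (hdeg : finrank ℚ K = 2) :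
    ∃ (τ : 𝓞 K ≃ₐ[ℤ] 𝓞 K) (β : 𝓞 K), (∀ x, (Algebra.norm ℤ x : 𝓞 K) = x * τ x) ∧
      β ≠ 0 ∧ τ β = -β := by
  obtain ⟨τ, hτ1, hτ⟩ := exists_algEquiv_ne_one_norm_eq_mul hdeg
  obtain ⟨α, hα⟩ : ∃ α, τ α ≠ α := by
    by_contra! h
    exact hτ1 (AlgEquiv.ext h)
  have hττ : τ (τ α) = α := by
    have hα0 : τ α ≠ 0 := fun h ↦ hα (by rw [h, eq_comm, ← map_eq_zero_iff τ τ.injective, h])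
    refine mul_left_cancel₀ hα0 ?_
    rw [← hτ, Algebra.norm_eq_of_algEquiv, hτ, mul_comm]
  exact ⟨τ, α - τ α, hτ, sub_ne_zero.2 hα.symm, by rw [map_sub, hττ, neg_sub]⟩

theorem exists_zsqrtd_ringHom_norm_eq (hdeg : finrank ℚ K = 2) :
    ∃ D : ℤ, ¬ IsSquare D ∧ 1 < D.natAbs ∧
      ∃ f : ℤ√D →+* 𝓞 K, ∀ a, Algebra.norm ℤ (f a) = a.norm := by
  obtain ⟨τ, β, hτ, hβ0, hβ⟩ := exists_ne_zero_algEquiv_apply_eq_neg hdeg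
  have hnormβ : (Algebra.norm ℤ β : 𝓞 K) = -β ^ 2 := by rw [hτ, hβ]; ring
  -- Doubling `β` ensures `1 < |D|`.
  let γ : {r : 𝓞 K // r * r = ((-(4 * Algebra.norm ℤ β) : ℤ) : 𝓞 K)} :=
    ⟨2 * β, by push_cast; rw [hnormβ]; ring⟩
  have hγ : τ γ = -γ := by simp [γ, hβ, map_ofNat τ 2]
  have hγ0 : (γ : 𝓞 K) ≠ 0 := mul_ne_zero two_ne_zero hβ0
  refine ⟨_, ?_, ?_, Zsqrtd.lift γ, fun a ↦ ?_⟩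
  · rintro ⟨k, hk⟩
    have hγk : (γ : 𝓞 K) ^ 2 = (k : 𝓞 K) ^ 2 := by rw [sq, γ.2, hk]; push_cast; ring
    have hfix : τ γ = γ := by
      rcases sq_eq_sq_iff_eq_or_eq_neg.1 hγk with h | h <;> simp [h]
    exact hγ0 (self_eq_neg.1 (hfix.symm.trans hγ))
  · have : Algebra.norm ℤ β ≠ 0 := Algebra.norm_ne_zero_iff.2 hβ0
    omega
  · have hcast : ((Algebra.norm ℤ (Zsqrtd.lift γ a) : ℤ) : 𝓞 K) = (a.norm : ℤ) := by
      rw [hτ, Zsqrtd.lift_apply_apply, Zsqrtd.norm_def, map_add, map_mul, map_intCast, map_intCast,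
        hγ, Int.cast_sub, Int.cast_mul, Int.cast_mul, Int.cast_mul]
      linear_combination (-(a.im : 𝓞 K) ^ 2) * γ.2
    exact_mod_cast hcast

end QuadraticFields

section NormImage

open Ideal IsDedekindDomain Module

variable {K : Type*} [Field K] [NumberField K]

/-- The set of absolute norms of the nonzero integers of `K` is closed under exact division in
`ℕ`. -/
def NormImageClosedUnderDivision (K : Type*) [Field K] [NumberField K] : Prop :=
  ∀ a b : 𝓞 K, a ≠ 0 → b ≠ 0 → (Algebra.norm ℤ a).natAbs ∣ (Algebra.norm ℤ b).natAbs →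
    ∃ c : 𝓞 K, (Algebra.norm ℤ a).natAbs * (Algebra.norm ℤ c).natAbs = (Algebra.norm ℤ b).natAbs

lemma NormImageClosedUnderDivision.exists_natAbs_norm_eq (hdiv : NormImageClosedUnderDivision K)
    {a b : 𝓞 K} {n : ℕ} (ha : a ≠ 0) (hb : b ≠ 0)
    (h : (Algebra.norm ℤ b).natAbs = (Algebra.norm ℤ a).natAbs * n) :
    ∃ c : 𝓞 K, (Algebra.norm ℤ c).natAbs = n := by
  obtain ⟨c, hc⟩ := hdiv a b ha hb ⟨n, h⟩
  have ha0 : (Algebra.norm ℤ a).natAbs ≠ 0 := Int.natAbs_ne_zero.2 (Algebra.norm_ne_zero_iff.2 ha)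
  exact ⟨c, mul_left_cancel₀ ha0 (hc.trans h)⟩

theorem NormImageClosedUnderDivision.exists_modulus_forall_prime_exists_natAbs_norm_eq
    (hdiv : NormImageClosedUnderDivision K) (hdeg : finrank ℚ K = 2) :
    ∃ q : ℕ, q ≠ 0 ∧ ∀ p : ℕ, p.Prime → (p : ZMod q) = 1 →
      ∃ c : 𝓞 K, (Algebra.norm ℤ c).natAbs = p := by
  obtain ⟨D, hD, hD1, f, hf⟩ := exists_zsqrtd_ringHom_norm_eq hdeg
  refine ⟨4 * D.natAbs, by omega, fun p hp h ↦ ?_⟩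
  have hmod : p % (4 * D.natAbs) = 1 := by
    have hmod' := (ZMod.natCast_eq_natCast_iff' p 1 _).1 (by rw [h, Nat.cast_one])
    rwa [Nat.mod_eq_of_lt (by omega : 1 < 4 * D.natAbs)] at hmod'
  obtain ⟨a, b, hab, hb⟩ := exists_zsqrtd_norm_eq_prime_mul_norm hD hD1 hp hmod
  have ha : a.norm ≠ 0 := by
    rw [hab]
    exact mul_ne_zero (mod_cast hp.ne_zero) hb
  refine hdiv.exists_natAbs_norm_eq (a := f b) (b := f a) ?_ ?_ ?_
  · rwa [← Algebra.norm_ne_zero_iff (R := ℤ), hf]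
  · rwa [← Algebra.norm_ne_zero_iff (R := ℤ), hf]
  · rw [hf, hf, hab, Int.natAbs_mul, Int.natAbs_natCast, mul_comm]

lemma isPrincipal_of_mem_of_natAbs_norm_eq {I : Ideal (𝓞 K)} (hI : I ≠ ⊥) {c : 𝓞 K} (hc : c ∈ I)
    (h : (Algebra.norm ℤ c).natAbs = absNorm I) : I.IsPrincipal := by
  obtain ⟨J, hJ⟩ : I ∣ span {c} := dvd_span_singleton.2 hc
  have hIJ : absNorm I * absNorm J = absNorm I * 1 := by
    rw [← map_mul, ← hJ, absNorm_span_singleton, h, mul_one]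
  have hJ1 : J = ⊤ := absNorm_eq_one_iff.1 (mul_left_cancel₀ (mt absNorm_eq_zero_iff.1 hI) hIJ)
  exact ⟨c, by rw [submodule_span_eq, hJ, hJ1, mul_top]⟩

/-- The product of `c` and its conjugate lies in `P`, so one of the two generates `P`. -/
lemma isPrincipal_of_isPrime_of_natAbs_norm_eq (hdeg : finrank ℚ K = 2) {P : Ideal (𝓞 K)}
    (hP : P.IsPrime) (hP0 : P ≠ ⊥) {c : 𝓞 K} (hc : (Algebra.norm ℤ c).natAbs = absNorm P) :
    P.IsPrincipal := by
  obtain ⟨τ, -, hτ⟩ := exists_algEquiv_ne_one_norm_eq_mul hdeg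
  have hmem : c * τ c ∈ P := by
    rw [← hτ]
    rcases Int.natAbs_eq (Algebra.norm ℤ c) with h | h <;> rw [h, hc]
    · simpa using absNorm_mem P
    · simpa using absNorm_mem P
  rcases hP.mem_or_mem hmem with h | h
  · exact isPrincipal_of_mem_of_natAbs_norm_eq hP0 h hc
  · exact isPrincipal_of_mem_of_natAbs_norm_eq hP0 h (by rw [Algebra.norm_eq_of_algEquiv, hc])

lemma exists_natAbs_norm_eq_sq_mul_absNorm {I : (Ideal (𝓞 K))⁰}
    (hI : IsSquare (ClassGroup.mk0 I)) :
    ∃ (n : ℕ) (α : 𝓞 K), n ≠ 0 ∧ (Algebra.norm ℤ α).natAbs = n ^ 2 * absNorm (I : Ideal (𝓞 K)) := by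
  obtain ⟨g, hg⟩ := hI
  obtain ⟨J, hJ⟩ := ClassGroup.mk0_surjective g⁻¹
  have hone : ClassGroup.mk0 (J * J * I) = 1 := by
    rw [map_mul, map_mul, hg, hJ, ← mul_inv, inv_mul_cancel]
  obtain ⟨α, hα⟩ := (ClassGroup.mk0_eq_one_iff (J * J * I).2).1 hone
  refine ⟨absNorm (J : Ideal (𝓞 K)), α,
    mt absNorm_eq_zero_iff.1 (nonZeroDivisors.coe_ne_zero J), ?_⟩
  rw [← absNorm_span_singleton, ← submodule_span_eq, ← hα, Submonoid.coe_mul, Submonoid.coe_mul,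
    map_mul, map_mul, sq]

theorem NormImageClosedUnderDivision.mk0_eq_one_of_isSquare
    (hdiv : NormImageClosedUnderDivision K) (hdeg : finrank ℚ K = 2) {P : (Ideal (𝓞 K))⁰}
    (hP : (P : Ideal (𝓞 K)).IsPrime) (hsq : IsSquare (ClassGroup.mk0 P)) :
    ClassGroup.mk0 P = 1 := by
  obtain ⟨n, α, hn, hα⟩ := exists_natAbs_norm_eq_sq_mul_absNorm hsq
  have hP0 : (P : Ideal (𝓞 K)) ≠ ⊥ := nonZeroDivisors.coe_ne_zero P
  have hnorm : (Algebra.norm ℤ (n : 𝓞 K)).natAbs = n ^ 2 := by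
    rw [← absNorm_span_singleton, absNorm_span_natCast, RingOfIntegers.rank, hdeg]
  have hα0 : Algebra.norm ℤ α ≠ 0 := Int.natAbs_ne_zero.1 <| by
    rw [hα]
    exact mul_ne_zero (pow_ne_zero 2 hn) (mt absNorm_eq_zero_iff.1 hP0)
  obtain ⟨c, hc⟩ := hdiv.exists_natAbs_norm_eq (a := n) (mod_cast hn)
    (Algebra.norm_ne_zero_iff.1 hα0) (by rw [hα, hnorm])
  exact (ClassGroup.mk0_eq_one_iff P.2).2 (isPrincipal_of_isPrime_of_natAbs_norm_eq hdeg hP hP0 hc)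

lemma exists_mk0_primeIdeal_eq_one_of_natAbs_norm_eq {p : ℕ} (hp : p.Prime) {c : 𝓞 K}
    (hc : (Algebra.norm ℤ c).natAbs = p) :
    ∃ P : HeightOneSpectrum (𝓞 K), ClassGroup.mk0 (primeIdeal P) = 1 ∧ absNorm P.asIdeal = p := by
  have hnorm : absNorm (span {c}) = p := by rw [absNorm_span_singleton, hc]
  have hprime : (span {c}).IsPrime := isPrime_of_irreducible_absNorm (hnorm.symm ▸ hp)
  refine ⟨⟨span {c}, hprime, fun h ↦ hp.ne_zero ?_⟩, ?_, hnorm⟩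
  · rw [← hnorm, h, absNorm_bot]
  · exact (ClassGroup.mk0_eq_one_iff _).2 ⟨c, rfl⟩

theorem exists_lt_sum_absNorm_inv {q : ℕ} (hq : q ≠ 0)
    (h : ∀ p : ℕ, p.Prime → (p : ZMod q) = 1 → ∃ c : 𝓞 K, (Algebra.norm ℤ c).natAbs = p) (M : ℝ) :
    ∃ S : Finset (HeightOneSpectrum (𝓞 K)), (∀ P ∈ S, ClassGroup.mk0 (primeIdeal P) = 1) ∧
      M < ∑ P ∈ S, (absNorm P.asIdeal : ℝ)⁻¹ := by
  classical
  have : NeZero q := ⟨hq⟩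
  by_contra! hM
  refine not_summable_one_div_primes_in_residueClass (q := q) isUnit_one
    (summable_of_sum_le (c := M) (fun n ↦ ?_) fun u ↦ ?_)
  · dsimp only
    split_ifs <;> positivity
  let v : Finset ℕ := {p ∈ u | p.Prime ∧ (p : ZMod q) = 1}
  choose P hP hPnorm using fun p : v ↦
    have hp := (mem_filter.1 p.2).2
    (h p hp.1 hp.2).elim fun _ ↦ exists_mk0_primeIdeal_eq_one_of_natAbs_norm_eq hp.1
  have hinj : Function.Injective P := fun a b hab ↦ Subtype.ext (by rw [← hPnorm, hab, hPnorm])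
  calc ∑ p ∈ u, (if p.Prime ∧ (p : ZMod q) = 1 then (1 : ℝ) / p else 0)
      = ∑ p : v, (absNorm (P p).asIdeal : ℝ)⁻¹ := by
        rw [← sum_filter, ← sum_coe_sort]
        exact sum_congr rfl fun p _ ↦ by rw [hPnorm, one_div]
    _ = ∑ Q ∈ univ.image P, (absNorm Q.asIdeal : ℝ)⁻¹ := by rw [sum_image hinj.injOn]
    _ ≤ M := hM _ fun Q hQ ↦ by
        obtain ⟨p, -, rfl⟩ := mem_image.1 hQ
        exact hP p

theorem stmt_13_general (hdeg : finrank ℚ K = 2) (hdiv : NormImageClosedUnderDivision K)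
    (g : ClassGroup (𝓞 K)) : g ^ 2 = 1 := by
  by_contra hg
  have := Fintype.ofFinite (quadraticCharacters (ClassGroup (𝓞 K)))
  obtain ⟨η, hη, hsum⟩ := exists_characters_ne_one_sum_eq_zero hg
  choose B hB using fun ψ ↦ exists_norm_tsum_lSeriesTerm_le hdeg (hη ψ)
  obtain ⟨M, hM⟩ := exists_sum_absNorm_inv_le hB fun P ↦ by
    by_cases hP : IsSquare (ClassGroup.mk0 (primeIdeal P))
    · rw [hdiv.mk0_eq_one_of_isSquare hdeg P.isPrime hP]
      simp
    · rw [hsum _ hP, Complex.zero_re]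
  obtain ⟨q, hq, hprime⟩ := hdiv.exists_modulus_forall_prime_exists_natAbs_norm_eq hdeg
  obtain ⟨S, hS, hlt⟩ := exists_lt_sum_absNorm_inv hq hprime M
  exact (hM S hS).not_gt hlt

end NormImage

/-- let `K` be a quadratic number field. If the image of the
absolute norm `N` is closed under division, then the class group has no
element of odd order greater than 1. -/
theorem stmt_13 (K : Type*) [Field K] [NumberField K]
    (hdeg : Module.finrank ℚ K = 2)
    (hdiv : ∀ a b : 𝓞 K, a ≠ 0 → b ≠ 0 →
      (Algebra.norm ℤ a).natAbs ∣ (Algebra.norm ℤ b).natAbs →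
      ∃ c : 𝓞 K,
        (Algebra.norm ℤ a).natAbs * (Algebra.norm ℤ c).natAbs =
          (Algebra.norm ℤ b).natAbs) :
    ∀ g : ClassGroup (𝓞 K), Odd (orderOf g) → g = 1 := by
  intro g hg
  have hdvd : orderOf g ∣ 2 := orderOf_dvd_of_pow_eq_one (stmt_13_general hdeg hdiv g)
  exact orderOf_eq_one_iff.1 (hg.coprime_two_right.eq_one_of_dvd hdvd)
end

section
/- Let K be a number field with [K : ℚ] = 2 and ring of integers 𝓞 K, with absolute norm N(a) = |Norm_ℤ(a)| ∈ ℕ. If the image of N is closed under division (for all nonzero a, b ∈ 𝓞 K with N(a) ∣ N(b) there exists c ∈ 𝓞 K with N(a) * N(c) = N(b)), then ClassGroup (𝓞 K) has no element of order four: no g ∈ ClassGroup (𝓞 K) has orderOf g = 4. -/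
open NumberField
open scoped NumberTheorySymbols

/-! Let `I ^ 4 = (γ)`; the aim is that `I ^ 2` is principal.

If `γ` has norm `N(I) ^ 4`, Hilbert 90 applied to `γ / N(I) ^ 2` gives an ideal `R`, equal to its
conjugate and without rational integer divisors, such that `I ^ 2 * R` is principal. Its generator
has norm `± N(I) ^ 2 * N(R)`, so by closure under division `N(R)` is the norm of some `c`. But `R`
is the only ideal of its norm, hence `R = (c)` and `I ^ 2` is principal.

If `γ` has norm `- N(I) ^ 4`, a unit of norm `-1` reduces to the first case. Without such a unit,
`K = ℚ(√d)` for some `d > 0` with no prime divisor congruent to `3` modulo `4`, and the fundamental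
solution of `x ^ 2 - d * y ^ 2 = 1` yields a decomposition `d = b * b'` of the second kind. Genus
theory then says that `J(N(A) | b) = 1` for every ideal `A` of norm prime to `b` with principal
square. On the other hand, Dirichlet's theorem provides a prime `p` which splits in `K` and has
`J(p | b) = -1`; let `P` be a prime ideal above it. A suitable `f` has `(f) = P ^ 2 * Q` where all
divisors of `Q` have trivial symbol modulo `b`. By closure under division `N(Q)` is the norm of an
element, which makes `(P * A) ^ 2` principal for some divisor `A` of `Q`, although
`J(N(P * A) | b) = -1`. -/

section JacobiSymbol

theorem mod_four_eq_one_of_isSquare_neg_one {n : ℕ} (hn : Odd n) (h : IsSquare (-1 : ZMod n)) :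
    n % 4 = 1 := by
  obtain ⟨x, y, rfl⟩ := Nat.eq_sq_add_sq_of_isSquare_mod_neg_one h
  have mod_four (z : ℕ) : z ^ 2 % 4 = 0 ∨ z ^ 2 % 4 = 1 := by
    rcases Nat.even_or_odd' z with ⟨k, rfl | rfl⟩ <;> ring_nf <;> omega
  have := Nat.odd_iff.1 hn
  have := mod_four x
  have := mod_four y
  omega

theorem mod_four_eq_one_or_two_of_isSquare_neg_one {n : ℕ} (hn : Squarefree n)
    (h : IsSquare (-1 : ZMod n)) : n % 4 = 1 ∨ n % 4 = 2 := by
  have not_four_dvd : ¬ 2 * 2 ∣ n := fun h4 => by simpa using hn 2 h4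
  rcases Nat.even_or_odd n with heven | hodd
  · have := Nat.even_iff.1 heven
    omega
  · exact .inl (mod_four_eq_one_of_isSquare_neg_one hodd h)

theorem jacobiSym_congr {a c : ℤ} {n : ℕ} (h : (n : ℤ) ∣ a - c) : J(a | n) = J(c | n) :=
  jacobiSym.mod_left' (Int.modEq_iff_dvd.2 h).symm

theorem jacobiSym_units_mul {n : ℕ} (hn : n % 4 = 1) (w : ℤˣ) (a : ℤ) :
    J(w * a | n) = J(a | n) := by
  rcases Int.units_eq_one_or w with rfl | rfl
  · simp
  · have hodd : Odd n := Nat.odd_iff.2 (by omega)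
    rw [jacobiSym.mul_left, Units.val_neg, Units.val_one, jacobiSym.at_neg_one hodd,
      ZMod.χ₄_nat_one_mod_four hn, one_mul]

theorem jacobiSym_eq_of_dvd_sub_mul_sq {a e x : ℤ} {n : ℕ} (ha : IsCoprime a n)
    (h : (n : ℤ) ∣ a - e * x ^ 2) : J(a | n) = J(e | n) := by
  have hmul : J(a | n) = J(e | n) * J(x | n) ^ 2 := by
    rw [jacobiSym_congr h, jacobiSym.mul_left, jacobiSym.pow_left]
  have ha0 : J(a | n) ≠ 0 := jacobiSym.ne_zero (Int.isCoprime_iff_gcd_eq_one.1 ha)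
  rcases jacobiSym.trichotomy x n with hx | hx | hx <;> simp_all

theorem jacobiSym_eq_one_of_dvd_units_sub_mul_sq {n : ℕ} (hn : n % 4 = 1) {e x : ℤ} {w : ℤˣ}
    (h : (n : ℤ) ∣ w - e * x ^ 2) : J(e | n) = 1 := by
  have hw : IsCoprime (w : ℤ) n := isCoprime_one_left.of_isCoprime_of_dvd_left w.isUnit.dvd
  rw [← jacobiSym_eq_of_dvd_sub_mul_sq hw h, ← mul_one (w : ℤ), jacobiSym_units_mul hn,
    jacobiSym.one_left]

theorem isCoprime_of_jacobiSym_ne_zero {a : ℤ} {n : ℕ} (hn : n ≠ 0) (h : J(a | n) ≠ 0) :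
    IsCoprime a n := by
  contrapose! h
  exact jacobiSym.eq_zero_iff.2 ⟨hn, mt Int.isCoprime_iff_gcd_eq_one.2 h⟩

theorem exists_isCoprime_dvd_sq_sub_of_jacobiSym_eq_one {p : ℕ} (hp : p.Prime) (hp2 : p ≠ 2)
    {a : ℤ} (h : J(a | p) = 1) : ∃ k : ℤ, IsCoprime (2 * k) p ∧ (p : ℤ) ∣ k ^ 2 - a := by
  have := Fact.mk hp
  obtain ⟨z, hz⟩ := ZMod.isSquare_of_jacobiSym_eq_one h
  obtain ⟨k, rfl⟩ := ZMod.intCast_surjective z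
  have hk : (p : ℤ) ∣ k ^ 2 - a := by
    rw [← ZMod.intCast_zmod_eq_zero_iff_dvd]
    push_cast
    rw [hz, sq, sub_self]
  refine ⟨k, IsCoprime.mul_left ?_ ?_, hk⟩
  · exact_mod_cast Nat.isCoprime_iff_coprime.2 ((Nat.coprime_primes hp Nat.prime_two).2 hp2).symm
  · obtain ⟨t, ht⟩ := hk
    have ha : IsCoprime a p := isCoprime_of_jacobiSym_ne_zero hp.ne_zero (by rw [h]; decide)
    rw [← IsCoprime.pow_left_iff two_pos, sub_eq_iff_eq_add'.1 ht]
    exact ha.add_mul_left_left t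

theorem isSquare_neg_one_of_mul_sq_eq_sq_add_sq {d v x y : ℕ} (hd : Squarefree d) (hv : v ≠ 0)
    (h : d * v ^ 2 = x ^ 2 + y ^ 2) : IsSquare (-1 : ZMod d) := by
  rw [ZMod.isSquare_neg_one_iff_forall_mem_primeFactors_mod_four_ne_three hd]
  intro q hq hq4
  obtain ⟨hqp, hqd, hd0⟩ := Nat.mem_primeFactors.1 hq
  have := Fact.mk hqp
  have hdv : d * v ^ 2 ≠ 0 := mul_ne_zero hd0 (pow_ne_zero 2 hv)
  have heven := Nat.eq_sq_add_sq_iff.1 ⟨x, y, h⟩ q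
    (Nat.mem_primeFactors.2 ⟨hqp, hqd.mul_right _, hdv⟩) hq4
  have hval : padicValNat q d = 1 := by
    rw [← Nat.factorization_def d hqp]
    exact le_antisymm ((Nat.squarefree_iff_factorization_le_one hd0).1 hd q)
      (hqp.factorization_pos_of_dvd hd0 hqd)
  rw [padicValNat.mul hd0 (pow_ne_zero 2 hv), padicValNat.pow, hval] at heven
  exact Nat.not_even_iff_odd.2 (Odd.add_even odd_one (even_two_mul _)) heven

end JacobiSymbol

section Pell

theorem exists_mul_add_one_eq_mul_sq {d x y : ℤ} (hd : d % 4 = 1 ∨ d % 4 = 2)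
    (h : x ^ 2 - d * y ^ 2 = 1) : ∃ s z, x = 2 * s + 1 ∧ s * (s + 1) = d * z ^ 2 := by
  have hy : Even y := by
    by_contra hy
    have hy4 : y ^ 2 % 4 = 1 := Int.sq_mod_four_eq_one_of_odd (Int.not_even_iff_odd.1 hy)
    have hdy : d * y ^ 2 % 4 = d % 4 := by rw [Int.mul_emod, hy4, mul_one, Int.emod_emod]
    have hx4 : x ^ 2 % 4 = 0 ∨ x ^ 2 % 4 = 1 := by
      rcases Int.even_or_odd x with ⟨k, rfl⟩ | hx
      · exact .inl (by ring_nf; omega)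
      · exact .inr (Int.sq_mod_four_eq_one_of_odd hx)
    omega
  obtain ⟨z, rfl⟩ := hy.two_dvd
  have hx : Odd x := by
    have : Odd (x ^ 2) := ⟨2 * (d * z ^ 2), by linear_combination h⟩
    exact (Int.odd_pow' two_ne_zero).1 this
  obtain ⟨s, rfl⟩ := hx
  exact ⟨s, z, rfl, by linarith⟩

theorem exists_eq_mul_sq_of_mul_eq_mul_sq {m n d z : ℕ} (hd : d ≠ 0) (hmn : m.Coprime n)
    (h : m * n = d * z ^ 2) :
    ∃ b b' u v, b * b' = d ∧ m = b * u ^ 2 ∧ n = b' * v ^ 2 := by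
  have hgcd : d.gcd m * d.gcd n = d := by
    rw [← hmn.gcd_mul]
    exact Nat.gcd_eq_left ⟨_, h⟩
  obtain ⟨k, hk⟩ := Nat.gcd_dvd_right d m
  obtain ⟨l, hl⟩ := Nat.gcd_dvd_right d n
  have hkl : k * l = z ^ 2 := by
    refine Nat.eq_of_mul_eq_mul_left (Nat.pos_of_ne_zero hd) ?_
    calc d * (k * l) = d.gcd m * k * (d.gcd n * l) := by rw [mul_mul_mul_comm, hgcd]
      _ = d * z ^ 2 := by rw [← hk, ← hl, h]
  have hcop : k.Coprime l :=
    (hmn.coprime_dvd_left (Dvd.intro_left _ hk.symm)).coprime_dvd_right (Dvd.intro_left _ hl.symm)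
  obtain ⟨u, hu⟩ := exists_eq_pow_of_mul_eq_pow (Nat.isUnit_iff.2 hcop) hkl
  obtain ⟨v, hv⟩ := exists_eq_pow_of_mul_eq_pow (Nat.isUnit_iff.2 hcop.symm)
    ((mul_comm l k).trans hkl)
  exact ⟨d.gcd m, d.gcd n, u, v, hgcd, hu ▸ hk, hv ▸ hl⟩

theorem exists_mul_sq_add_one_eq_mul_sq {d : ℕ} (hd : d % 4 = 1 ∨ d % 4 = 2) (hdsq : ¬ IsSquare d)
    (hneg : ∀ u v : ℤ, u ^ 2 - d * v ^ 2 ≠ -1) :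
    ∃ b b' u v : ℕ, b * b' = d ∧ b ≠ 1 ∧ b' ≠ 1 ∧ b * u ^ 2 + 1 = b' * v ^ 2 := by
  obtain ⟨a, ha⟩ := Pell.IsFundamental.exists_of_not_isSquare (d := (d : ℤ)) (by omega)
    (mt Int.isSquare_natCast_iff.1 hdsq)
  obtain ⟨s, z, hs, hsz⟩ := exists_mul_add_one_eq_mul_sq (by omega) a.prop
  have one_lt_x := ha.1
  lift s to ℕ using by omega
  obtain ⟨b, b', u, v, hbb', hu, hv⟩ :=
    exists_eq_mul_sq_of_mul_eq_mul_sq (z := z.natAbs) (m := s) (n := s + 1) (d := d) (by omega)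
      (by simp) (by zify; rw [sq_abs]; exact hsz)
  refine ⟨b, b', u, v, hbb', ?_, ?_, by rw [← hu, hv]⟩
  · rintro rfl
    apply hneg u v
    zify at hu hv hbb'
    linear_combination hv - hu + v ^ 2 * hbb'
  · rintro rfl
    have hsol : (v : ℤ) ^ 2 - d * (u : ℤ) ^ 2 = 1 := by
      zify at hu hv hbb'
      linear_combination u ^ 2 * hbb' + hu - hv
    have one_lt_v : 1 < v := by nlinarith
    have x_le_v := ha.x_le_x (a := Pell.Solution₁.mk v u hsol) (by simpa using one_lt_v)
    rw [Pell.Solution₁.x_mk] at x_le_v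
    nlinarith

end Pell

section Redei

/-- A decomposition of the second kind of `b * b'`, in the sense of Rédei, with odd left factor:
every divisor of one factor has trivial symbol modulo the other one. As `b'` may be even, for the
divisors `s` of `b` this is expressed by the reciprocal symbol `J(b' | s)`. The squareness of `-1`
says that no prime divisor of `b * b'` is `3` modulo `4`. -/
structure IsRedeiDecomposition (b b' : ℕ) : Prop where
  odd_left : Odd b
  one_lt_left : 1 < b
  one_lt_right : 1 < b'
  squarefree : Squarefree (b * b')
  isSquare_neg_one : IsSquare (-1 : ZMod (b * b'))
  jacobiSym_left : ∀ r, r ∣ b' → J(r | b) = 1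
  jacobiSym_right : ∀ s, s ∣ b → J(b' | s) = 1

theorem isRedeiDecomposition_of_mul_sq_sub_mul_sq_eq {b b' : ℕ} (hb : Odd b) (hb1 : b ≠ 1)
    (hb'1 : b' ≠ 1) (hsq : Squarefree (b * b')) (hneg : IsSquare (-1 : ZMod (b * b')))
    {u v : ℤ} {w : ℤˣ} (h : b * u ^ 2 - b' * v ^ 2 = w) : IsRedeiDecomposition b b' := by
  have mod_four {k : ℕ} (hk : k ∣ b * b') (hodd : Odd k) : k % 4 = 1 :=
    mod_four_eq_one_of_isSquare_neg_one hodd (ZMod.isSquare_neg_one_of_dvd hk hneg)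
  have hb4 : b % 4 = 1 := mod_four (dvd_mul_right b b') hb
  have of_odd {r : ℕ} (hr : r ∣ b') (hodd : Odd r) : J(r | b) = 1 := by
    have hr4 : r % 4 = 1 := mod_four (hr.mul_left b) hodd
    rw [jacobiSym.quadratic_reciprocity_one_mod_four hr4 hb]
    obtain ⟨l, rfl⟩ := hr
    push_cast at h
    exact jacobiSym_eq_one_of_dvd_units_sub_mul_sq hr4 (w := w) (x := u)
      ⟨-l * v ^ 2, by linear_combination -h⟩
  have right {s : ℕ} (hs : s ∣ b) : J(b' | s) = 1 := by
    have hs4 : s % 4 = 1 := mod_four (hs.mul_right b') (hb.of_dvd_nat hs)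
    obtain ⟨t, rfl⟩ := hs
    push_cast at h
    exact jacobiSym_eq_one_of_dvd_units_sub_mul_sq hs4 (w := -w) (x := v)
      ⟨-t * u ^ 2, by push_cast; linear_combination h⟩
  refine ⟨hb, ?_, ?_, hsq, hneg, fun r hr => ?_, fun s => right⟩
  · have := hb.pos; omega
  · have : b' ≠ 0 := by rintro rfl; simp at hsq
    omega
  obtain ⟨l, rfl⟩ := hr
  rcases Nat.even_or_odd r with heven | hodd
  · have hl : Odd l := by
      by_contra hl
      have : 2 * 2 ∣ b * (r * l) :=
        (mul_dvd_mul heven.two_dvd (Nat.not_odd_iff_even.1 hl).two_dvd).mul_left b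
      simpa using hsq 2 this
    have hmul := right dvd_rfl
    rwa [Nat.cast_mul, jacobiSym.mul_left, of_odd (dvd_mul_left l r) hl, mul_one] at hmul
  · exact of_odd (dvd_mul_right r l) hodd

theorem exists_isRedeiDecomposition {d : ℕ} (hd : d ≠ 1) (hsq : Squarefree d)
    (hneg : IsSquare (-1 : ZMod d)) (hpell : ∀ u v : ℤ, u ^ 2 - d * v ^ 2 ≠ -1) :
    ∃ b b', b * b' = d ∧ IsRedeiDecomposition b b' := by
  have hd4 := mod_four_eq_one_or_two_of_isSquare_neg_one hsq hneg
  have hdsq : ¬ IsSquare d := by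
    rintro ⟨k, rfl⟩
    simp [Nat.isUnit_iff.1 (hsq k dvd_rfl)] at hd
  obtain ⟨b, b', u, v, rfl, hb, hb', h⟩ := exists_mul_sq_add_one_eq_mul_sq hd4 hdsq hpell
  zify at h
  by_cases hodd : Odd b
  · exact ⟨b, b', rfl, isRedeiDecomposition_of_mul_sq_sub_mul_sq_eq hodd hb hb' hsq hneg
      (u := u) (v := v) (w := -1) (by push_cast; linear_combination h)⟩
  · have hodd' : Odd b' := by
      by_contra hodd'
      rw [Nat.not_odd_iff_even] at hodd hodd'
      have := mul_dvd_mul hodd.two_dvd hodd'.two_dvd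
      omega
    exact ⟨b', b, mul_comm b' b, isRedeiDecomposition_of_mul_sq_sub_mul_sq_eq hodd' hb' hb
      (mul_comm b b' ▸ hsq) (mul_comm b b' ▸ hneg) (u := v) (v := u) (w := 1)
      (by push_cast; linear_combination -h)⟩

theorem exists_isCoprime_mul_sq_eq {d k n x y : ℤ} (hd : Squarefree d) (hk : k ≠ 0)
    (h : n * k ^ 2 = x ^ 2 - d * y ^ 2) :
    ∃ k' x' y' : ℤ, IsCoprime k' d ∧ n * k' ^ 2 = x' ^ 2 - d * y' ^ 2 := by
  obtain ⟨g, k, y, hg, hky, rfl, rfl⟩ := Int.exists_gcd_one' (Int.gcd_pos_of_ne_zero_left y hk)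
  have hg0 : (g : ℤ) ≠ 0 := by omega
  obtain ⟨x, rfl⟩ : (g : ℤ) ∣ x :=
    (Int.pow_dvd_pow_iff two_ne_zero).1 ⟨n * k ^ 2 + d * y ^ 2, by linear_combination -h⟩
  have h' : n * k ^ 2 = x ^ 2 - d * y ^ 2 :=
    mul_left_cancel₀ (pow_ne_zero 2 hg0) (by linear_combination h)
  refine ⟨k, x, y, ?_, h'⟩
  set e : ℤ := (k.gcd d : ℤ)
  have hek : e ∣ k := Int.gcd_dvd_left k d
  have hed : e ∣ d := Int.gcd_dvd_right k d
  have hex : e ∣ x := by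
    refine (hd.squarefree_of_dvd hed).isRadical 2 x ?_
    rw [← sub_add_cancel (x ^ 2) (d * y ^ 2), ← h']
    exact dvd_add ((dvd_pow hek two_ne_zero).mul_left n) (hed.mul_right _)
  have hed2 : e ^ 2 ∣ d := by
    have hey : IsCoprime (e ^ 2) (y ^ 2) :=
      ((Int.isCoprime_iff_gcd_eq_one.2 hky).of_isCoprime_of_dvd_left hek).pow
    refine hey.dvd_of_dvd_mul_right ?_
    rw [← sub_sub_cancel (x ^ 2) (d * y ^ 2), ← h']
    exact dvd_sub (pow_dvd_pow_of_dvd hex 2) ((pow_dvd_pow_of_dvd hek 2).mul_left n)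
  rw [Int.isCoprime_iff_gcd_eq_one]
  simpa [e] using Int.isUnit_iff_natAbs_eq.1 (hd e (sq e ▸ hed2))

theorem jacobiSym_mul_eq_one_of_eq {s t b' : ℕ} (hs : s % 4 = 1) (ht : t % 4 = 1)
    (hst : s.Coprime t) (hb' : J(b' | s) = 1) {a x y : ℤ} (ha : IsCoprime a (s * t : ℕ))
    (h : a = s * x ^ 2 - t * b' * y ^ 2) : J(a | s * t) = 1 := by
  rw [Nat.cast_mul] at ha
  have mod_t : J(a | t) = J(s | t) :=
    jacobiSym_eq_of_dvd_sub_mul_sq (x := x) ha.of_mul_right_right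
      ⟨-b' * y ^ 2, by linear_combination h⟩
  have mod_s : J(a | s) = J(t | s) := by
    rw [jacobiSym_eq_of_dvd_sub_mul_sq (e := (-1 : ℤˣ) * (t * b')) (x := y) ha.of_mul_right_left
      ⟨x ^ 2, by push_cast; linear_combination h⟩, jacobiSym_units_mul hs, jacobiSym.mul_left,
      hb', mul_one]
  rw [jacobiSym.mul_right' _ (by omega) (by omega), mod_s, mod_t,
    jacobiSym.quadratic_reciprocity_one_mod_four hs (Nat.odd_iff.2 (by omega)), ← sq,
    jacobiSym.sq_one (by simpa using hst.symm)]

namespace IsRedeiDecomposition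

variable {b b' : ℕ}

theorem mod_four_eq_one (h : IsRedeiDecomposition b b') {k : ℕ} (hk : k ∣ b * b') (hodd : Odd k) :
    k % 4 = 1 :=
  mod_four_eq_one_of_isSquare_neg_one hodd (ZMod.isSquare_neg_one_of_dvd hk h.isSquare_neg_one)

theorem mod_four_eq_one_of_dvd_left (h : IsRedeiDecomposition b b') {k : ℕ} (hk : k ∣ b) :
    k % 4 = 1 :=
  h.mod_four_eq_one (hk.mul_right b') (h.odd_left.of_dvd_nat hk)

theorem jacobiSym_eq_one_of_mul_eq (h : IsRedeiDecomposition b b') {r : ℕ} {m x y : ℤ}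
    (hr : r ∣ b * b') (hm : IsCoprime m b) (heq : 4 * m * r = x ^ 2 - b * b' * y ^ 2) :
    J(m | b) = 1 := by
  obtain ⟨hbb', hbsq, -⟩ := Nat.squarefree_mul_iff.1 h.squarefree
  obtain ⟨s, r', ⟨t, rfl⟩, hr', rfl⟩ := exists_dvd_and_dvd_of_dvd_mul hr
  obtain ⟨hst, hssq, -⟩ := Nat.squarefree_mul_iff.1 hbsq
  have hs4 := h.mod_four_eq_one_of_dvd_left (dvd_mul_right s t)
  have ht4 := h.mod_four_eq_one_of_dvd_left (dvd_mul_left t s)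
  have hs0 : (s : ℤ) ≠ 0 := by omega
  push_cast at heq
  obtain ⟨x, rfl⟩ : (s : ℤ) ∣ x := (Int.squarefree_natCast.2 hssq).isRadical 2 x
    ⟨4 * m * r' + t * b' * y ^ 2, by linear_combination -heq⟩
  have hcop : IsCoprime (4 * m * r') (s * t : ℕ) := by
    have h4 : Nat.Coprime 4 (s * t) := (Nat.coprime_two_left.2 h.odd_left).pow_left 2
    have hr : r'.Coprime (s * t) := hbb'.symm.coprime_dvd_left hr'
    exact ((Nat.isCoprime_iff_coprime.2 h4).mul_left hm).mul_left (Nat.isCoprime_iff_coprime.2 hr)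
  have hone : J(4 * m * r' | s * t) = 1 :=
    jacobiSym_mul_eq_one_of_eq (x := x) (y := y) hs4 ht4 hst
      (h.jacobiSym_right s (dvd_mul_right s t)) hcop
      (mul_left_cancel₀ hs0 (by linear_combination heq))
  rwa [jacobiSym.mul_left, jacobiSym.mul_left, h.jacobiSym_left r' hr',
    jacobiSym.at_four h.odd_left, one_mul, mul_one] at hone

theorem jacobiSym_eq_one_of_mul_sq_eq (h : IsRedeiDecomposition b b') {r : ℕ} {k m x y : ℤ}
    (hk : k ≠ 0) (hr : r ∣ b * b') (hm : IsCoprime m b)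
    (heq : 4 * m * r * k ^ 2 = x ^ 2 - b * b' * y ^ 2) : J(m | b) = 1 := by
  have hd : Squarefree (b * b' : ℤ) := by exact_mod_cast Int.squarefree_natCast.2 h.squarefree
  obtain ⟨k', x', y', hcop, heq'⟩ := exists_isCoprime_mul_sq_eq hd hk heq
  have hk' : IsCoprime k' b := hcop.of_mul_right_left
  have hone : J(m * k' ^ 2 | b) = 1 :=
    h.jacobiSym_eq_one_of_mul_eq (x := x') (y := y') hr (hm.mul_left hk'.pow_left)
      (by linear_combination heq')
  rwa [jacobiSym.mul_left, jacobiSym.sq_one' (Int.isCoprime_iff_gcd_eq_one.1 hk'), mul_one] at hone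

end IsRedeiDecomposition

end Redei

section Dirichlet

theorem exists_jacobiSym_eq_neg_one {n : ℕ} (hn : 1 < n) (hodd : Odd n) (hsq : Squarefree n) :
    ∃ a : ℕ, J(a | n) = -1 := by
  obtain ⟨q, hq, m, rfl⟩ := Nat.exists_prime_and_dvd hn.ne'
  have := Fact.mk hq
  have hq2 : ringChar (ZMod q) ≠ 2 := by
    rw [ZMod.ringChar_zmod_n]
    rintro rfl
    exact absurd (Nat.odd_mul.1 hodd).1 (by decide)
  obtain ⟨c, hc⟩ := FiniteField.exists_nonsquare hq2
  obtain ⟨hcop, -, -⟩ := Nat.squarefree_mul_iff.1 hsq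
  obtain ⟨a, haq, ham⟩ := Nat.chineseRemainder hcop c.val 1
  have mod_q : J(a | q) = -1 := by
    refine ZMod.nonsquare_iff_jacobiSym_eq_neg_one.2 ?_
    rwa [Int.cast_natCast, (ZMod.natCast_eq_natCast_iff _ _ _).2 haq, ZMod.natCast_zmod_val]
  have mod_m : J(a | m) = 1 := by
    rw [jacobiSym_congr (Nat.modEq_iff_dvd.1 ham.symm), Nat.cast_one, jacobiSym.one_left]
  refine ⟨a, ?_⟩
  rw [jacobiSym.mul_right' _ hq.ne_zero (by rintro rfl; simp at hn), mod_q, mod_m, mul_one]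

theorem exists_odd_jacobiSym_eq_neg_one {n : ℕ} (hn : 1 < n) (hsq : Squarefree n)
    (hneg : IsSquare (-1 : ZMod n)) : ∃ m : ℕ, Odd m ∧ J(n | m) = -1 := by
  rcases Nat.even_or_odd n with heven | hodd
  · obtain ⟨k, rfl⟩ := heven.two_dvd
    obtain ⟨hcop, -, -⟩ := Nat.squarefree_mul_iff.1 hsq
    have hk4 : k % 4 = 1 := mod_four_eq_one_of_isSquare_neg_one (Nat.coprime_two_left.1 hcop)
      (ZMod.isSquare_neg_one_of_dvd (dvd_mul_left k 2) hneg)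
    obtain ⟨m, hm8, hmk⟩ := Nat.chineseRemainder (hcop.pow_left 3) 5 1
    change m % 8 = 5 at hm8
    have hm : Odd m := Nat.odd_iff.2 (by omega)
    refine ⟨m, hm, ?_⟩
    rw [Nat.cast_mul, Nat.cast_two, jacobiSym.mul_left, jacobiSym.at_two hm,
      jacobiSym.quadratic_reciprocity_one_mod_four hk4 hm,
      jacobiSym_congr (Nat.modEq_iff_dvd.1 hmk.symm), Nat.cast_one, jacobiSym.one_left,
      ZMod.χ₈_nat_mod_eight, hm8]
    rfl
  · obtain ⟨a, ha⟩ := exists_jacobiSym_eq_neg_one hn hodd hsq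
    have hn4 : n % 4 = 1 := mod_four_eq_one_of_isSquare_neg_one hodd hneg
    obtain ⟨m, hm, hma⟩ : ∃ m : ℕ, Odd m ∧ J(m | n) = J(a | n) := by
      rcases Nat.even_or_odd a with ha | ha
      · exact ⟨a + n, ha.add_odd hodd, jacobiSym_congr (by simp)⟩
      · exact ⟨a, ha, rfl⟩
    refine ⟨m, hm, ?_⟩
    rw [jacobiSym.quadratic_reciprocity_one_mod_four hn4 hm, hma, ha]

theorem exists_prime_gt_modEq_modEq {M N a c : ℕ} (hM : M ≠ 0) (hN : N ≠ 0) (hMN : M.Coprime N)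
    (ha : a.Coprime M) (hc : c.Coprime N) (n : ℕ) :
    ∃ p > n, p.Prime ∧ p ≡ a [MOD M] ∧ p ≡ c [MOD N] := by
  obtain ⟨e, hea, hec⟩ := Nat.chineseRemainder hMN a c
  have he : e.Coprime (M * N) := Nat.Coprime.mul_right (hea.gcd_eq.trans ha) (hec.gcd_eq.trans hc)
  obtain ⟨p, hpn, hp, hpe⟩ := Nat.forall_exists_prime_gt_and_modEq n (mul_ne_zero hM hN) he
  exact ⟨p, hpn, hp, (hpe.of_mul_right N).trans hea, (hpe.of_mul_left M).trans hec⟩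

theorem IsRedeiDecomposition.exists_prime {b b' : ℕ} (h : IsRedeiDecomposition b b') :
    ∃ p : ℕ, p.Prime ∧ p ≠ 2 ∧ J(p | b) = -1 ∧ J(b * b' | p) = 1 := by
  obtain ⟨hcop, hbsq, hb'sq⟩ := Nat.squarefree_mul_iff.1 h.squarefree
  have hb0 : b ≠ 0 := by have := h.one_lt_left; omega
  have hb'0 : b' ≠ 0 := by have := h.one_lt_right; omega
  obtain ⟨a, ha⟩ := exists_jacobiSym_eq_neg_one h.one_lt_left h.odd_left hbsq
  obtain ⟨m, hmodd, hm⟩ := exists_odd_jacobiSym_eq_neg_one h.one_lt_right hb'sq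
    (ZMod.isSquare_neg_one_of_dvd (dvd_mul_left b' b) h.isSquare_neg_one)
  have hb4 : b.Coprime (4 * b') :=
    ((Nat.coprime_two_right.2 h.odd_left).pow_right 2).mul_right hcop
  have hab : a.Coprime b :=
    Nat.isCoprime_iff_coprime.1 (isCoprime_of_jacobiSym_ne_zero hb0 (by rw [ha]; decide))
  have hb'm : b'.Coprime m := Nat.isCoprime_iff_coprime.1
    (isCoprime_of_jacobiSym_ne_zero hmodd.pos.ne' (by rw [hm]; decide))
  have hm4 : m.Coprime (4 * b') :=
    ((Nat.coprime_two_right.2 hmodd).pow_right 2).mul_right hb'm.symm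
  obtain ⟨p, hp2, hp, hpa, hpm⟩ :=
    exists_prime_gt_modEq_modEq hb0 (mul_ne_zero four_ne_zero hb'0) hb4 hab hm4 2
  have hpodd : Odd p := hp.odd_of_ne_two hp2.ne'
  have hpb : J(p | b) = -1 := by rw [← ha, jacobiSym_congr (Nat.modEq_iff_dvd.1 hpa.symm)]
  have hpb' : J(b' | p) = -1 := by
    rw [← hm, jacobiSym.mod_right _ hpodd, jacobiSym.mod_right _ hmodd, Int.natAbs_natCast, hpm]
  refine ⟨p, hp, hp2.ne', hpb, ?_⟩
  rw [jacobiSym.mul_left, hpb', jacobiSym.quadratic_reciprocity_one_mod_four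
    (h.mod_four_eq_one_of_dvd_left dvd_rfl) hpodd, hpb]
  rfl

end Dirichlet

section IntegrallyClosed

theorem dvd_of_dvd_add_of_sq_dvd_mul {R : Type*} [CommRing R] [IsDomain R] [IsIntegrallyClosed R]
    {n z z' : R} (hadd : n ∣ z + z') (hmul : n ^ 2 ∣ z * z') : n ∣ z := by
  obtain ⟨t, ht⟩ := hadd
  obtain ⟨a, ha⟩ := hmul
  rcases eq_or_ne n 0 with rfl | hn
  · have : z * z = 0 := by linear_combination z * ht - ha
    simp [mul_self_eq_zero.1 this]
  let f := algebraMap R (FractionRing R)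
  have hf : f n ≠ 0 := by simpa [f] using hn
  have hint : IsIntegral R (f z / f n) := by
    refine ⟨Polynomial.X ^ 2 - Polynomial.C t * Polynomial.X + Polynomial.C a, by monicity!, ?_⟩
    have hz : f z ^ 2 - f t * f n * f z + f a * f n ^ 2 = 0 := by
      simp only [← map_mul, ← map_pow, ← map_sub, ← map_add]
      rw [← map_zero f]
      congr 1
      linear_combination z * ht - ha
    simp only [Polynomial.eval₂_add, Polynomial.eval₂_sub, Polynomial.eval₂_mul,
      Polynomial.eval₂_pow, Polynomial.eval₂_X, Polynomial.eval₂_C]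
    field_simp
    linear_combination hz
  obtain ⟨y, hy⟩ := IsIntegrallyClosed.isIntegral_iff.1 hint
  refine ⟨y, IsFractionRing.injective R (FractionRing R) ?_⟩
  rw [map_mul, hy, mul_div_cancel₀ _ hf]

end IntegrallyClosed

section AbsNorm

theorem exists_intCast_eq_of_squarefree_card {R : Type*} [CommRing R] [Finite R]
    (h : Squarefree (Nat.card R)) (x : R) : ∃ n : ℤ, (n : R) = x := by
  have := Fintype.ofFinite R
  rw [Nat.card_eq_fintype_card] at h
  have hdvd : Fintype.card R ∣ ringChar R := by
    rw [← Nat.prod_primeFactors_of_squarefree h]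
    refine Finset.prod_primes_dvd _ (fun p hp => (Nat.prime_of_mem_primeFactors hp).prime) ?_
    intro p hp
    have : Fact p.Prime := ⟨Nat.prime_of_mem_primeFactors hp⟩
    exact (prime_dvd_char_iff_dvd_card p).2 (Nat.dvd_of_mem_primeFactors hp)
  have hchar : CharP R (Fintype.card R) := by
    rw [Nat.dvd_antisymm hdvd ((ringChar.spec R _).1 (by simp))]
    infer_instance
  obtain ⟨y, rfl⟩ := (ZMod.castHom_bijective R rfl).surjective x
  obtain ⟨n, rfl⟩ := ZMod.intCast_surjective y
  exact ⟨n, by simp⟩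

variable {S : Type*} [CommRing S] [IsDedekindDomain S] [Module.Free ℤ S]

theorem absNorm_ringEquiv_map (σ : S ≃+* S) (I : Ideal S) :
    Ideal.absNorm (I.map σ) = Ideal.absNorm I := by
  rw [Ideal.absNorm_apply, Ideal.absNorm_apply, Submodule.cardQuot_apply, Submodule.cardQuot_apply]
  exact (Nat.card_congr (Ideal.quotientEquiv I (I.map σ) σ rfl).toEquiv).symm

theorem exists_intCast_sub_mem_of_squarefree_absNorm {I : Ideal S}
    (hI : Squarefree (Ideal.absNorm I)) (x : S) : ∃ n : ℤ, x - n ∈ I := by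
  have : Finite (S ⧸ I) := Nat.finite_of_card_ne_zero hI.ne_zero
  obtain ⟨n, hn⟩ := exists_intCast_eq_of_squarefree_card (R := S ⧸ I) hI (Ideal.Quotient.mk I x)
  exact ⟨n, Ideal.Quotient.eq.1 (by rw [← hn, map_intCast])⟩

variable [Module.Finite ℤ S]

theorem eq_of_dvd_of_absNorm_eq {I J : Ideal S} (hJ : J ≠ ⊥) (h : I ∣ J)
    (hn : Ideal.absNorm I = Ideal.absNorm J) : I = J := by
  obtain ⟨X, rfl⟩ := h
  have h0 : Ideal.absNorm (I * X) ≠ 0 := by rwa [Ne, Ideal.absNorm_eq_zero_iff]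
  rw [map_mul] at h0 hn
  have hX : Ideal.absNorm X = 1 := (Nat.mul_eq_left (left_ne_zero_of_mul h0)).1 hn.symm
  rw [Ideal.absNorm_eq_one_iff.1 hX, Ideal.mul_top]

end AbsNorm

section Conjugation

variable {K : Type*} [Field K]

/-- `σ` is the nontrivial automorphism of the ring of integers of a quadratic field: the norm of
`x` is `x * σ x`. This forces the degree to be two. -/
structure IsQuadraticConj (σ : 𝓞 K ≃+* 𝓞 K) : Prop where
  norm : ∀ x, ((Algebra.norm ℤ x : ℤ) : 𝓞 K) = x * σ x

namespace IsQuadraticConj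

variable {σ : 𝓞 K ≃+* 𝓞 K}

theorem invol (hσ : IsQuadraticConj σ) (x : 𝓞 K) : σ (σ x) = x := by
  rcases eq_or_ne x 0 with rfl | hx
  · simp
  have hfix : σ (x * σ x) = x * σ x := by rw [← hσ.norm, map_intCast]
  rw [map_mul, mul_comm x] at hfix
  exact mul_left_cancel₀ (by simpa using hx) hfix

end IsQuadraticConj

variable [NumberField K]

theorem exists_isQuadraticConj (h : Module.finrank ℚ K = 2) :
    ∃ σ : 𝓞 K ≃+* 𝓞 K, IsQuadraticConj σ := by
  classical
  have : Algebra.IsQuadraticExtension ℚ K := ⟨h⟩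
  have hcard : Fintype.card Gal(K/ℚ) = 2 := by
    rw [← Nat.card_eq_fintype_card, IsGalois.card_aut_eq_finrank, h]
  have : Nontrivial Gal(K/ℚ) := Fintype.one_lt_card_iff_nontrivial.1 (by omega)
  obtain ⟨τ, hτ⟩ := exists_ne (1 : Gal(K/ℚ))
  have huniv : ({1, τ} : Finset Gal(K/ℚ)) = Finset.univ :=
    Finset.eq_univ_of_card _ (by rw [hcard, Finset.card_pair hτ.symm])
  refine ⟨RingOfIntegers.mapRingEquiv τ.toRingEquiv, ⟨fun x => RingOfIntegers.ext ?_⟩⟩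
  have hnorm := Algebra.norm_eq_prod_automorphisms ℚ (x : K)
  rw [← huniv, Finset.prod_pair hτ.symm, ← Algebra.coe_norm_int] at hnorm
  simpa using hnorm

namespace IsQuadraticConj

variable {σ : 𝓞 K ≃+* 𝓞 K}

theorem finrank_eq_two (hσ : IsQuadraticConj σ) : Module.finrank ℤ (𝓞 K) = 2 := by
  have hnorm := hσ.norm (algebraMap ℤ (𝓞 K) 2)
  rw [Algebra.norm_algebraMap] at hnorm
  have hpow : (2 : ℤ) ^ Module.finrank ℤ (𝓞 K) = 2 ^ 2 := by
    have : ((2 ^ Module.finrank ℤ (𝓞 K) : ℤ) : 𝓞 K) = ((2 ^ 2 : ℤ) : 𝓞 K) := by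
      rw [hnorm]
      push_cast
      rw [map_ofNat, map_ofNat]
      norm_num
    exact_mod_cast this
  exact Int.pow_right_injective (by norm_num) hpow

theorem exists_intCast_eq (hσ : IsQuadraticConj σ) {x : 𝓞 K} (hx : σ x = x) :
    ∃ n : ℤ, (n : 𝓞 K) = x := by
  have hsq := hσ.norm x
  have hsq1 := hσ.norm (1 + x)
  rw [map_add σ, map_one σ, hx] at hsq1
  rw [hx] at hsq
  have htwo : ((Algebra.norm ℤ (1 + x) - 1 - Algebra.norm ℤ x : ℤ) : 𝓞 K) = 2 * x := by
    push_cast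
    linear_combination hsq1 - hsq
  generalize Algebra.norm ℤ (1 + x) - 1 - Algebra.norm ℤ x = m at htwo
  obtain ⟨n, rfl⟩ : (2 : ℤ) ∣ m := by
    refine Int.prime_two.dvd_of_dvd_pow (n := 2) ⟨2 * Algebra.norm ℤ x, ?_⟩
    have : ((m ^ 2 : ℤ) : 𝓞 K) = ((2 * (2 * Algebra.norm ℤ x) : ℤ) : 𝓞 K) := by
      push_cast
      rw [htwo, hsq]
      ring
    exact_mod_cast this
  exact ⟨n, mul_left_cancel₀ two_ne_zero (by exact_mod_cast htwo)⟩

theorem exists_ne (hσ : IsQuadraticConj σ) : ∃ x, σ x ≠ x := by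
  by_contra! hfix
  have : Module.finrank ℤ (𝓞 K) ≤ 1 := finrank_le_one 1 fun x => by
    obtain ⟨n, hn⟩ := hσ.exists_intCast_eq (hfix x)
    exact ⟨n, by simpa using hn⟩
  have := hσ.finrank_eq_two
  omega

theorem absNorm_span_natCast (hσ : IsQuadraticConj σ) (n : ℕ) :
    Ideal.absNorm (Ideal.span {(n : 𝓞 K)}) = n ^ 2 := by
  rw [Ideal.absNorm_span_natCast, hσ.finrank_eq_two]

theorem absNorm_dvd_mul_conj (hσ : IsQuadraticConj σ) {I : Ideal (𝓞 K)} {x y : 𝓞 K} (hx : x ∈ I)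
    (hy : y ∈ I) : (Ideal.absNorm I : 𝓞 K) ∣ x * σ y := by
  have dvd_norm {z : 𝓞 K} (hz : z ∈ I) : (Ideal.absNorm I : 𝓞 K) ∣ z * σ z := by
    rw [← hσ.norm, ← Int.cast_natCast]
    exact Int.cast_dvd_cast _ _ (Ideal.absNorm_dvd_norm_of_mem hz)
  refine dvd_of_dvd_add_of_sq_dvd_mul (z' := y * σ x) ?_ ?_
  · have htrace : x * σ y + y * σ x = (x + y) * σ (x + y) - x * σ x - y * σ y := by
      rw [map_add]
      ring
    rw [htrace]
    exact ((dvd_norm (I.add_mem hx hy)).sub (dvd_norm hx)).sub (dvd_norm hy)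
  · rw [sq, show x * σ y * (y * σ x) = x * σ x * (y * σ y) by ring]
    exact mul_dvd_mul (dvd_norm hx) (dvd_norm hy)

theorem mul_map_eq (hσ : IsQuadraticConj σ) (I : Ideal (𝓞 K)) :
    I * I.map σ = Ideal.span {(Ideal.absNorm I : 𝓞 K)} := by
  rcases eq_or_ne I ⊥ with rfl | hI
  · simp
  have hmap : I.map σ ≠ ⊥ := by
    rwa [Ne, Ideal.map_eq_bot_iff_of_injective σ.injective]
  refine (eq_of_dvd_of_absNorm_eq (mul_ne_zero hI hmap) (Ideal.dvd_iff_le.2 ?_) ?_).symm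
  · rw [Ideal.mul_le]
    intro x hx y' hy'
    obtain ⟨y, hy, rfl⟩ := (Ideal.mem_map_of_equiv σ y').1 hy'
    exact Ideal.mem_span_singleton.2 (hσ.absNorm_dvd_mul_conj hx hy)
  · rw [hσ.absNorm_span_natCast, map_mul, absNorm_ringEquiv_map, sq]

end IsQuadraticConj

end Conjugation

section QuadraticSqrt

theorem exists_eq_sq_mul_squarefree {e : ℤ} (he : e ≠ 0) :
    ∃ s d : ℤ, e = s ^ 2 * d ∧ Squarefree d := by
  obtain ⟨a, s, hs, ha⟩ := Nat.sq_mul_squarefree e.natAbs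
  refine ⟨s, e.sign * a, ?_, ?_⟩
  · rw [mul_left_comm, ← Nat.cast_pow, ← Nat.cast_mul, hs, Int.sign_mul_natAbs]
  · rwa [← Int.squarefree_natAbs, Int.natAbs_mul, Int.natAbs_sign_of_ne_zero he, one_mul]

variable {K : Type*} [Field K]

/-- `D` is a square root of the squarefree integer `d` in the ring of integers of a quadratic field
with conjugation `σ`, so that the field is `ℚ(√d)`. -/
structure IsQuadraticSqrt (σ : 𝓞 K ≃+* 𝓞 K) (d : ℤ) (D : 𝓞 K) : Prop where
  squarefree : Squarefree d
  sq_eq : D ^ 2 = d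
  map_eq : σ D = -D

variable [NumberField K] {σ : 𝓞 K ≃+* 𝓞 K}

theorem IsQuadraticConj.exists_isQuadraticSqrt (hσ : IsQuadraticConj σ) :
    ∃ (d : ℤ) (D : 𝓞 K), IsQuadraticSqrt σ d D := by
  obtain ⟨θ, hθ⟩ := hσ.exists_ne
  have hη : θ - σ θ ≠ 0 := sub_ne_zero.2 (Ne.symm hθ)
  have hησ : σ (θ - σ θ) = -(θ - σ θ) := by rw [map_sub, hσ.invol, neg_sub]
  generalize θ - σ θ = η at hη hησ
  obtain ⟨e, he⟩ := hσ.exists_intCast_eq (x := η ^ 2) (by rw [map_pow, hησ, neg_sq])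
  obtain ⟨s, d, rfl, hd⟩ := exists_eq_sq_mul_squarefree (e := e) (by
    rintro rfl
    exact pow_ne_zero 2 hη (by simpa using he.symm))
  push_cast at he
  obtain ⟨D, rfl⟩ : (s : 𝓞 K) ∣ η :=
    (IsIntegrallyClosed.pow_dvd_pow_iff two_ne_zero).1 ⟨d, he.symm⟩
  have hs : (s : 𝓞 K) ≠ 0 := left_ne_zero_of_mul hη
  refine ⟨d, D, hd, ?_, ?_⟩
  · exact mul_left_cancel₀ (pow_ne_zero 2 hs) (by rw [he, mul_pow])
  · exact mul_left_cancel₀ hs (by rw [mul_neg, ← hησ, map_mul, map_intCast])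

namespace IsQuadraticSqrt

variable {d : ℤ} {D : 𝓞 K}

theorem ne_zero (hD : IsQuadraticSqrt σ d D) : D ≠ 0 := by
  rintro rfl
  refine hD.squarefree.ne_zero ?_
  have := hD.sq_eq
  simpa [eq_comm] using this

theorem ne_one (hD : IsQuadraticSqrt σ d D) : d ≠ 1 := by
  rintro rfl
  have hfix : σ D = D := by
    rcases sq_eq_one_iff.1 (hD.sq_eq.trans Int.cast_one) with h | h <;> simp [h]
  exact hD.ne_zero (self_eq_neg.1 (hfix.symm.trans hD.map_eq))

theorem norm_eq (hσ : IsQuadraticConj σ) (hD : IsQuadraticSqrt σ d D) (u v : ℤ) :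
    Algebra.norm ℤ (u + v * D : 𝓞 K) = u ^ 2 - d * v ^ 2 := by
  have : ((Algebra.norm ℤ (u + v * D : 𝓞 K) : ℤ) : 𝓞 K) = ((u ^ 2 - d * v ^ 2 : ℤ) : 𝓞 K) := by
    rw [hσ.norm, map_add, map_mul, map_intCast, map_intCast, hD.map_eq]
    push_cast
    linear_combination -(v : 𝓞 K) ^ 2 * hD.sq_eq
  exact_mod_cast this

theorem exists_two_mul_eq (hσ : IsQuadraticConj σ) (hD : IsQuadraticSqrt σ d D) (x : 𝓞 K) :
    ∃ u v : ℤ, 2 * x = u + v * D := by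
  obtain ⟨u, hu⟩ := hσ.exists_intCast_eq (x := x + σ x) (by rw [map_add, hσ.invol, add_comm])
  obtain ⟨w, hw⟩ := hσ.exists_intCast_eq (x := (x - σ x) * D) (by
    rw [map_mul, map_sub, hσ.invol, hD.map_eq]
    ring)
  obtain ⟨n, hn⟩ := hσ.exists_intCast_eq (x := (x - σ x) ^ 2) (by
    rw [map_pow, map_sub, hσ.invol]
    ring)
  obtain ⟨v, rfl⟩ : d ∣ w := by
    refine hD.squarefree.isRadical 2 w ⟨n, ?_⟩
    have : ((w ^ 2 : ℤ) : 𝓞 K) = ((d * n : ℤ) : 𝓞 K) := by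
      push_cast
      rw [hw, hn, ← hD.sq_eq]
      ring
    exact_mod_cast this
  have hv : v * D = x - σ x := by
    refine mul_right_cancel₀ hD.ne_zero ?_
    push_cast at hw
    linear_combination hw + v * hD.sq_eq
  exact ⟨u, v, by rw [hu, hv]; ring⟩

theorem exists_four_mul_norm_eq (hσ : IsQuadraticConj σ) (hD : IsQuadraticSqrt σ d D) (x : 𝓞 K) :
    ∃ u v : ℤ, 4 * Algebra.norm ℤ x = u ^ 2 - d * v ^ 2 := by
  obtain ⟨u, v, h⟩ := hD.exists_two_mul_eq hσ x
  refine ⟨u, v, ?_⟩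
  rw [← hD.norm_eq hσ, ← h, map_mul]
  congr 1
  have : ((Algebra.norm ℤ (2 : 𝓞 K) : ℤ) : 𝓞 K) = ((4 : ℤ) : 𝓞 K) := by
    rw [hσ.norm, map_ofNat]
    norm_num
  exact_mod_cast this.symm

theorem exists_sub_map_eq (hD : IsQuadraticSqrt σ d D) (hd : d % 4 = 1) :
    ∃ ω : 𝓞 K, ω - σ ω = D := by
  obtain ⟨ω, hω⟩ : (2 : 𝓞 K) ∣ 1 + D := by
    refine dvd_of_dvd_add_of_sq_dvd_mul (z' := 1 - D) ⟨1, by ring⟩ ⟨-(d / 4 : ℤ), ?_⟩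
    have hcast : (d : 𝓞 K) = 1 + 4 * (d / 4 : ℤ) := by
      conv_lhs => rw [← Int.emod_add_mul_ediv d 4, hd]
      push_cast
      rfl
    linear_combination -hD.sq_eq - hcast
  refine ⟨ω, mul_left_cancel₀ (two_ne_zero' (𝓞 K)) ?_⟩
  have hσω := congrArg σ hω
  rw [map_mul, map_ofNat, map_add, map_one, hD.map_eq] at hσω
  linear_combination hσω - hω

end IsQuadraticSqrt

end QuadraticSqrt

section Ambiguous

variable {K : Type*} [Field K]

/-- An ideal `R` is primitive ambiguous if it equals its conjugate and no rational integer other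
than `±1` divides it. -/
structure IsPrimitiveAmbiguous (σ : 𝓞 K ≃+* 𝓞 K) (R : Ideal (𝓞 K)) : Prop where
  map_eq : R.map σ = R
  eq_one : ∀ k : ℕ, Ideal.span {(k : 𝓞 K)} ∣ R → k = 1

variable {σ : 𝓞 K ≃+* 𝓞 K}

theorem IsPrimitiveAmbiguous.ne_bot {R : Ideal (𝓞 K)} (hR : IsPrimitiveAmbiguous σ R) :
    R ≠ ⊥ := by
  rintro rfl
  have := hR.eq_one 2 (dvd_zero _)
  omega

variable [NumberField K]

namespace IsQuadraticConj

theorem exists_eq_mul_and_eq_mul_map (hσ : IsQuadraticConj σ) {I J : Ideal (𝓞 K)} (hI : I ≠ ⊥)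
    (h : Ideal.absNorm I = Ideal.absNorm J) :
    ∃ C A : Ideal (𝓞 K), IsCoprime A (A.map σ) ∧ I = C * A ∧ J = C * A.map σ := by
  obtain ⟨A, hA⟩ : I ⊔ J ∣ I := Ideal.dvd_iff_le.2 le_sup_left
  obtain ⟨B, hB⟩ : I ⊔ J ∣ J := Ideal.dvd_iff_le.2 le_sup_right
  generalize hC : I ⊔ J = C at hA hB
  subst hA hB
  have hC0 : C ≠ ⊥ := left_ne_zero_of_mul hI
  have hA0 : A ≠ ⊥ := right_ne_zero_of_mul hI
  have hN : Ideal.absNorm A = Ideal.absNorm B := by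
    rw [map_mul, map_mul] at h
    exact mul_left_cancel₀ (by rwa [Ne, Ideal.absNorm_eq_zero_iff]) h
  have hcop : IsCoprime A B := by
    rw [← Ideal.mul_sup] at hC
    exact Ideal.isCoprime_iff_sup_eq.2 (mul_left_cancel₀ hC0 (hC.trans (Ideal.mul_top C).symm))
  have hBA : B = A.map σ := by
    refine eq_of_dvd_of_absNorm_eq ?_ ?_ (by rw [absNorm_ringEquiv_map, hN])
    · rwa [Ne, Ideal.map_eq_bot_iff_of_injective σ.injective]
    · refine hcop.symm.dvd_of_dvd_mul_left ?_
      rw [hσ.mul_map_eq, hN, ← hσ.mul_map_eq]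
      exact dvd_mul_right _ _
  exact ⟨C, A, hBA ▸ hcop, rfl, by rw [hBA]⟩

theorem exists_isPrimitiveAmbiguous (hσ : IsQuadraticConj σ) {R : Ideal (𝓞 K)} (hR : R ≠ ⊥)
    (hmap : R.map σ = R) :
    ∃ (k : ℕ) (S : Ideal (𝓞 K)), R = Ideal.span {(k : 𝓞 K)} * S ∧ IsPrimitiveAmbiguous σ S := by
  induction R using (wellFounded_dvdNotUnit (α := Ideal (𝓞 K))).induction with
  | _ R ih =>
    by_cases hprim : ∀ k : ℕ, Ideal.span {(k : 𝓞 K)} ∣ R → k = 1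
    · exact ⟨1, R, by simp, hmap, hprim⟩
    push Not at hprim
    obtain ⟨k, ⟨S, rfl⟩, hk⟩ := hprim
    have hk0 : Ideal.span {(k : 𝓞 K)} ≠ ⊥ := left_ne_zero_of_mul hR
    have hS0 : S ≠ ⊥ := right_ne_zero_of_mul hR
    have hunit : ¬IsUnit (Ideal.span {(k : 𝓞 K)}) := fun h => hk <| by
      have := hσ.absNorm_span_natCast k
      rw [Ideal.isUnit_iff.1 h, Ideal.absNorm_top] at this
      exact Nat.eq_one_of_mul_eq_one_left ((sq k).symm.trans this.symm)
    have hSmap : S.map σ = S := by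
      rw [Ideal.map_mul, Ideal.map_span, Set.image_singleton, map_natCast] at hmap
      exact mul_left_cancel₀ hk0 hmap
    obtain ⟨l, T, rfl, hT⟩ := ih S ⟨hS0, _, hunit, mul_comm _ _⟩ hS0 hSmap
    refine ⟨k * l, T, ?_, hT⟩
    rw [← mul_assoc, Ideal.span_singleton_mul_span_singleton, Nat.cast_mul]

end IsQuadraticConj

namespace IsPrimitiveAmbiguous

variable {R : Ideal (𝓞 K)}

theorem eq_of_absNorm_eq (hσ : IsQuadraticConj σ) (hR : IsPrimitiveAmbiguous σ R)
    {J : Ideal (𝓞 K)} (h : Ideal.absNorm R = Ideal.absNorm J) : J = R := by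
  obtain ⟨C, A, hA, rfl, rfl⟩ := hσ.exists_eq_mul_and_eq_mul_map hR.ne_bot h
  have hdvd : A * A.map σ ∣ C * A := by
    refine hA.mul_dvd (dvd_mul_left _ _) ?_
    rw [← hR.map_eq, Ideal.map_mul]
    exact dvd_mul_left _ _
  rw [hσ.mul_map_eq] at hdvd
  rw [Ideal.absNorm_eq_one_iff.1 (hR.eq_one _ hdvd), Ideal.map_top]

theorem squarefree_absNorm (hσ : IsQuadraticConj σ) (hR : IsPrimitiveAmbiguous σ R) :
    Squarefree (Ideal.absNorm R) := by
  rintro q ⟨t, ht⟩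
  have hdvd : Ideal.span {(q : 𝓞 K)} ^ 2 ∣ R ^ 2 := by
    have hRR := hσ.mul_map_eq R
    rw [hR.map_eq, ht] at hRR
    rw [sq R, hRR, Ideal.span_singleton_pow, Ideal.dvd_iff_le,
      Ideal.span_singleton_le_span_singleton]
    exact ⟨t, by push_cast; ring⟩
  exact Nat.isUnit_iff.2
    (hR.eq_one q ((UniqueFactorizationMonoid.pow_dvd_pow_iff_dvd two_ne_zero).1 hdvd))

theorem sub_map_mem (hσ : IsQuadraticConj σ) (hR : IsPrimitiveAmbiguous σ R) (x : 𝓞 K) :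
    x - σ x ∈ R := by
  obtain ⟨n, hn⟩ := exists_intCast_sub_mem_of_squarefree_absNorm (hR.squarefree_absNorm hσ) x
  have hσn : σ (x - n) ∈ R := hR.map_eq ▸ Ideal.mem_map_of_mem σ hn
  rw [map_sub, map_intCast] at hσn
  simpa using R.sub_mem hn hσn

theorem absNorm_dvd (hσ : IsQuadraticConj σ) {d : ℕ} {D : 𝓞 K} (hD : IsQuadraticSqrt σ d D)
    (hd : d % 4 = 1 ∨ 2 ∣ d) (hR : IsPrimitiveAmbiguous σ R) : Ideal.absNorm R ∣ d := by
  rcases hd with hd | hd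
  · obtain ⟨ω, rfl⟩ := hD.exists_sub_map_eq (mod_cast congrArg (Nat.cast : ℕ → ℤ) hd)
    have hDR := hR.sub_map_mem hσ ω
    have hnorm : Algebra.norm ℤ (ω - σ ω) = -(d : ℤ) := by simpa using hD.norm_eq hσ 0 1
    have hdvd := Ideal.absNorm_dvd_norm_of_mem hDR
    rw [hnorm, dvd_neg] at hdvd
    exact_mod_cast hdvd
  · rw [← (hR.squarefree_absNorm hσ).dvd_pow_iff_dvd three_ne_zero]
    have hnorm : Algebra.norm ℤ (D - σ D) = -(4 * d : ℕ) := by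
      rw [hD.map_eq, sub_neg_eq_add, ← two_mul]
      have := hD.norm_eq hσ 0 2
      push_cast at this ⊢
      rw [zero_add] at this
      rw [this]
      ring
    have hdvd := Ideal.absNorm_dvd_norm_of_mem (hR.sub_map_mem hσ D)
    rw [hnorm, dvd_neg, Int.natCast_dvd_natCast] at hdvd
    exact hdvd.trans (pow_succ d 2 ▸ mul_dvd_mul_right (pow_dvd_pow_of_dvd hd 2) d)

end IsPrimitiveAmbiguous

end Ambiguous

section IdealSquares

theorem isPrincipal_of_isPrincipal_span_mul {R : Type*} [CommRing R] [IsDomain R] {a : R}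
    (ha : a ≠ 0) {J : Ideal R} (h : (Ideal.span {a} * J).IsPrincipal) : J.IsPrincipal := by
  obtain ⟨c, hc⟩ := h
  rw [Ideal.submodule_span_eq] at hc
  obtain ⟨e, rfl⟩ : a ∣ c :=
    Ideal.span_singleton_le_span_singleton.1 (hc ▸ Ideal.mul_le_left)
  rw [← Ideal.span_singleton_mul_span_singleton] at hc
  exact ⟨e, (Ideal.span_singleton_mul_right_inj ha).1 hc⟩

variable {K : Type*} [Field K] [NumberField K]

theorem norm_eq_or_eq_neg_of_span_eq {I : Ideal (𝓞 K)} {γ : 𝓞 K} (h : I = Ideal.span {γ}) :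
    Algebra.norm ℤ γ = Ideal.absNorm I ∨ Algebra.norm ℤ γ = -(Ideal.absNorm I : ℤ) := by
  rw [h, Ideal.absNorm_span_singleton]
  exact Int.natAbs_eq _

variable {σ : 𝓞 K ≃+* 𝓞 K}

namespace IsQuadraticConj

-- Hilbert 90 for the element `γ / N(I)` of norm one: it equals `δ / σ δ` with `δ = N(I) + γ`.
theorem exists_mul_eq_span_and_map_eq (hσ : IsQuadraticConj σ) {I : Ideal (𝓞 K)} (hI : I ≠ ⊥)
    {γ : 𝓞 K} (hγ : I ^ 2 = Ideal.span {γ})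
    (hnorm : Algebra.norm ℤ γ = (Ideal.absNorm I : ℤ) ^ 2) :
    ∃ (δ : 𝓞 K) (R : Ideal (𝓞 K)), δ ≠ 0 ∧ I * R = Ideal.span {δ} ∧ R.map σ = R := by
  have hII := hσ.mul_map_eq I
  have hm0 : (Ideal.absNorm I : 𝓞 K) ≠ 0 := by
    rwa [Ne, Nat.cast_eq_zero, Ideal.absNorm_eq_zero_iff]
  have hmI : (Ideal.absNorm I : 𝓞 K) ∈ I := Ideal.absNorm_mem I
  have hγγ : γ * σ γ = (Ideal.absNorm I : 𝓞 K) ^ 2 := by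
    rw [← hσ.norm, hnorm]
    push_cast
    rfl
  have hσm : σ (Ideal.absNorm I : 𝓞 K) = Ideal.absNorm I := map_natCast σ _
  generalize (Ideal.absNorm I : 𝓞 K) = m at hII hm0 hmI hγγ hσm
  by_cases h0 : m + γ = 0
  · have hmap : I.map σ = I := by
      refine mul_left_cancel₀ hI ?_
      rw [hII, ← sq, hγ, eq_neg_of_add_eq_zero_right h0, Ideal.span_singleton_neg]
    exact ⟨m, I, hm0, by rw [← hII, hmap], hmap⟩
  obtain ⟨R, hR⟩ : I ∣ Ideal.span {m + γ} := by
    have hγI : γ ∈ I := Ideal.pow_le_self two_ne_zero (hγ ▸ Ideal.mem_span_singleton_self γ)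
    exact Ideal.dvd_span_singleton.2 (I.add_mem hmI hγI)
  refine ⟨m + γ, R, h0, hR.symm, ?_⟩
  have hconj : Ideal.span {γ} * (Ideal.span {m + γ}).map σ =
      Ideal.span {m} * Ideal.span {m + γ} := by
    rw [Ideal.map_span, Set.image_singleton, Ideal.span_singleton_mul_span_singleton,
      Ideal.span_singleton_mul_span_singleton, map_add, hσm]
    congr 2
    linear_combination hγγ
  rw [hR, ← hγ, ← hII, Ideal.map_mul] at hconj
  have hmI0 : I ^ 2 * I.map σ ≠ 0 := by
    refine mul_ne_zero (pow_ne_zero 2 hI) ?_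
    exact right_ne_zero_of_mul (hII ▸ mt Ideal.span_singleton_eq_bot.1 hm0)
  refine mul_left_cancel₀ hmI0 ?_
  calc I ^ 2 * I.map σ * R.map σ = I ^ 2 * (I.map σ * R.map σ) := by ring
    _ = I * I.map σ * (I * R) := hconj
    _ = I ^ 2 * I.map σ * R := by ring

theorem exists_mul_isPrimitiveAmbiguous (hσ : IsQuadraticConj σ) {I : Ideal (𝓞 K)} (hI : I ≠ ⊥)
    {γ : 𝓞 K} (hγ : I ^ 2 = Ideal.span {γ})
    (hnorm : Algebra.norm ℤ γ = (Ideal.absNorm I : ℤ) ^ 2) :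
    ∃ (δ : 𝓞 K) (R : Ideal (𝓞 K)), δ ≠ 0 ∧ I * R = Ideal.span {δ} ∧ IsPrimitiveAmbiguous σ R := by
  obtain ⟨δ, R, hδ, hδR, hRmap⟩ := hσ.exists_mul_eq_span_and_map_eq hI hγ hnorm
  have hR : R ≠ ⊥ := right_ne_zero_of_mul (hδR ▸ mt Ideal.span_singleton_eq_bot.1 hδ)
  obtain ⟨k, S, rfl, hS⟩ := hσ.exists_isPrimitiveAmbiguous hR hRmap
  obtain ⟨ε, rfl⟩ : (k : 𝓞 K) ∣ δ := by
    rw [← Ideal.span_singleton_le_span_singleton, ← Ideal.dvd_iff_le, ← hδR]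
    exact (dvd_mul_right _ S).mul_left I
  refine ⟨ε, S, right_ne_zero_of_mul hδ, mul_left_cancel₀ (left_ne_zero_of_mul hR) ?_, hS⟩
  rw [Ideal.span_singleton_mul_span_singleton, ← hδR]
  ring

end IsQuadraticConj

/-- The absolute norms of elements of `𝓞 K` are closed under division by the norms `n ^ 2` of
rational integers `n`, the case of closure under division that the argument needs. -/
def IsNormSqDivClosed (K : Type*) [Field K] : Prop :=
  ∀ (n : ℕ) (b : 𝓞 K), b ≠ 0 → n ^ 2 ∣ (Algebra.norm ℤ b).natAbs →
    ∃ c : 𝓞 K, n ^ 2 * (Algebra.norm ℤ c).natAbs = (Algebra.norm ℤ b).natAbs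

theorem IsNormSqDivClosed.exists_absNorm_span_eq (hdiv : IsNormSqDivClosed K)
    {I Q : Ideal (𝓞 K)} {f : 𝓞 K} (hf : f ≠ 0) (h : I ^ 2 * Q = Ideal.span {f}) :
    ∃ c : 𝓞 K, Ideal.absNorm (Ideal.span {c}) = Ideal.absNorm Q := by
  have hN : (Algebra.norm ℤ f).natAbs = Ideal.absNorm I ^ 2 * Ideal.absNorm Q := by
    rw [← Ideal.absNorm_span_singleton, ← h, map_mul, map_pow]
  obtain ⟨c, hc⟩ := hdiv (Ideal.absNorm I) f hf (hN ▸ dvd_mul_right _ _)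
  have hI : Ideal.absNorm I ^ 2 ≠ 0 := left_ne_zero_of_mul
    (hN ▸ Int.natAbs_ne_zero.2 (Algebra.norm_ne_zero_iff.2 hf))
  rw [hN] at hc
  exact ⟨c, by rw [Ideal.absNorm_span_singleton, mul_left_cancel₀ hI hc]⟩

namespace IsQuadraticConj

theorem isPrincipal_sq_of_norm_eq (hσ : IsQuadraticConj σ) (hdiv : IsNormSqDivClosed K)
    {I : Ideal (𝓞 K)} (hI : I ≠ ⊥) {γ : 𝓞 K} (hγ : I ^ 4 = Ideal.span {γ})
    (hnorm : Algebra.norm ℤ γ = (Ideal.absNorm I : ℤ) ^ 4) : (I ^ 2).IsPrincipal := by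
  obtain ⟨δ, R, hδ0, hδ, hR⟩ := hσ.exists_mul_isPrimitiveAmbiguous (I := I ^ 2) (γ := γ)
    (pow_ne_zero 2 hI) (by rw [← pow_mul, hγ]) (by rw [hnorm, map_pow]; push_cast; ring)
  obtain ⟨c, hc⟩ := hdiv.exists_absNorm_span_eq hδ0 hδ
  have hRc := hR.eq_of_absNorm_eq hσ hc.symm
  have hc0 : c ≠ 0 := by
    rintro rfl
    exact hR.ne_bot (by simpa using hRc.symm)
  exact isPrincipal_of_isPrincipal_span_mul hc0 ⟨δ, by rw [hRc, mul_comm, hδ]⟩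

theorem isPrincipal_sq_mul_of_absNorm_eq (hσ : IsQuadraticConj σ) {P Q : Ideal (𝓞 K)} {c f : 𝓞 K}
    (hf0 : f ≠ 0) (hf : P ^ 2 * Q = Ideal.span {f})
    (hc : Ideal.absNorm (Ideal.span {c}) = Ideal.absNorm Q) :
    ∃ A, A ∣ Q ∧ ((P * A) ^ 2).IsPrincipal := by
  have hQ0 : Q ≠ ⊥ := right_ne_zero_of_mul (hf ▸ mt Ideal.span_singleton_eq_bot.1 hf0)
  obtain ⟨C, A, -, rfl, hcA⟩ := hσ.exists_eq_mul_and_eq_mul_map hQ0 hc.symm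
  have hc0 : c ≠ 0 := by
    rintro rfl
    rw [Ideal.span_singleton_zero, Ideal.absNorm_bot, eq_comm, Ideal.absNorm_eq_zero_iff] at hc
    exact hQ0 hc
  refine ⟨A, dvd_mul_left _ _, isPrincipal_of_isPrincipal_span_mul hc0 ⟨Ideal.absNorm A * f, ?_⟩⟩
  calc Ideal.span {c} * (P * A) ^ 2 = (A * A.map σ) * (P ^ 2 * (C * A)) := by rw [hcA]; ring
    _ = Ideal.span {Ideal.absNorm A * f} := by
      rw [hσ.mul_map_eq, hf, Ideal.span_singleton_mul_span_singleton]

end IsQuadraticConj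

end IdealSquares

section ResidueSymbol

theorem natCast_notMem_of_coprime {R : Type*} [CommRing R] {P : Ideal R} (hP : P ≠ ⊤)
    {m n : ℕ} (h : m.Coprime n) (hm : (m : R) ∈ P) : (n : R) ∉ P := by
  intro hn
  obtain ⟨x, y, hxy⟩ := (Nat.isCoprime_iff_coprime.2 h).map (Int.castRingHom R)
  simp only [map_natCast] at hxy
  exact hP (P.eq_top_iff_one.2 (hxy ▸ P.add_mem (P.mul_mem_left x hm) (P.mul_mem_left y hn)))

variable {K : Type*} [Field K] [NumberField K]

theorem absNorm_dvd_of_intCast_mem {P : Ideal (𝓞 K)} (hP : (Ideal.absNorm P).Prime) {m : ℤ}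
    (hm : (m : 𝓞 K) ∈ P) : (Ideal.absNorm P : ℤ) ∣ m := by
  have hdvd := Ideal.absNorm_dvd_norm_of_mem hm
  rw [← eq_intCast (algebraMap ℤ (𝓞 K)), Algebra.norm_algebraMap] at hdvd
  exact (Nat.prime_iff_prime_int.1 hP).dvd_of_dvd_pow hdvd

variable {σ : 𝓞 K ≃+* 𝓞 K}

namespace IsQuadraticConj

theorem exists_prime_absNorm_eq_or_eq_sq (hσ : IsQuadraticConj σ) {P : Ideal (𝓞 K)} [P.IsMaximal] :
    ∃ q : ℕ, q.Prime ∧ (q : 𝓞 K) ∈ P ∧ (Ideal.absNorm P = q ∨ Ideal.absNorm P = q ^ 2) := by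
  obtain ⟨q, i, hi, hqP, hq, hN⟩ := Ideal.exists_prime_and_absNorm_eq_pow P
  refine ⟨q, hq, hqP, ?_⟩
  have hdvd : Ideal.absNorm P ∣ q ^ 2 := by
    rw [← hσ.absNorm_span_natCast]
    exact map_dvd _ (Ideal.dvd_span_singleton.2 hqP)
  rw [hN, Nat.pow_dvd_pow_iff_le_right hq.one_lt] at hdvd
  interval_cases i
  · exact .inl (by rw [hN, pow_one])
  · exact .inr hN

-- By quadratic reciprocity: `n ^ 2 - b * y ^ 2 ∈ P` makes `b` a square modulo the norm of `P`
-- when the latter is prime, and otherwise this norm is itself a square.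
theorem jacobiSym_absNorm_eq_one_of_isMaximal (hσ : IsQuadraticConj σ) {b : ℕ} (hb : b % 4 = 1)
    {P : Ideal (𝓞 K)} [hP : P.IsMaximal] (h2 : (2 : 𝓞 K) ∉ P) {n : ℤ} {y : 𝓞 K}
    (hn : (n : 𝓞 K) ∉ P) (h : (n : 𝓞 K) ^ 2 - b * y ^ 2 ∈ P) : J(Ideal.absNorm P | b) = 1 := by
  obtain ⟨q, hq, hqP, hN⟩ := hσ.exists_prime_absNorm_eq_or_eq_sq (P := P)
  have notMem_of_dvd {m : ℤ} (hm : (m : 𝓞 K) ∉ P) : ¬ (q : ℤ) ∣ m := by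
    rintro ⟨t, rfl⟩
    exact hm (by push_cast; exact P.mul_mem_right _ hqP)
  have isCoprime {m : ℤ} (hm : (m : 𝓞 K) ∉ P) : IsCoprime m q :=
    ((Nat.prime_iff_prime_int.1 hq).coprime_iff_not_dvd.2 (notMem_of_dvd hm)).symm
  rcases hN with hN | hN
  · obtain ⟨t, ht⟩ := exists_intCast_sub_mem_of_squarefree_absNorm (hN ▸ hq.prime.squarefree) y
    have hdvd : (q : ℤ) ∣ n ^ 2 - b * t ^ 2 := by
      rw [← hN]
      refine absNorm_dvd_of_intCast_mem (hN ▸ hq) ?_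
      have := P.add_mem h (P.mul_mem_left (b * (y + t)) ht)
      push_cast
      convert this using 1
      ring
    have hodd : Odd q := hq.odd_of_ne_two (by rintro rfl; exact h2 (mod_cast hqP))
    rw [hN, ← jacobiSym.quadratic_reciprocity_one_mod_four hb hodd,
      ← jacobiSym_eq_of_dvd_sub_mul_sq (isCoprime hn).pow_left hdvd,
      jacobiSym.sq_one' (Int.isCoprime_iff_gcd_eq_one.1 (isCoprime hn))]
  · have hbP : ((b : ℤ) : 𝓞 K) ∉ P := fun hbP => hn <| hP.isPrime.mem_of_pow_mem 2 <| by
      have := P.add_mem h (P.mul_mem_right (y ^ 2) hbP)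
      rwa [Int.cast_natCast, sub_add_cancel] at this
    rw [hN, Nat.cast_pow,
      jacobiSym.sq_one' (Int.isCoprime_iff_gcd_eq_one.1 (isCoprime hbP).symm)]

end IsQuadraticConj

theorem jacobiSym_absNorm_eq_one_of_forall_isMaximal {b : ℕ} {Q : Ideal (𝓞 K)} (hQ : Q ≠ ⊥)
    (h : ∀ P : Ideal (𝓞 K), P.IsMaximal → P ∣ Q → J(Ideal.absNorm P | b) = 1) :
    J(Ideal.absNorm Q | b) = 1 := by
  induction Q using UniqueFactorizationMonoid.induction_on_prime with
  | h₁ => exact absurd rfl hQ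
  | h₂ Q hu => rw [Ideal.isUnit_iff.1 hu, Ideal.absNorm_top, Nat.cast_one, jacobiSym.one_left]
  | h₃ Q P hQ0 hP ih =>
    rw [map_mul, Nat.cast_mul, jacobiSym.mul_left,
      h P ((Ideal.isPrime_of_prime hP).isMaximal hP.ne_zero) (dvd_mul_right P Q),
      ih hQ0 fun P' hP' hdvd => h P' hP' (hdvd.mul_left P), one_mul]

end ResidueSymbol

section SplitPrime

variable {K : Type*} [Field K] {σ : 𝓞 K ≃+* 𝓞 K}

/-- The prime ideal `(p, k - √d)` above a rational prime `p` which divides `k ^ 2 - d` and hence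
splits in `ℚ(√d)`. -/
def splitPrime (p : ℕ) (k : ℤ) (D : 𝓞 K) : Ideal (𝓞 K) :=
  Ideal.span {(p : 𝓞 K), (k : 𝓞 K) - D}

theorem natCast_mem_splitPrime (p : ℕ) (k : ℤ) (D : 𝓞 K) : (p : 𝓞 K) ∈ splitPrime p k D :=
  Ideal.subset_span (by simp)

theorem sub_mem_splitPrime (p : ℕ) (k : ℤ) (D : 𝓞 K) : (k : 𝓞 K) - D ∈ splitPrime p k D :=
  Ideal.subset_span (by simp)

variable {d : ℤ} {D : 𝓞 K} {p : ℕ} {k : ℤ}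

namespace IsQuadraticSqrt

theorem map_splitPrime (hD : IsQuadraticSqrt σ d D) (p : ℕ) (k : ℤ) :
    (splitPrime p k D).map σ = Ideal.span {(p : 𝓞 K), (k : 𝓞 K) + D} := by
  rw [splitPrime, Ideal.map_span, Set.image_pair, map_natCast, map_sub, map_intCast, hD.map_eq,
    sub_neg_eq_add]

theorem isCoprime_splitPrime_map (hD : IsQuadraticSqrt σ d D) (hk : IsCoprime (2 * k) p) :
    IsCoprime (splitPrime p k D) ((splitPrime p k D).map σ) := by
  rw [Ideal.isCoprime_iff_sup_eq, Ideal.eq_top_iff_one, hD.map_splitPrime]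
  obtain ⟨x, y, hxy⟩ := hk
  have hone : (1 : 𝓞 K) = (x * (k - D) + y * p) + x * (k + D) := by
    have : (1 : 𝓞 K) = ((x * (2 * k) + y * p : ℤ) : 𝓞 K) := by rw [hxy, Int.cast_one]
    push_cast at this
    linear_combination this
  rw [hone]
  refine Ideal.add_mem _ (Ideal.mem_sup_left ?_) (Ideal.mem_sup_right ?_)
  · exact Ideal.add_mem _ (Ideal.mul_mem_left _ _ (sub_mem_splitPrime p k D))
      (Ideal.mul_mem_left _ _ (natCast_mem_splitPrime p k D))
  · exact Ideal.mul_mem_left _ _ (Ideal.subset_span (by simp))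

theorem splitPrime_mul_map (hD : IsQuadraticSqrt σ d D) (hk : IsCoprime (2 * k) p)
    (hpk : (p : ℤ) ∣ k ^ 2 - d) :
    splitPrime p k D * (splitPrime p k D).map σ = Ideal.span {(p : 𝓞 K)} := by
  refine le_antisymm ?_ ?_
  · obtain ⟨t, ht⟩ := hpk
    have hdvd : (p : 𝓞 K) ∣ (k - D) * (k + D) := by
      refine ⟨t, ?_⟩
      have : ((k ^ 2 - d : ℤ) : 𝓞 K) = ((p * t : ℤ) : 𝓞 K) := by rw [ht]
      push_cast at this
      linear_combination this - hD.sq_eq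
    rw [hD.map_splitPrime, splitPrime, Ideal.span_pair_mul_span_pair, Ideal.span_le]
    simp only [Set.insert_subset_iff, Set.singleton_subset_iff, SetLike.mem_coe,
      Ideal.mem_span_singleton]
    exact ⟨dvd_mul_right _ _, dvd_mul_right _ _, dvd_mul_left _ _, hdvd⟩
  · rw [Ideal.mul_eq_inf_of_isCoprime (hD.isCoprime_splitPrime_map hk), hD.map_splitPrime,
      Ideal.span_singleton_le_iff_mem]
    exact ⟨natCast_mem_splitPrime p k D, Ideal.subset_span (by simp)⟩

theorem absNorm_splitPrime [NumberField K] (hσ : IsQuadraticConj σ) (hD : IsQuadraticSqrt σ d D)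
    (hk : IsCoprime (2 * k) p) (hpk : (p : ℤ) ∣ k ^ 2 - d) :
    Ideal.absNorm (splitPrime p k D) = p := by
  have h := congrArg Ideal.absNorm (hD.splitPrime_mul_map hk hpk)
  rw [map_mul, absNorm_ringEquiv_map, hσ.absNorm_span_natCast, ← sq] at h
  exact Nat.pow_left_injective two_ne_zero h

end IsQuadraticSqrt

end SplitPrime

section AuxiliaryElement

variable {K : Type*} [Field K] [NumberField K] {σ : 𝓞 K ≃+* 𝓞 K} {d : ℤ} {D : 𝓞 K} {p : ℕ} {k : ℤ}

namespace IsQuadraticSqrt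

theorem isMaximal_splitPrime (hσ : IsQuadraticConj σ) (hD : IsQuadraticSqrt σ d D) (hp : p.Prime)
    (hk : IsCoprime (2 * k) p) (hpk : (p : ℤ) ∣ k ^ 2 - d) : (splitPrime p k D).IsMaximal := by
  have hN := hD.absNorm_splitPrime hσ hk hpk
  have hprime := Ideal.isPrime_of_irreducible_absNorm (hN ▸ hp)
  refine hprime.isMaximal fun hbot => hp.ne_zero ?_
  rw [← hN, hbot, Ideal.absNorm_bot]

theorem natCast_sq_notMem_splitPrime_pow_three (hσ : IsQuadraticConj σ)
    (hD : IsQuadraticSqrt σ d D) (hp : p.Prime) (hk : IsCoprime (2 * k) p)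
    (hpk : (p : ℤ) ∣ k ^ 2 - d) : (p : 𝓞 K) ^ 2 ∉ splitPrime p k D ^ 3 := by
  have hN := hD.absNorm_splitPrime hσ hk hpk
  have hcop := hD.isCoprime_splitPrime_map hk
  have hmul := hD.splitPrime_mul_map hk hpk
  generalize splitPrime p k D = P at hN hcop hmul
  intro hmem
  have hdvd : P ^ 2 * P ∣ P ^ 2 * P.map σ ^ 2 := by
    rwa [← pow_succ, ← mul_pow, hmul, Ideal.span_singleton_pow, Ideal.dvd_span_singleton]
  have hP : P ^ 2 ≠ 0 := by
    rintro h
    rw [eq_zero_of_pow_eq_zero h] at hN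
    exact hp.ne_zero (by rw [← hN]; exact Ideal.absNorm_bot)
  have hunit := hcop.pow_right.isUnit_of_dvd' dvd_rfl ((mul_dvd_mul_iff_left hP).1 hdvd)
  rw [Ideal.isUnit_iff.1 hunit, Ideal.absNorm_top] at hN
  exact hp.ne_one hN.symm

theorem notMem_of_isMaximal_ne_splitPrime (hσ : IsQuadraticConj σ) (hD : IsQuadraticSqrt σ d D)
    (hp : p.Prime) (hk : IsCoprime (2 * k) p) (hpk : (p : ℤ) ∣ k ^ 2 - d) {b : ℕ}
    (hb : p.Coprime b) {P : Ideal (𝓞 K)} [hP : P.IsMaximal] (hne : P ≠ splitPrime p k D)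
    (hf : (p : 𝓞 K) ^ 2 - b * (2 * (k - D) ^ 2) ^ 2 ∈ P) : (p : 𝓞 K) ∉ P ∧ (2 : 𝓞 K) ∉ P := by
  have hp2 : p.Coprime 2 :=
    Nat.isCoprime_iff_coprime.1 (mod_cast hk.of_mul_left_left.symm)
  have hpP : (p : 𝓞 K) ∉ P := by
    intro hpP
    have hbP := natCast_notMem_of_coprime hP.ne_top hb hpP
    have h2P : (2 : 𝓞 K) ∉ P := mod_cast natCast_notMem_of_coprime hP.ne_top hp2 hpP
    have hmem : (b : 𝓞 K) * (2 * (k - D) ^ 2) ^ 2 ∈ P :=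
      (P.sub_mem_iff_right (P.pow_mem_of_mem hpP 2 two_pos)).1 hf
    have hsub : (k : 𝓞 K) - D ∈ P :=
      hP.isPrime.mem_of_pow_mem 2 <| (hP.isPrime.mem_or_mem <| hP.isPrime.mem_of_pow_mem 2 <|
        (hP.isPrime.mem_or_mem hmem).resolve_left hbP).resolve_left h2P
    refine hne ((hD.isMaximal_splitPrime hσ hp hk hpk).eq_of_le hP.ne_top ?_).symm
    exact Ideal.span_le.2 (Set.pair_subset hpP hsub)
  refine ⟨hpP, fun h2P => hpP (hP.isPrime.mem_of_pow_mem 2 ?_)⟩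
  refine (P.sub_mem_iff_left ?_).1 hf
  exact P.mul_mem_left _ (P.pow_mem_of_mem (P.mul_mem_right _ h2P) 2 two_pos)

-- The witness is `f = p ^ 2 - b * (2 * (k - √d) ^ 2) ^ 2`. Its second term lies in the fourth power
-- of the split prime, so the split prime divides `f` exactly twice.
theorem exists_splitPrime_sq_mul_eq_span (hσ : IsQuadraticConj σ) (hD : IsQuadraticSqrt σ d D)
    (hp : p.Prime) (hk : IsCoprime (2 * k) p) (hpk : (p : ℤ) ∣ k ^ 2 - d) {b : ℕ}
    (hb : p.Coprime b) (hb4 : b % 4 = 1) :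
    ∃ (f : 𝓞 K) (Q : Ideal (𝓞 K)), f ≠ 0 ∧ splitPrime p k D ^ 2 * Q = Ideal.span {f} ∧
      ∀ A, A ∣ Q → J(Ideal.absNorm A | b) = 1 := by
  have hcube := hD.natCast_sq_notMem_splitPrime_pow_three hσ hp hk hpk
  have hp2 := Ideal.pow_mem_pow (natCast_mem_splitPrime p k D) 2
  have hz : (b : 𝓞 K) * (2 * (k - D) ^ 2) ^ 2 ∈ splitPrime p k D ^ 3 := by
    have := Ideal.pow_mem_pow (sub_mem_splitPrime p k D) 3
    convert Ideal.mul_mem_left _ (4 * b * (k - D)) this using 1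
    ring
  have notMem : (p : 𝓞 K) ^ 2 - b * (2 * (k - D) ^ 2) ^ 2 ∉ splitPrime p k D ^ 3 :=
    mt (Submodule.sub_mem_iff_left _ hz).1 hcube
  have hf := Ideal.sub_mem _ hp2 (Ideal.pow_le_pow_right (by norm_num) hz)
  obtain ⟨Q, hQ⟩ := Ideal.dvd_span_singleton.2 hf
  have hf0 : (p : 𝓞 K) ^ 2 - b * (2 * (k - D) ^ 2) ^ 2 ≠ 0 :=
    fun h0 => notMem (h0 ▸ Ideal.zero_mem _)
  have hQ0 : Q ≠ ⊥ := right_ne_zero_of_mul (hQ ▸ mt Ideal.span_singleton_eq_bot.1 hf0)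
  refine ⟨_, Q, hf0, hQ.symm, fun A hA => ?_⟩
  refine jacobiSym_absNorm_eq_one_of_forall_isMaximal (ne_zero_of_dvd_ne_zero hQ0 hA) ?_
  intro P hP hPA
  have hPQ := hPA.trans hA
  have hne : P ≠ splitPrime p k D := by
    rintro rfl
    apply notMem
    rw [← Ideal.dvd_span_singleton, hQ, pow_succ]
    exact mul_dvd_mul_left _ hPQ
  have hfP := Ideal.dvd_span_singleton.1 (hQ ▸ hPQ.mul_left (splitPrime p k D ^ 2))
  obtain ⟨hpP, h2P⟩ := hD.notMem_of_isMaximal_ne_splitPrime hσ hp hk hpk hb hne hfP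
  exact hσ.jacobiSym_absNorm_eq_one_of_isMaximal hb4 (n := p) h2P (mod_cast hpP) (mod_cast hfP)

end IsQuadraticSqrt

end AuxiliaryElement

section Genus

variable {K : Type*} [Field K] [NumberField K] {σ : 𝓞 K ≃+* 𝓞 K}

theorem IsQuadraticSqrt.exists_natCast_eq_and_isSquare_neg_one (hσ : IsQuadraticConj σ) {d : ℤ}
    {D : 𝓞 K} (hD : IsQuadraticSqrt σ d D) {x : 𝓞 K} {m : ℕ} (hm : m ≠ 0)
    (hx : Algebra.norm ℤ x = -(m : ℤ) ^ 2) : ∃ n : ℕ, (n : ℤ) = d ∧ IsSquare (-1 : ZMod n) := by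
  obtain ⟨u, v, huv⟩ := hD.exists_four_mul_norm_eq hσ x
  have heq : d * v ^ 2 = u ^ 2 + (2 * m) ^ 2 := by linear_combination huv - 4 * hx
  have hpos : 0 < d * v ^ 2 := by rw [heq]; positivity
  have hv : v ≠ 0 := by rintro rfl; simp at hpos
  lift d to ℕ using (pos_of_mul_pos_left hpos (sq_nonneg v)).le
  refine ⟨d, rfl, isSquare_neg_one_of_mul_sq_eq_sq_add_sq (v := v.natAbs) (x := u.natAbs)
    (y := 2 * m) (Int.squarefree_natCast.1 hD.squarefree) (Int.natAbs_ne_zero.2 hv) ?_⟩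
  zify
  simpa only [sq_abs] using heq

namespace IsRedeiDecomposition

variable {b b' : ℕ} {D : 𝓞 K}

theorem jacobiSym_eq_one_of_sq_eq_span (h : IsRedeiDecomposition b b') (hσ : IsQuadraticConj σ)
    (hD : IsQuadraticSqrt σ (b * b' : ℕ) D) {I : Ideal (𝓞 K)} (hI : I ≠ ⊥) {γ : 𝓞 K}
    (hγ : I ^ 2 = Ideal.span {γ}) (hnorm : Algebra.norm ℤ γ = (Ideal.absNorm I : ℤ) ^ 2)
    {m k : ℕ} (hm : m.Coprime b) (hmk : Ideal.absNorm I = m * k ^ 2) : J(m | b) = 1 := by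
  obtain ⟨δ, R, -, hδ, hR⟩ := hσ.exists_mul_isPrimitiveAmbiguous hI hγ hnorm
  have hd : b * b' % 4 = 1 ∨ 2 ∣ b * b' := by
    have := mod_four_eq_one_or_two_of_isSquare_neg_one h.squarefree h.isSquare_neg_one
    omega
  obtain ⟨x, y, hxy⟩ := hD.exists_four_mul_norm_eq hσ δ
  obtain ⟨w, hw⟩ : ∃ w : ℤˣ, Algebra.norm ℤ δ = w * (m * k ^ 2 * Ideal.absNorm R) := by
    rcases norm_eq_or_eq_neg_of_span_eq hδ with h | h <;>
      rw [map_mul, hmk] at h <;> push_cast at h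
    · exact ⟨1, by simpa using h⟩
    · exact ⟨-1, by simpa using h⟩
  have hk : (k : ℤ) ≠ 0 := by
    rintro hk
    rw [Nat.cast_eq_zero] at hk
    exact hI (Ideal.absNorm_eq_zero_iff.1 (by simp [hmk, hk]))
  rw [← jacobiSym_units_mul (h.mod_four_eq_one_of_dvd_left dvd_rfl) w]
  refine h.jacobiSym_eq_one_of_mul_sq_eq (x := x) (y := y) hk (hR.absNorm_dvd hσ hD hd) ?_ ?_
  · exact (isCoprime_mul_unit_left_left w.isUnit _ _).2 (Nat.isCoprime_iff_coprime.2 hm)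
  · push_cast at hxy
    linear_combination hxy - 4 * hw

-- If the generator of `A ^ 2` has negative norm, then `A * I ^ 2` takes the place of `A`: the norm
-- of its square is positive, and `N(I ^ 2)` is a square.
theorem jacobiSym_absNorm_eq_one_of_isPrincipal_sq (h : IsRedeiDecomposition b b')
    (hσ : IsQuadraticConj σ) (hD : IsQuadraticSqrt σ (b * b' : ℕ) D) {I : Ideal (𝓞 K)}
    (hI : I ≠ ⊥) {γ : 𝓞 K} (hγ : I ^ 4 = Ideal.span {γ})
    (hnorm : Algebra.norm ℤ γ = -(Ideal.absNorm I : ℤ) ^ 4) {A : Ideal (𝓞 K)} (hA : A ≠ ⊥)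
    (hcop : (Ideal.absNorm A).Coprime b) (hA2 : (A ^ 2).IsPrincipal) :
    J(Ideal.absNorm A | b) = 1 := by
  obtain ⟨α, hα⟩ := hA2
  rw [Ideal.submodule_span_eq] at hα
  rcases norm_eq_or_eq_neg_of_span_eq hα with hαN | hαN <;>
    rw [map_pow, Nat.cast_pow] at hαN
  · exact h.jacobiSym_eq_one_of_sq_eq_span hσ hD hA hα hαN hcop (k := 1) (by simp)
  · refine h.jacobiSym_eq_one_of_sq_eq_span hσ hD (I := A * I ^ 2) (γ := α * γ)
      (mul_ne_zero hA (pow_ne_zero 2 hI)) ?_ ?_ hcop (k := Ideal.absNorm I) (by simp)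
    · rw [mul_pow, ← pow_mul, hα, hγ, Ideal.span_singleton_mul_span_singleton]
    · rw [map_mul, map_mul, map_pow, hαN, hnorm]
      push_cast
      ring

theorem exists_isPrincipal_sq_jacobiSym_eq_neg_one (h : IsRedeiDecomposition b b')
    (hσ : IsQuadraticConj σ) (hdiv : IsNormSqDivClosed K)
    (hD : IsQuadraticSqrt σ (b * b' : ℕ) D) :
    ∃ A : Ideal (𝓞 K), (A ^ 2).IsPrincipal ∧ J(Ideal.absNorm A | b) = -1 := by
  obtain ⟨p, hp, hp2, hpb, hpd⟩ := h.exists_prime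
  obtain ⟨k, hk, hpk⟩ :=
    exists_isCoprime_dvd_sq_sub_of_jacobiSym_eq_one hp hp2 (a := (b * b' : ℕ)) (mod_cast hpd)
  have hb0 : b ≠ 0 := h.odd_left.pos.ne'
  have hcop : p.Coprime b :=
    Nat.isCoprime_iff_coprime.1 (isCoprime_of_jacobiSym_ne_zero hb0 (by rw [hpb]; decide))
  obtain ⟨f, Q, hf0, hf, hQ⟩ := hD.exists_splitPrime_sq_mul_eq_span hσ hp hk hpk hcop
    (h.mod_four_eq_one_of_dvd_left dvd_rfl)
  obtain ⟨c, hc⟩ := hdiv.exists_absNorm_span_eq hf0 hf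
  obtain ⟨A, hAQ, hA⟩ := hσ.isPrincipal_sq_mul_of_absNorm_eq hf0 hf hc
  refine ⟨_, hA, ?_⟩
  rw [map_mul, hD.absNorm_splitPrime hσ hk hpk, Nat.cast_mul, jacobiSym.mul_left, hpb, hQ A hAQ,
    mul_one]

end IsRedeiDecomposition

end Genus

section OrderFour

variable {K : Type*} [Field K] [NumberField K] {σ : 𝓞 K ≃+* 𝓞 K}

namespace IsQuadraticConj

theorem norm_ne_neg_absNorm_pow_four (hσ : IsQuadraticConj σ) (hdiv : IsNormSqDivClosed K)
    (hunit : ∀ ε : 𝓞 K, Algebra.norm ℤ ε ≠ -1) {I : Ideal (𝓞 K)} (hI : I ≠ ⊥) {γ : 𝓞 K}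
    (hγ : I ^ 4 = Ideal.span {γ}) : Algebra.norm ℤ γ ≠ -(Ideal.absNorm I : ℤ) ^ 4 := by
  intro hnorm
  obtain ⟨d, D, hD⟩ := hσ.exists_isQuadraticSqrt
  have hN : Ideal.absNorm I ≠ 0 := by rwa [Ne, Ideal.absNorm_eq_zero_iff]
  obtain ⟨d, rfl, hneg⟩ := hD.exists_natCast_eq_and_isSquare_neg_one hσ (pow_ne_zero 2 hN)
    (x := γ) (by rw [hnorm]; push_cast; ring)
  obtain ⟨b, b', rfl, h⟩ := exists_isRedeiDecomposition (d := d) (mod_cast hD.ne_one)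
    (Int.squarefree_natCast.1 hD.squarefree) hneg
    fun u v huv => hunit _ ((hD.norm_eq hσ u v).trans huv)
  obtain ⟨A, hA, hJ⟩ := h.exists_isPrincipal_sq_jacobiSym_eq_neg_one hσ hdiv hD
  have hcop : (Ideal.absNorm A).Coprime b := Nat.isCoprime_iff_coprime.1
    (isCoprime_of_jacobiSym_ne_zero h.odd_left.pos.ne' (by rw [hJ]; decide))
  have hA0 : A ≠ ⊥ := by
    rintro rfl
    have := h.one_lt_left
    rw [Ideal.absNorm_bot, Nat.coprime_zero_left] at hcop
    omega
  rw [h.jacobiSym_absNorm_eq_one_of_isPrincipal_sq hσ hD hI hγ hnorm hA0 hcop hA] at hJ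
  exact absurd hJ (by decide)

theorem isPrincipal_sq_of_isPrincipal_pow_four (hσ : IsQuadraticConj σ)
    (hdiv : IsNormSqDivClosed K) {I : Ideal (𝓞 K)} (hI : I ≠ ⊥) (h : (I ^ 4).IsPrincipal) :
    (I ^ 2).IsPrincipal := by
  obtain ⟨γ, hγ⟩ := h
  rw [Ideal.submodule_span_eq] at hγ
  rcases norm_eq_or_eq_neg_of_span_eq hγ with hnorm | hnorm <;>
    rw [map_pow, Nat.cast_pow] at hnorm
  · exact hσ.isPrincipal_sq_of_norm_eq hdiv hI hγ hnorm
  obtain ⟨ε, hε⟩ : ∃ ε : 𝓞 K, Algebra.norm ℤ ε = -1 := by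
    by_contra! hunit
    exact hσ.norm_ne_neg_absNorm_pow_four hdiv hunit hI hγ hnorm
  have hεunit : IsUnit ε := by
    refine isUnit_of_dvd_unit (dvd_mul_right ε (σ ε)) ?_
    rw [← hσ.norm, hε]
    simp
  refine hσ.isPrincipal_sq_of_norm_eq hdiv hI (γ := ε * γ) ?_ ?_
  · rw [hγ, Ideal.span_singleton_mul_left_unit hεunit]
  · rw [map_mul, hε, hnorm, neg_mul_neg, one_mul]

end IsQuadraticConj

theorem isNormSqDivClosed_of_finrank_eq_two (hdeg : Module.finrank ℚ K = 2)
    (hdiv : ∀ a b : 𝓞 K, a ≠ 0 → b ≠ 0 →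
      (Algebra.norm ℤ a).natAbs ∣ (Algebra.norm ℤ b).natAbs →
      ∃ c : 𝓞 K,
        (Algebra.norm ℤ a).natAbs * (Algebra.norm ℤ c).natAbs = (Algebra.norm ℤ b).natAbs) :
    IsNormSqDivClosed K := by
  intro n b hb hdvd
  have hn : (n : 𝓞 K) ≠ 0 := by
    rintro hn
    rw [Nat.cast_eq_zero.1 hn, zero_pow two_ne_zero, zero_dvd_iff, Int.natAbs_eq_zero,
      Algebra.norm_eq_zero_iff] at hdvd
    exact hb hdvd
  have hnorm : (Algebra.norm ℤ (n : 𝓞 K)).natAbs = n ^ 2 := by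
    rw [← Ideal.absNorm_span_singleton, Ideal.absNorm_span_natCast, RingOfIntegers.rank, hdeg]
  simpa only [hnorm] using hdiv n b hn hb (hnorm ▸ hdvd)

end OrderFour

theorem stmt_14_general (K : Type*) [Field K] [NumberField K] (hdeg : Module.finrank ℚ K = 2)
    (hdiv : IsNormSqDivClosed K) (g : ClassGroup (𝓞 K)) : orderOf g ≠ 4 := by
  intro hg
  obtain ⟨σ, hσ⟩ := exists_isQuadraticConj hdeg
  obtain ⟨I, rfl⟩ := ClassGroup.mk0_surjective g
  have hI : (I : Ideal (𝓞 K)) ≠ ⊥ := nonZeroDivisors.ne_zero I.2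
  have pow_eq_one_iff (n : ℕ) :
      ClassGroup.mk0 I ^ n = 1 ↔ ((I : Ideal (𝓞 K)) ^ n).IsPrincipal := by
    rw [← map_pow]
    exact ClassGroup.mk0_eq_one_iff (I ^ n).2
  have h4 : ClassGroup.mk0 I ^ 4 = 1 := hg ▸ pow_orderOf_eq_one _
  have h2 := (pow_eq_one_iff 2).2
    (hσ.isPrincipal_sq_of_isPrincipal_pow_four hdiv hI ((pow_eq_one_iff 4).1 h4))
  have hdvd := orderOf_dvd_of_pow_eq_one h2
  rw [hg] at hdvd
  omega

/-- let `K` be a quadratic number field. If the image of the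
absolute norm `N` is closed under division, then the class group has no
element of order four. -/
theorem stmt_14 (K : Type*) [Field K] [NumberField K]
    (hdeg : Module.finrank ℚ K = 2)
    (hdiv : ∀ a b : 𝓞 K, a ≠ 0 → b ≠ 0 →
      (Algebra.norm ℤ a).natAbs ∣ (Algebra.norm ℤ b).natAbs →
      ∃ c : 𝓞 K,
        (Algebra.norm ℤ a).natAbs * (Algebra.norm ℤ c).natAbs =
          (Algebra.norm ℤ b).natAbs) :
    ∀ g : ClassGroup (𝓞 K), orderOf g ≠ 4 :=
  stmt_14_general K hdeg (isNormSqDivClosed_of_finrank_eq_two hdeg hdiv)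
end

section
/- Let L be a multiplicative lattice and define r_s : Set L → Set L by r_s(X) = {h ∈ L | there exist finitely many h₁, …, hₙ ∈ X with h ≤ h₁ ⊔ ⋯ ⊔ hₙ}. Then r_s is a finitary weak ideal system on L (it satisfies (s1)–(s4) and r_s(X) = ⋃ {r_s(Z) | Z ⊆ X finite}), and for every x ∈ L the interval {y ∈ L | y ≤ x} is an r_s-ideal, i.e. r_s({y | y ≤ x}) = {y | y ≤ x}; consequently x ↦ {y | y ≤ x} is an injective map from L into the set of r_s-ideals. -/
/-- The finitary closure operation:
`rs X = {h | h ≤ h₁ ⊔ ⋯ ⊔ hₙ for some finitely many h₁, …, hₙ ∈ X}`. -/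
def rs {L : Type*} [CompleteLattice L] (X : Set L) : Set L :=
  {h | ∃ Z : Finset L, ↑Z ⊆ X ∧ h ≤ Z.sup id}

/-!
The `rs`-ideals are exactly the order ideals of `L`: `rs X` is an order ideal, and an order ideal,
being closed under finite joins, is fixed by `rs`. Principal ideals are thus fixed, and `rs` is
idempotent. A map preserving finite joins sends `rs X` into `rs` of the image of `X`;
left multiplication is such a map, hence monotone, so `x * h ≤ x * ⊤ = x * 1 = x`.
-/

section Closure

variable {L : Type*} [CompleteLattice L] {X Y : Set L}

theorem subset_rs : X ⊆ rs X := fun x hx => ⟨{x}, by simpa using hx, by simp⟩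

theorem rs_mono (hXY : X ⊆ Y) : rs X ⊆ rs Y :=
  fun _ ⟨Z, hZX, hle⟩ => ⟨Z, hZX.trans hXY, hle⟩

theorem isLowerSet_rs : IsLowerSet (rs X) :=
  fun _ _ hle ⟨Z, hZX, hZ⟩ => ⟨Z, hZX, hle.trans hZ⟩

theorem bot_mem_rs : ⊥ ∈ rs X := ⟨∅, by simp, bot_le⟩

theorem sup_mem_rs {a b : L} (ha : a ∈ rs X) (hb : b ∈ rs X) : a ⊔ b ∈ rs X := by
  classical
  obtain ⟨A, hAX, haA⟩ := ha
  obtain ⟨B, hBX, hbB⟩ := hb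
  refine ⟨A ∪ B, ?_, ?_⟩
  · simpa only [Finset.coe_union] using Set.union_subset hAX hBX
  · simpa only [Finset.sup_union] using sup_le_sup haA hbB

theorem isIdeal_rs (X : Set L) : Order.IsIdeal (rs X) where
  IsLowerSet := isLowerSet_rs
  Nonempty := ⟨⊥, bot_mem_rs⟩
  Directed a ha b hb := ⟨a ⊔ b, sup_mem_rs ha hb, le_sup_left, le_sup_right⟩

theorem rs_coe_ideal (I : Order.Ideal L) : rs (I : Set L) = I := by
  refine Set.Subset.antisymm ?_ subset_rs
  rintro h ⟨Z, hZI, hle⟩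
  exact I.lower hle (I.finsetSup_mem_iff.2 hZI)

theorem rs_rs (X : Set L) : rs (rs X) = rs X := rs_coe_ideal (isIdeal_rs X).toIdeal

theorem rs_Iic (x : L) : rs (Set.Iic x) = Set.Iic x := rs_coe_ideal (Order.Ideal.principal x)

theorem rs_eq_sUnion_finite (X : Set L) :
    rs X = ⋃₀ {A | ∃ Z : Set L, Z ⊆ X ∧ Z.Finite ∧ A = rs Z} := by
  refine Set.Subset.antisymm ?_ ?_
  · rintro h ⟨Z, hZX, hle⟩
    exact ⟨rs Z, ⟨Z, hZX, Z.finite_toSet, rfl⟩, Z, subset_rfl, hle⟩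
  · rintro h ⟨_, ⟨Z, hZX, -, rfl⟩, hh⟩
    exact rs_mono hZX hh

theorem image_rs_subset_rs_image {M : Type*} [CompleteLattice M] (f : SupBotHom L M) (X : Set L) :
    f '' rs X ⊆ rs (f '' X) := by
  classical
  rintro _ ⟨h, ⟨Z, hZX, hle⟩, rfl⟩
  refine ⟨Z.image f, ?_, ?_⟩
  · simpa only [Finset.coe_image] using Set.image_mono hZX
  · calc f h ≤ f (Z.sup id) := OrderHomClass.mono f hle
      _ = (Z.image f).sup id := by
        rw [map_finset_sup, Finset.sup_image, Function.comp_id, Function.id_comp]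

end Closure

theorem mulLeftMono_of_mul_sup {L : Type*} [SemilatticeSup L] [Mul L]
    (mul_sup : ∀ a b c : L, a * (b ⊔ c) = a * b ⊔ a * c) : MulLeftMono L where
  elim c a b hab := sup_eq_right.1 <| by rw [← mul_sup, sup_eq_right.2 hab]

theorem stmt_16_general {L : Type*} [CompleteLattice L] [MulOneClass L]
    (mul_sup : ∀ a b c : L, a * (b ⊔ c) = a * b ⊔ a * c) (mul_bot : ∀ a : L, a * ⊥ = ⊥)
    (one_eq_top : (1 : L) = ⊤) :
    (∀ X : Set L, ∀ x ∈ X, ∀ h : L, x * h ∈ rs X) ∧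
    (∀ X Y : Set L, X ⊆ Y → rs X ⊆ rs Y) ∧
    (∀ X : Set L, rs (rs X) = rs X) ∧
    (∀ (c : L) (X : Set L), (fun y => c * y) '' rs X ⊆ rs ((fun y => c * y) '' X)) ∧
    (∀ X : Set L, rs X = ⋃₀ {A | ∃ Z : Set L, Z ⊆ X ∧ Z.Finite ∧ A = rs Z}) ∧
    (∀ x : L, rs {y : L | y ≤ x} = {y : L | y ≤ x}) ∧
    Function.Injective (fun x : L => {y : L | y ≤ x}) := by
  refine ⟨fun X x hx h => ?_, fun _ _ => rs_mono, rs_rs, fun c => ?_, rs_eq_sUnion_finite,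
    rs_Iic, Set.Iic_injective⟩
  · have := mulLeftMono_of_mul_sup mul_sup
    have mul_le_left : x * h ≤ x := mul_le_of_le_one_right' (one_eq_top ▸ le_top)
    exact isLowerSet_rs mul_le_left (subset_rs hx)
  · exact image_rs_subset_rs_image
      { toFun := fun y => c * y, map_sup' := mul_sup c, map_bot' := mul_bot c }

/-- for a multiplicative lattice `L`, the map `rs` is a finitary
weak ideal system on `L` ((s1)–(s4) plus finitariness), each interval
`{y | y ≤ x}` is an `rs`-ideal, and hence `x ↦ {y | y ≤ x}` is an injective
map from `L` into the set of `rs`-ideals. -/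
theorem stmt_16 {L : Type*} [CompleteLattice L] [CommMonoid L]
    (hdist : ∀ (a : L) (S : Set L), a * sSup S = ⨆ b ∈ S, a * b)
    (hone : (1 : L) = ⊤) :
    (∀ X : Set L, ∀ x ∈ X, ∀ h : L, x * h ∈ rs X) ∧
    (∀ X Y : Set L, X ⊆ Y → rs X ⊆ rs Y) ∧
    (∀ X : Set L, rs (rs X) = rs X) ∧
    (∀ (c : L) (X : Set L), (fun y => c * y) '' rs X ⊆ rs ((fun y => c * y) '' X)) ∧
    (∀ X : Set L, rs X = ⋃₀ {A | ∃ Z : Set L, Z ⊆ X ∧ Z.Finite ∧ A = rs Z}) ∧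
    (∀ x : L, rs {y : L | y ≤ x} = {y : L | y ≤ x}) ∧
    Function.Injective (fun x : L => {y : L | y ≤ x}) := by
  have : IsQuantale L := ⟨hdist, fun S a => by simpa only [mul_comm a] using hdist a S⟩
  exact stmt_16_general (fun _ _ _ => Quantale.mul_sup_distrib) (fun _ => Quantale.mul_bot) hone
end
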